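/- Let n ≥ 3, let Γ ⊂ O(n) be a finite subgroup acting freely on ℝⁿ\{0}, and let u : ℝⁿ → [0,∞) be locally Lipschitz, Γ-symmetric, 1-homogeneous, harmonic in the open set {u>0}, with Σ := ∂{u>0}\{0} a smooth embedded hypersurface, u smooth up to Σ from within {u>0} and |∇u| = 1 on Σ. Let A = {x : a < |x| < b} be an open annulus centered at 0 (0 < a < b). Suppose v is a Γ-symmetric nonnegative function, continuous on the closure of {u>0} ∩ A, C² on {u>0} ∩ A and C¹ up to Σ ∩ A, satisfying Δv ≥ 0 in {u>0} ∩ A, ∂_ν v ≤ H v on Σ ∩ A, and v = 0 on {u>0} ∩ ∂A, and that the subsolution is strict in the sense that either Δv(x₀) > 0 at some point x₀ ∈ {u>0} ∩ A with v(x₀) > 0, or ∂_ν v(x₀) < H(x₀)v(x₀) at some point x₀ ∈ Σ ∩ A with v(x₀) > 0. Then ∫_{{u>0} ∩ A} |∇v|² dx < ∫_{Σ ∩ A} H v² dH^{n−1}, and consequently u is not a Γ-symmetric minimizer against Γ-symmetric competitors. -/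

import Mathlib

open MeasureTheory Metric Set
open scoped RealInnerProductSpace

noncomputable section

/-- The Alt–Caffarelli energy `E_Q(u, U) = ∫_U |∇u|² + Q²·1_{u>0}`. -/
def acEnergy {n : ℕ} (Q : ℝ) (u : EuclideanSpace ℝ (Fin n) → ℝ)
    (U : Set (EuclideanSpace ℝ (Fin n))) : ℝ :=
  ∫ x in U, (‖gradient u x‖ ^ 2 + Q ^ 2 * Set.indicator {y | 0 < u y} (fun _ => (1 : ℝ)) x)

/-- `u` is invariant under the group `Γ` of linear isometries. -/
def IsSymmetricUnder {n : ℕ}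
    (Γ : Subgroup (EuclideanSpace ℝ (Fin n) ≃ₗᵢ[ℝ] EuclideanSpace ℝ (Fin n)))
    (u : EuclideanSpace ℝ (Fin n) → ℝ) : Prop :=
  ∀ g ∈ Γ, ∀ x, u (g x) = u x

/-- A nonnegative locally Lipschitz `Γ`-symmetric function `u` is a `Γ`-symmetric minimizer
against `Γ`-symmetric competitors (with `Q = 1`). -/
def IsSymMinimizer {n : ℕ}
    (Γ : Subgroup (EuclideanSpace ℝ (Fin n) ≃ₗᵢ[ℝ] EuclideanSpace ℝ (Fin n)))
    (u : EuclideanSpace ℝ (Fin n) → ℝ) : Prop :=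
  (∀ x, 0 ≤ u x) ∧ LocallyLipschitz u ∧ IsSymmetricUnder Γ u ∧
    ∀ R > 0, ∀ v : EuclideanSpace ℝ (Fin n) → ℝ, (∀ x, 0 ≤ v x) → LocallyLipschitz v →
      IsSymmetricUnder Γ v →
      (∀ x ∉ ball (0 : EuclideanSpace ℝ (Fin n)) R, v x = u x) →
      acEnergy 1 u (ball 0 R) ≤ acEnergy 1 v (ball 0 R)

/-- The Euclidean Laplacian, as the trace of the Hessian. -/
def lap {n : ℕ} (f : EuclideanSpace ℝ (Fin n) → ℝ) (x : EuclideanSpace ℝ (Fin n)) : ℝ :=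
  ∑ i : Fin n, fderiv ℝ (fun y => fderiv ℝ f y (EuclideanSpace.single i 1)) x
    (EuclideanSpace.single i 1)

/-- The free boundary away from the origin: `Σ = ∂{u>0} \ {0}`. -/
def freeBoundary {n : ℕ} (u : EuclideanSpace ℝ (Fin n) → ℝ) :
    Set (EuclideanSpace ℝ (Fin n)) :=
  frontier {x | 0 < u x} \ {0}

/-- The outward unit normal along `Σ`, computed from a smooth extension `Uext` of `u`
across `Σ` (on `Σ` one has `u = 0`, `u > 0` inside, and `|∇Uext| = 1`, so `-∇Uext` is the
unit normal pointing out of `{u > 0}`). -/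
def nuVec {n : ℕ} (Uext : EuclideanSpace ℝ (Fin n) → ℝ) (x : EuclideanSpace ℝ (Fin n)) :
    EuclideanSpace ℝ (Fin n) :=
  -(gradient Uext x)

/-- The outward mean curvature `H = -∂²u/∂ν²` of `Σ`, computed from the smooth extension. -/
def meanCurv {n : ℕ} (Uext : EuclideanSpace ℝ (Fin n) → ℝ) (x : EuclideanSpace ℝ (Fin n)) : ℝ :=
  -(fderiv ℝ (fun y => (⟪gradient Uext y, nuVec Uext x⟫ : ℝ)) x (nuVec Uext x))

/-- One-sided directional derivative `∂_ν f(x)` in the outward normal direction,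
taken from within `{u > 0}` (i.e. from the side `t ≤ 0`). -/
def dNu {n : ℕ} (Uext f : EuclideanSpace ℝ (Fin n) → ℝ) (x : EuclideanSpace ℝ (Fin n)) : ℝ :=
  derivWithin (fun t : ℝ => f (x + t • nuVec Uext x)) (Set.Iic 0) 0

/-!
Let `φ ≥ 0` be a `Γ`-symmetric test function, `C¹` up to the free boundary `Σ` and supported away
from the vertex. Since `u` is harmonic, testing its equation against `min (s φ) u` bounds the
energy of the competitor `max (u - s φ) 0` by
`E(u) + s² ∫_{u>0} |∇φ|² - ∫_{0<u<sφ} (1 - |∇u|²)`. The last integral lives in a layer of width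
`s φ` along `Σ`. There `1 - |∇u|²` is `2 H u + o(u)`, since on `Σ` its gradient is `2 H ∇u`, so the
integral is `s² ∫_Σ H φ² + o(s²)`. A minimizer therefore satisfies `∫_Σ H φ² ≤ ∫_{u>0} |∇φ|²`.

A strict subsolution `v` violates this. Truncate it to `φ_ε`, which is `C¹` and supported in
`{v ≥ ε}`. Green's identity for `φ_ε` and `∇v`, obtained with cutoffs in the level of `u`, and the
strict inequality satisfied by `v` give `κ > 0` with `∫ ⟪∇φ_ε, ∇v⟫ + κ ≤ ∫_Σ H φ_ε v` for all small
`ε`. Letting `ε → 0` yields the integral inequality for `v`, and since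
`|∇φ_ε|² ≤ ⟪∇φ_ε, ∇v⟫`, some `φ_ε` destabilizes `u`.
-/

section

open Filter Topology
open scoped ENNReal NNReal

local notation "𝔼[" n "]" => EuclideanSpace ℝ (Fin n)

section HausdorffMeasure

-- Replacing the Euclidean norm by the sup norm is `1`-Lipschitz, and Hausdorff measure of the
-- sup norm is Lebesgue measure.
theorem volume_unitBall_le_hausdorffMeasure (d : ℕ) :
    volume (ball (0 : 𝔼[d]) 1) ≤ μH[d] (ball (0 : 𝔼[d]) 1) := by
  set B : Set 𝔼[d] := ball 0 1
  calc
    volume B = volume (WithLp.ofLp '' B) := by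
      rw [← (PiLp.volume_preserving_toLp (Fin d)).measure_preimage
        measurableSet_ball.nullMeasurableSet]
      exact congrArg _ ((WithLp.equiv 2 (Fin d → ℝ)).image_eq_preimage_symm B).symm
    _ = μH[d] (WithLp.ofLp '' B) := by
      rw [← hausdorffMeasure_pi_real (ι := Fin d), Fintype.card_fin]
    _ ≤ μH[d] B := by
      simpa using (PiLp.lipschitzWith_ofLp 2 fun _ : Fin d => ℝ).hausdorffMeasure_image_le
        (d := d) (by positivity) B

theorem addHaarScalarFactor_volume_hausdorffMeasure_le_one (d : ℕ) :
    (volume : Measure 𝔼[d]).addHaarScalarFactor μH[d] ≤ 1 := by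
  have hB := volume_unitBall_le_hausdorffMeasure d
  rw [Measure.isAddLeftInvariant_eq_smul (volume : Measure 𝔼[d]) μH[d]] at hB
  by_contra! hlt
  have := ENNReal.mul_lt_mul_left (measure_ball_pos μH[d] (0 : 𝔼[d]) one_pos).ne'
    measure_ball_lt_top.ne (ENNReal.coe_lt_coe.2 hlt)
  rw [ENNReal.coe_one, one_mul] at this
  exact this.not_ge hB

variable {X Y : Type*} [EMetricSpace X] [MeasurableSpace X] [BorelSpace X]

theorem lt_setIntegral_hausdorffMeasure {d : ℕ} {s : Set X} {f : X → ℝ} {a : ℝ} (ha : 0 ≤ a)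
    (h : a < ∫ x in s, f x ∂μHE[d]) : a < ∫ x in s, f x ∂μH[d] := by
  have hc := addHaarScalarFactor_volume_hausdorffMeasure_le_one d
  rw [Measure.euclideanHausdorffMeasure_def, Measure.restrict_smul,
    integral_smul_nnreal_measure, NNReal.smul_def, smul_eq_mul] at h
  have hI : 0 < ∫ x in s, f x ∂μH[d] := pos_of_mul_pos_right (ha.trans_lt h) (NNReal.coe_nonneg _)
  exact h.trans_le (mul_le_of_le_one_left hI.le hc)

variable [EMetricSpace Y] [MeasurableSpace Y] [BorelSpace Y]

theorem lintegral_image_euclideanHausdorffMeasure_le {K : ℝ≥0} {f : X → Y} {s : Set X}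
    (hf : LipschitzOnWith K f s) (hs : MeasurableSet s) (d : ℕ) (g : Y → ℝ≥0∞) :
    ∫⁻ y in f '' s, g y ∂μHE[d] ≤ (K : ℝ≥0∞) ^ d * ∫⁻ x in s, g (f x) ∂μHE[d] := by
  have hfm : AEMeasurable f (μHE[d].restrict s) := hf.continuousOn.aemeasurable hs
  have hle : μHE[d].restrict (f '' s) ≤
      ((K : ℝ≥0∞) ^ d) • Measure.map f (μHE[d].restrict s) := by
    refine Measure.le_iff.2 fun t ht => ?_
    rw [Measure.restrict_apply ht, Measure.smul_apply, Measure.map_apply_of_aemeasurable hfm ht,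
      Measure.restrict_apply' hs, smul_eq_mul, inter_comm, ← image_inter_preimage, inter_comm s]
    have := (hf.mono inter_subset_right).hausdorffMeasure_image_le (s := f ⁻¹' t ∩ s)
      d.cast_nonneg
    rw [ENNReal.rpow_natCast] at this
    simpa only [Measure.euclideanHausdorffMeasure_def, Measure.smul_apply, ENNReal.smul_def,
      smul_eq_mul, mul_left_comm ((K : ℝ≥0∞) ^ d)] using mul_le_mul_right this _
  calc
    ∫⁻ y in f '' s, g y ∂μHE[d]
      ≤ ∫⁻ y, g y ∂(((K : ℝ≥0∞) ^ d) • Measure.map f (μHE[d].restrict s)) :=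
        lintegral_mono' hle le_rfl
    _ ≤ (K : ℝ≥0∞) ^ d * ∫⁻ x in s, g (f x) ∂μHE[d] := by
      rw [lintegral_smul_measure, smul_eq_mul]
      gcongr
      exact lintegral_map_le g f

end HausdorffMeasure

section ConsCoordinates

variable {k : ℕ}

/-- The point `(r, y₁, …, y_k)` of `ℝᵏ⁺¹`; `{z | z 0 = 0}` is the model hyperplane. -/
def euclideanCons (r : ℝ) (y : 𝔼[k]) : 𝔼[k + 1] :=
  WithLp.toLp 2 (Fin.cons r y.ofLp : Fin (k + 1) → ℝ)

@[simp]
theorem euclideanCons_zero (r : ℝ) (y : 𝔼[k]) : euclideanCons r y 0 = r := rfl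

theorem norm_sq_euclideanCons_sub (r r' : ℝ) (y y' : 𝔼[k]) :
    ‖euclideanCons r y - euclideanCons r' y'‖ ^ 2 = (r - r') ^ 2 + ‖y - y'‖ ^ 2 := by
  rw [EuclideanSpace.norm_sq_eq, EuclideanSpace.norm_sq_eq, Fin.sum_univ_succ]
  simp [euclideanCons]

theorem norm_le_norm_euclideanCons (r : ℝ) (y : 𝔼[k]) : ‖y‖ ≤ ‖euclideanCons r y‖ := by
  have h0 : euclideanCons 0 (0 : 𝔼[k]) = 0 := by
    ext i
    refine Fin.cases ?_ (fun j => ?_) i <;> simp [euclideanCons]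
  have h := norm_sq_euclideanCons_sub r 0 y 0
  simp only [h0, sub_zero] at h
  exact le_of_sq_le_sq (by rw [h]; linarith [sq_nonneg r]) (norm_nonneg _)

@[fun_prop]
theorem continuous_euclideanCons :
    Continuous fun p : ℝ × 𝔼[k] => euclideanCons p.1 p.2 :=
  (PiLp.continuous_toLp 2 _).comp <| Continuous.finCons (A := fun _ => ℝ) continuous_fst
    ((PiLp.continuous_ofLp 2 _).comp continuous_snd)

theorem isometry_euclideanCons_zero : Isometry (euclideanCons 0 : 𝔼[k] → 𝔼[k + 1]) := by
  refine Isometry.of_dist_eq fun y y' => ?_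
  rw [dist_eq_norm, dist_eq_norm, ← sq_eq_sq₀ (norm_nonneg _) (norm_nonneg _),
    norm_sq_euclideanCons_sub, sub_zero, sq, mul_zero, zero_add]

theorem range_euclideanCons_zero :
    range (euclideanCons 0 : 𝔼[k] → 𝔼[k + 1]) = {z | z 0 = 0} := by
  refine Subset.antisymm (range_subset_iff.2 fun y => rfl) fun z hz =>
    ⟨WithLp.toLp 2 (Fin.tail z.ofLp), ?_⟩
  have := Fin.cons_self_tail z.ofLp
  rw [show z.ofLp 0 = 0 from hz] at this
  exact congrArg (WithLp.toLp 2) this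

theorem measurePreserving_euclideanCons :
    MeasurePreserving (fun p : ℝ × 𝔼[k] => euclideanCons p.1 p.2) := by
  have h := (PiLp.volume_preserving_toLp (Fin (k + 1))).comp
    ((volume_preserving_piFinSuccAbove (fun _ : Fin (k + 1) => ℝ) 0).symm.comp
      ((MeasurePreserving.id volume).prod (PiLp.volume_preserving_ofLp (Fin k))))
  rw [← Measure.volume_eq_prod] at h
  convert h using 1
  ext p i
  refine Fin.cases ?_ (fun j => ?_) i <;> simp [euclideanCons]

theorem lintegral_euclideanCons {f : 𝔼[k + 1] → ℝ≥0∞} (hf : Measurable f) :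
    ∫⁻ z, f z = ∫⁻ y, ∫⁻ r, f (euclideanCons r y) := by
  rw [← measurePreserving_euclideanCons.lintegral_comp hf, Measure.volume_eq_prod]
  exact lintegral_prod_symm' _ (hf.comp continuous_euclideanCons.measurable)

theorem setLIntegral_hyperplane {f : 𝔼[k + 1] → ℝ≥0∞} (hf : Measurable f) :
    ∫⁻ z in {z | z 0 = 0}, f z ∂μHE[k] = ∫⁻ y, f (euclideanCons 0 y) := by
  rw [← range_euclideanCons_zero, ← isometry_euclideanCons_zero.map_euclideanHausdorffMeasure,
    lintegral_map hf isometry_euclideanCons_zero.continuous.measurable,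
    EuclideanSpace.euclideanHausdorffMeasure_eq_volume]

end ConsCoordinates

section SmoothCone

/-- `u` is a nonnegative `1`-homogeneous solution of the one-phase free boundary problem whose free
boundary away from the origin is smooth. Regularity up to the free boundary is encoded by a smooth
function `U` on an open set `W ⊇ closure {u > 0} \ {0}` that agrees with `u` on
`closure {u > 0}`. -/
structure IsSmoothCone {n : ℕ} (u U : 𝔼[n] → ℝ) (W : Set 𝔼[n]) : Prop where
  nonneg : ∀ x, 0 ≤ u x
  locallyLipschitz : LocallyLipschitz u
  homogeneous : ∀ t : ℝ, 0 < t → ∀ x, u (t • x) = t * u x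
  lap_eq_zero : ∀ x ∈ {x | 0 < u x}, lap u x = 0
  isOpen : IsOpen W
  closure_subset : closure {x | 0 < u x} \ {0} ⊆ W
  contDiffOn : ContDiffOn ℝ (⊤ : ℕ∞) U W
  extension_eq : ∀ x ∈ closure {x | 0 < u x}, U x = u x
  norm_gradient : ∀ x ∈ freeBoundary u, ‖gradient U x‖ = 1
  exists_ball_inter_eq : ∀ x ∈ freeBoundary u, ∃ ε > 0,
    freeBoundary u ∩ ball x ε = {y ∈ ball x ε | U y = 0}

theorem measurableSet_freeBoundary {n : ℕ} (u : 𝔼[n] → ℝ) : MeasurableSet (freeBoundary u) :=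
  isClosed_frontier.measurableSet.diff (measurableSet_singleton _)

namespace IsSmoothCone

variable {n : ℕ} {u U : 𝔼[n] → ℝ} {W : Set 𝔼[n]} {x : 𝔼[n]}

theorem continuous (h : IsSmoothCone u U W) : Continuous u := h.locallyLipschitz.continuous

theorem isOpen_pos (h : IsSmoothCone u U W) : IsOpen {x | 0 < u x} :=
  isOpen_lt continuous_const h.continuous

theorem apply_zero (h : IsSmoothCone u U W) : u 0 = 0 := by
  have := h.homogeneous 2 two_pos 0
  rw [smul_zero] at this
  linarith

theorem freeBoundary_subset (h : IsSmoothCone u U W) : freeBoundary u ⊆ W :=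
  (sdiff_subset_sdiff_left frontier_subset_closure).trans h.closure_subset

theorem pos_subset (h : IsSmoothCone u U W) : {x | 0 < u x} ⊆ W := fun x hx =>
  h.closure_subset ⟨subset_closure hx, fun h0 => by
    rw [mem_singleton_iff.1 h0, mem_ofPred_eq, h.apply_zero] at hx
    exact hx.false⟩

theorem extension_eq_of_pos (h : IsSmoothCone u U W) (hx : 0 < u x) : U x = u x :=
  h.extension_eq x (subset_closure hx)

theorem eq_zero_of_mem (h : IsSmoothCone u U W) (hx : x ∈ freeBoundary u) : u x = 0 := by
  have hx1 := hx.1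
  rw [h.isOpen_pos.frontier_eq] at hx1
  exact le_antisymm (not_lt.1 hx1.2) (h.nonneg x)

theorem extension_eq_zero_of_mem (h : IsSmoothCone u U W) (hx : x ∈ freeBoundary u) : U x = 0 := by
  rw [h.extension_eq x (frontier_subset_closure hx.1), h.eq_zero_of_mem hx]

theorem pos_or_mem_freeBoundary (h : IsSmoothCone u U W) (hx : x ∈ closure {x | 0 < u x})
    (h0 : x ≠ 0) : 0 < u x ∨ x ∈ freeBoundary u :=
  or_iff_not_imp_left.2 fun hpos => ⟨h.isOpen_pos.frontier_eq ▸ ⟨hx, hpos⟩, h0⟩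

theorem contDiffAt (h : IsSmoothCone u U W) (hx : x ∈ W) : ContDiffAt ℝ (⊤ : ℕ∞) U x :=
  h.contDiffOn.contDiffAt (h.isOpen.mem_nhds hx)

end IsSmoothCone

end SmoothCone

section Flattening

theorem exists_linearIsometryEquiv_apply_zero_eq_inner {k : ℕ} {e : 𝔼[k + 1]} (he : ‖e‖ = 1) :
    ∃ R : 𝔼[k + 1] ≃ₗᵢ[ℝ] 𝔼[k + 1], ∀ x, R x 0 = ⟪e, x⟫ := by
  have hon : Orthonormal ℝ (({0} : Set (Fin (k + 1))).domRestrict fun _ => e) :=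
    ⟨fun _ => he, fun i j hij => (hij (Subsingleton.elim i j)).elim⟩
  obtain ⟨b, hb⟩ := hon.exists_orthonormalBasis_extension_of_card_eq (by simp)
  exact ⟨b.repr, fun x => by rw [b.repr_apply_apply, hb 0 rfl]⟩

theorem norm_le_mul_norm_of_norm_sub_le {F : Type*} [SeminormedAddCommGroup F] {a b : F} {lam : ℝ}
    (hlam : 1 ≤ lam) (h : ‖a - b‖ ≤ (lam - 1) / lam * ‖b‖) :
    ‖a‖ ≤ lam * ‖b‖ ∧ ‖b‖ ≤ lam * ‖a‖ := by
  have hlam0 : 0 < lam := one_pos.trans_le hlam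
  have ha : ‖a‖ ≤ ‖a - b‖ + ‖b‖ := by simpa using norm_add_le (a - b) b
  have hba : ‖b‖ ≤ ‖a‖ + ‖a - b‖ := by simpa using norm_sub_le a (a - b)
  have hmul : lam * ((lam - 1) / lam * ‖b‖) = (lam - 1) * ‖b‖ := by field_simp
  constructor
  · nlinarith [div_le_self (sub_nonneg.2 hlam) hlam, norm_nonneg b]
  · nlinarith [mul_le_mul_of_nonneg_left (hba.trans (add_le_add_right h ‖a‖)) hlam0.le]

theorem exists_biLipschitz_chart {E F : Type*} [NormedAddCommGroup E] [NormedSpace ℝ E]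
    [CompleteSpace E] [NormedAddCommGroup F] [NormedSpace ℝ F] {f : E → F} {R : E ≃ₗᵢ[ℝ] F}
    {x₀ : E} (hf : HasStrictFDerivAt f (R.toContinuousLinearEquiv : E →L[ℝ] F) x₀) {lam : ℝ≥0}
    (hlam : 1 < lam) {N : Set E} (hN : N ∈ 𝓝 x₀) :
    ∃ φ : OpenPartialHomeomorph E F, ⇑φ = f ∧ x₀ ∈ φ.source ∧ φ.source ⊆ N ∧
      (∃ ρ, φ.target = ball (f x₀) ρ) ∧
      LipschitzOnWith lam φ φ.source ∧ LipschitzOnWith lam φ.symm φ.target := by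
  obtain ⟨s, hs, happ⟩ := hf.approximates_deriv_on_nhds (c := (lam - 1) / lam)
    (Or.inr (div_pos (tsub_pos_of_lt hlam) (one_pos.trans hlam)))
  have hbounds : ∀ x ∈ s, ∀ y ∈ s, ‖f x - f y‖ ≤ lam * ‖x - y‖ ∧ ‖x - y‖ ≤ lam * ‖f x - f y‖ := by
    intro x hx y hy
    have := norm_le_mul_norm_of_norm_sub_le (a := f x - f y) (b := R (x - y)) (lam := lam)
      (by exact_mod_cast hlam.le) (by
        rw [R.norm_map, ← NNReal.coe_one, ← NNReal.coe_sub hlam.le, ← NNReal.coe_div]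
        exact happ x hx y hy)
    simpa only [R.norm_map] using this
  let Φ := hf.toOpenPartialHomeomorph f
  have hx₀ : x₀ ∈ Φ.source := hf.mem_toOpenPartialHomeomorph_source
  have hpre : Φ.target ∩ Φ.symm ⁻¹' (s ∩ N) ∈ 𝓝 (f x₀) :=
    inter_mem (Φ.open_target.mem_nhds (Φ.map_source hx₀))
      (Φ.continuousAt_symm (Φ.map_source hx₀) (by
        rw [Φ.left_inv hx₀]; exact inter_mem hs hN))
  obtain ⟨ρ, hρ, hball⟩ := Metric.mem_nhds_iff.1 hpre
  let φ := (Φ.symm.restrOpen (ball (f x₀) ρ) isOpen_ball).symm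
  have htarget : φ.target = ball (f x₀) ρ := inter_eq_right.2 fun z hz => (hball hz).1
  have hsub : φ.source ⊆ s ∩ N := fun x hx => by
    rw [← φ.left_inv hx]
    exact (hball (htarget ▸ φ.map_source hx)).2
  have hx₀φ : x₀ ∈ φ.source := ⟨hx₀, mem_ball_self hρ⟩
  refine ⟨φ, rfl, hx₀φ, fun x hx => (hsub hx).2, ⟨ρ, htarget⟩, ?_, ?_⟩
  · refine LipschitzOnWith.of_dist_le_mul fun x hx y hy => ?_
    rw [dist_eq_norm, dist_eq_norm]
    exact (hbounds x (hsub hx).1 y (hsub hy).1).1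
  · refine LipschitzOnWith.of_dist_le_mul fun z hz w hw => ?_
    have := (hbounds _ (hsub (φ.map_target hz)).1 _ (hsub (φ.map_target hw)).1).2
    change _ ≤ lam * ‖φ (φ.symm z) - φ (φ.symm w)‖ at this
    rwa [φ.right_inv hz, φ.right_inv hw, ← dist_eq_norm, ← dist_eq_norm] at this

theorem exists_chart_apply_zero_eq {k : ℕ} {U : 𝔼[k + 1] → ℝ} {x₀ : 𝔼[k + 1]}
    (hU : ContDiffAt ℝ 1 U x₀) (hgrad : ‖gradient U x₀‖ = 1) {lam : ℝ≥0} (hlam : 1 < lam)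
    {N : Set 𝔼[k + 1]} (hN : N ∈ 𝓝 x₀) :
    ∃ φ : OpenPartialHomeomorph 𝔼[k + 1] 𝔼[k + 1], (∀ x, φ x 0 = U x) ∧ x₀ ∈ φ.source ∧
      φ.source ⊆ N ∧ Convex ℝ φ.target ∧
      LipschitzOnWith lam φ φ.source ∧ LipschitzOnWith lam φ.symm φ.target := by
  obtain ⟨R, hR⟩ := exists_linearIsometryEquiv_apply_zero_eq_inner hgrad
  set e := gradient U x₀ with he
  let e₀ : 𝔼[k + 1] := EuclideanSpace.single 0 1
  -- Replace the first coordinate of the isometry `R` by `U`, which agrees with it to first order.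
  let f : 𝔼[k + 1] → 𝔼[k + 1] := fun x => R x + (U x - ⟪e, x⟫) • e₀
  have hf₀ : ∀ x, f x 0 = U x := fun x => by simp [f, e₀, hR]
  have hU' : HasStrictFDerivAt U (innerSL ℝ e) x₀ := by
    rw [show innerSL ℝ e = fderiv ℝ U x₀ from ContinuousLinearMap.ext fun w => by
      rw [innerSL_apply_apply, he, gradient, InnerProductSpace.toDual_symm_apply]]
    exact hU.hasStrictFDerivAt one_ne_zero
  have hf : HasStrictFDerivAt f (R.toContinuousLinearEquiv : 𝔼[k + 1] →L[ℝ] 𝔼[k + 1]) x₀ := by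
    have h := (R.toContinuousLinearEquiv : 𝔼[k + 1] →L[ℝ] 𝔼[k + 1]).hasStrictFDerivAt.add
      ((hU'.sub (innerSL ℝ e).hasStrictFDerivAt).smul_const e₀)
    rw [sub_self, ContinuousLinearMap.zero_smulRight, add_zero] at h
    exact h
  obtain ⟨φ, hφ, hx₀, hsub, ⟨ρ, hρ⟩, hlip, hlip'⟩ := exists_biLipschitz_chart hf hlam hN
  exact ⟨φ, fun x => by rw [hφ, hf₀], hx₀, hsub, hρ ▸ convex_ball _ _, hlip, hlip'⟩

/-- A `lam`-bi-Lipschitz chart in which `u` becomes the first coordinate on `{u > 0}` and `S`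
becomes the hyperplane `{z | z 0 = 0}`. -/
structure IsFlattening {k : ℕ} (u : 𝔼[k + 1] → ℝ) (S : Set 𝔼[k + 1]) (lam : ℝ≥0)
    (φ : OpenPartialHomeomorph 𝔼[k + 1] 𝔼[k + 1]) : Prop where
  lipschitzOnWith : LipschitzOnWith lam φ φ.source
  lipschitzOnWith_symm : LipschitzOnWith lam φ.symm φ.target
  pos_iff : ∀ x ∈ φ.source, 0 < u x ↔ 0 < φ x 0
  apply_zero_of_pos : ∀ x ∈ φ.source, 0 < u x → φ x 0 = u x
  mem_iff : ∀ x ∈ φ.source, x ∈ S ↔ φ x 0 = 0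

namespace IsSmoothCone

variable {k : ℕ} {u U : 𝔼[k + 1] → ℝ} {W : Set 𝔼[k + 1]} {x₀ : 𝔼[k + 1]}

-- The part of a chart where `U > 0` is connected and misses `∂{u > 0}`, hence lies in `{u > 0}`.
theorem pos_of_extension_pos (h : IsSmoothCone u U W)
    {φ : OpenPartialHomeomorph 𝔼[k + 1] 𝔼[k + 1]} (hφ : ∀ x, φ x 0 = U x)
    (hconv : Convex ℝ φ.target) (h0 : 0 ∉ φ.source)
    (hmem : ∀ x ∈ φ.source, x ∈ freeBoundary u ↔ U x = 0)
    (hx₀ : x₀ ∈ φ.source) (hfb : x₀ ∈ freeBoundary u) {x : 𝔼[k + 1]} (hx : x ∈ φ.source)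
    (hUx : 0 < U x) : 0 < u x := by
  let V : Set 𝔼[k + 1] := φ.symm '' (φ.target ∩ {z | 0 < z 0})
  have hV : ∀ y ∈ φ.source, 0 < U y → y ∈ V := fun y hy hUy =>
    ⟨φ y, ⟨φ.map_source hy, by rwa [mem_ofPred_eq, hφ]⟩, φ.left_inv hy⟩
  have hpre : IsPreconnected V := by
    refine ((hconv.inter ?_).isPreconnected).image _
      (φ.continuousOn_symm.mono inter_subset_left)
    exact convex_halfSpace_gt (f := fun z : 𝔼[k + 1] => z 0)
      (EuclideanSpace.proj (𝕜 := ℝ) (0 : Fin (k + 1))).isLinear 0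
  obtain ⟨p, hp, hup⟩ : (φ.source ∩ {x | 0 < u x}).Nonempty :=
    mem_closure_iff.1 (frontier_subset_closure hfb.1) _ φ.open_source hx₀
  refine hpre.subset_of_closure_inter_subset h.isOpen_pos
    ⟨p, hV p hp (by rwa [h.extension_eq_of_pos hup]), hup⟩ ?_ (hV x hx hUx)
  rintro _ ⟨hcl, z, ⟨hz, hz0⟩, rfl⟩
  have hsrc := φ.map_target hz
  refine (h.pos_or_mem_freeBoundary hcl (ne_of_mem_of_not_mem hsrc h0)).resolve_right fun hS => ?_
  rw [hmem _ hsrc, ← hφ, φ.right_inv hz] at hS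
  exact hz0.ne' hS

theorem exists_isFlattening (h : IsSmoothCone u U W) (hx₀ : x₀ ∈ freeBoundary u) {lam : ℝ≥0}
    (hlam : 1 < lam) : ∃ φ, x₀ ∈ φ.source ∧ (∀ x, φ x 0 = U x) ∧
      IsFlattening u (freeBoundary u) lam φ := by
  obtain ⟨ε, hε, hball⟩ := h.exists_ball_inter_eq x₀ hx₀
  obtain ⟨φ, hφ, hx₀φ, hsub, hconv, hlip, hlip'⟩ := exists_chart_apply_zero_eq
    ((h.contDiffAt (h.freeBoundary_subset hx₀)).of_le (by norm_cast))
    (h.norm_gradient x₀ hx₀) hlam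
    (inter_mem (ball_mem_nhds x₀ hε) (isOpen_compl_singleton.mem_nhds hx₀.2))
  have hmem : ∀ x ∈ φ.source, x ∈ freeBoundary u ↔ U x = 0 := fun x hx => by
    have := Set.ext_iff.1 hball x
    simpa only [mem_inter_iff, (hsub hx).1, and_true, true_and, mem_ofPred_eq] using this
  refine ⟨φ, hx₀φ, hφ, hlip, hlip', fun x hx => ⟨fun hux => ?_, fun hφx => ?_⟩,
    fun x _ hux => (hφ x).trans (h.extension_eq_of_pos hux), fun x hx => by rw [hmem x hx, hφ]⟩
  · rwa [hφ, h.extension_eq_of_pos hux]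
  · exact h.pos_of_extension_pos hφ hconv (fun h0 => (hsub h0).2 rfl) hmem hx₀φ hx₀ hx (hφ x ▸ hφx)

end IsSmoothCone

end Flattening

section LayerFormula

variable {k : ℕ} {u : 𝔼[k + 1] → ℝ} {S C V : Set 𝔼[k + 1]} {K : ℝ → 𝔼[k + 1] → ℝ}

/-- A bounded kernel `K θ x` of the layer variable `θ` and the position `x`, vanishing for large
`θ` and for `x` outside `C`, and continuous at `S` from within `{u > 0}` for almost every `θ`. -/
structure IsLayerKernel (u : 𝔼[k + 1] → ℝ) (S C : Set 𝔼[k + 1]) (K : ℝ → 𝔼[k + 1] → ℝ) :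
    Prop where
  measurable : Measurable (Function.uncurry K)
  exists_le : ∃ M : ℝ≥0, ∀ θ x, ‖K θ x‖ ≤ M
  exists_le_of_ne_zero : ∃ B, ∀ θ x, K θ x ≠ 0 → θ ≤ B
  mem_of_ne_zero : ∀ θ x, K θ x ≠ 0 → x ∈ C
  tendsto : ∀ x ∈ S, ∀ᵐ θ ∂volume.restrict (Ioi 0),
    Tendsto (K θ) (𝓝[{x | 0 < u x}] x) (𝓝 (K θ x))

/-- The integral of the positive part of `K` over the layers of `u` at scale `s`. -/
def layerLIntegral (u : 𝔼[k + 1] → ℝ) (K : ℝ → 𝔼[k + 1] → ℝ) (s : ℝ) : ℝ≥0∞ :=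
  ENNReal.ofReal s⁻¹ * ∫⁻ x in {x | 0 < u x}, ENNReal.ofReal (K (u x / s) x)

/-- The limit of `layerLIntegral` as the layers shrink to the hypersurface `S`. -/
def surfaceLIntegral (S : Set 𝔼[k + 1]) (K : ℝ → 𝔼[k + 1] → ℝ) : ℝ≥0∞ :=
  ∫⁻ x in S, (∫⁻ θ in Ioi 0, ENNReal.ofReal (K θ x)) ∂μHE[k]

namespace IsLayerKernel

theorem mono {C' : Set 𝔼[k + 1]} (hK : IsLayerKernel u S C K) (hC : C ⊆ C') :
    IsLayerKernel u S C' K where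
  __ := hK
  mem_of_ne_zero θ x hx := hC (hK.mem_of_ne_zero θ x hx)

theorem measurable_lintegral (hK : IsLayerKernel u S C K) :
    Measurable fun x => ∫⁻ θ in Ioi 0, ENNReal.ofReal (K θ x) :=
  hK.measurable.ennreal_ofReal.lintegral_prod_left'

theorem measurable_comp_div (hK : IsLayerKernel u S C K) (hu : Measurable u) (s : ℝ) :
    Measurable fun x => K (u x / s) x :=
  hK.measurable.comp ((hu.div_const s).prodMk measurable_id)

theorem exists_lintegral_bound (hK : IsLayerKernel u S C K) :
    ∃ b : ℝ → ℝ≥0∞, (∀ θ x, ENNReal.ofReal (K θ x) ≤ b θ) ∧ ∫⁻ θ in Ioi 0, b θ ≠ ∞ := by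
  obtain ⟨M, hM⟩ := hK.exists_le
  obtain ⟨B, hB⟩ := hK.exists_le_of_ne_zero
  refine ⟨(Iic B).indicator fun _ => M, fun θ x => ?_, ?_⟩
  · by_cases hx : K θ x = 0
    · simp [hx]
    · rw [indicator_of_mem (mem_Iic.2 (hB θ x hx)), ← ENNReal.ofReal_coe_nnreal]
      exact ENNReal.ofReal_le_ofReal ((le_abs_self _).trans (hM θ x))
  · rw [setLIntegral_indicator measurableSet_Iic, setLIntegral_const, Iic_inter_Ioi,
      Real.volume_Ioc]
    exact ENNReal.mul_ne_top ENNReal.coe_ne_top ENNReal.ofReal_ne_top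

end IsLayerKernel

section HalfSpace

theorem lintegral_comp_mul_left_eq {g : ℝ → ℝ≥0∞} (hg : Measurable g) {s : ℝ} (hs : 0 < s) :
    ∫⁻ θ, g (s * θ) = ENNReal.ofReal s⁻¹ * ∫⁻ r, g r := by
  rw [← lintegral_map hg (measurable_const_mul s), Real.map_volume_mul_left hs.ne',
    lintegral_smul_measure, smul_eq_mul, abs_of_pos (inv_pos.2 hs)]

theorem layerLIntegral_halfSpace (hK : Measurable (Function.uncurry K)) {s : ℝ} (hs : 0 < s) :
    layerLIntegral (fun z => z 0) K s =
      ∫⁻ y : 𝔼[k], ∫⁻ θ in Ioi 0, ENNReal.ofReal (K θ (euclideanCons (s * θ) y)) := by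
  have h0 : Measurable fun z : 𝔼[k + 1] => z 0 := by fun_prop
  have hpos : MeasurableSet {z : 𝔼[k + 1] | 0 < z 0} := measurableSet_lt measurable_const h0
  have hg : Measurable ({z : 𝔼[k + 1] | 0 < z 0}.indicator
      fun z => ENNReal.ofReal (K (z 0 / s) z)) :=
    (hK.comp ((h0.div_const s).prodMk measurable_id)).ennreal_ofReal.indicator hpos
  rw [layerLIntegral, ← lintegral_indicator hpos, lintegral_euclideanCons hg,
    ← lintegral_const_mul' _ _ ENNReal.ofReal_ne_top]
  refine lintegral_congr fun y => ?_
  have hcons : Continuous fun r : ℝ => euclideanCons r y := by fun_prop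
  refine (lintegral_comp_mul_left_eq (hg.comp hcons.measurable) hs).symm.trans ?_
  rw [← lintegral_indicator measurableSet_Ioi]
  refine lintegral_congr fun θ => ?_
  simp [indicator, hs, mul_div_cancel_left₀ _ hs.ne']

theorem surfaceLIntegral_halfSpace (hK : IsLayerKernel u S C K) :
    surfaceLIntegral {z | z 0 = 0} K =
      ∫⁻ y : 𝔼[k], ∫⁻ θ in Ioi 0, ENNReal.ofReal (K θ (euclideanCons 0 y)) :=
  setLIntegral_hyperplane hK.measurable_lintegral

theorem IsLayerKernel.tendsto_lintegral_halfSpace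
    (hK : IsLayerKernel (fun z => z 0) {z | z 0 = 0} C K) (y : 𝔼[k]) :
    Tendsto (fun s => ∫⁻ θ in Ioi 0, ENNReal.ofReal (K θ (euclideanCons (s * θ) y))) (𝓝[>] 0)
      (𝓝 (∫⁻ θ in Ioi 0, ENNReal.ofReal (K θ (euclideanCons 0 y)))) := by
  obtain ⟨b, hb, hbint⟩ := hK.exists_lintegral_bound
  have hcons (s : ℝ) : Continuous fun θ : ℝ => euclideanCons (s * θ) y := by fun_prop
  refine tendsto_lintegral_filter_of_dominated_convergence b
    (Eventually.of_forall fun s => (hK.measurable.comp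
      (measurable_id.prodMk (hcons s).measurable)).ennreal_ofReal)
    (Eventually.of_forall fun s => Eventually.of_forall fun θ => hb θ _) hbint ?_
  filter_upwards [hK.tendsto (euclideanCons 0 y) rfl, self_mem_ae_restrict measurableSet_Ioi]
    with θ hθ hθ0
  refine (ENNReal.continuous_ofReal.tendsto _).comp (hθ.comp (tendsto_nhdsWithin_iff.2 ⟨?_, ?_⟩))
  · have hcont : Continuous fun s : ℝ => euclideanCons (s * θ) y := by fun_prop
    simpa using (hcont.tendsto 0).mono_left nhdsWithin_le_nhds
  · filter_upwards [self_mem_nhdsWithin] with s hs using mul_pos hs hθ0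

theorem IsLayerKernel.tendsto_layerLIntegral_halfSpace
    (hK : IsLayerKernel (fun z => z 0) {z | z 0 = 0} C K) (hC : IsCompact C) :
    surfaceLIntegral {z | z 0 = 0} K ≠ ∞ ∧ Tendsto (layerLIntegral (fun z => z 0) K) (𝓝[>] 0)
      (𝓝 (surfaceLIntegral {z | z 0 = 0} K)) := by
  obtain ⟨b, hb, hbint⟩ := hK.exists_lintegral_bound
  obtain ⟨ρ, hρ⟩ := hC.isBounded.subset_closedBall 0
  have hdom (s : ℝ) (y : 𝔼[k]) :
      ∫⁻ θ in Ioi 0, ENNReal.ofReal (K θ (euclideanCons (s * θ) y)) ≤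
        (closedBall 0 ρ).indicator (fun _ => ∫⁻ θ in Ioi 0, b θ) y := by
    by_cases hy : y ∈ closedBall 0 ρ
    · rw [indicator_of_mem hy]
      exact lintegral_mono fun θ => hb θ _
    · have hzero (θ : ℝ) : K θ (euclideanCons (s * θ) y) = 0 := by
        by_contra hne
        have := hρ (hK.mem_of_ne_zero _ _ hne)
        rw [mem_closedBall_zero_iff] at this hy
        exact hy ((norm_le_norm_euclideanCons _ y).trans this)
      simp [hzero]
  have hbound : ∫⁻ y : 𝔼[k], (closedBall 0 ρ).indicator (fun _ => ∫⁻ θ in Ioi 0, b θ) y ≠ ∞ := by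
    rw [lintegral_indicator measurableSet_closedBall, setLIntegral_const]
    exact ENNReal.mul_ne_top hbint measure_closedBall_lt_top.ne
  have hmeas (s : ℝ) : Measurable fun y : 𝔼[k] =>
      ∫⁻ θ in Ioi 0, ENNReal.ofReal (K θ (euclideanCons (s * θ) y)) := by
    have hcons : Continuous fun p : 𝔼[k] × ℝ => euclideanCons (s * p.2) p.1 := by fun_prop
    exact (hK.measurable.comp
      (measurable_snd.prodMk hcons.measurable)).ennreal_ofReal.lintegral_prod_right'
  rw [surfaceLIntegral_halfSpace hK]
  refine ⟨ne_top_of_le_ne_top hbound (lintegral_mono fun y => by simpa using hdom 0 y), ?_⟩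
  refine (tendsto_lintegral_filter_of_dominated_convergence _
    (Eventually.of_forall hmeas) (Eventually.of_forall fun s => Eventually.of_forall (hdom s))
    hbound (Eventually.of_forall hK.tendsto_lintegral_halfSpace)).congr' ?_
  filter_upwards [self_mem_nhdsWithin] with s hs
  exact (layerLIntegral_halfSpace hK.measurable hs).symm

end HalfSpace
section Comparison

theorem lintegral_le_of_lipschitzOnWith {X Y : Type*} [EMetricSpace X] [MeasurableSpace X]
    [BorelSpace X] [EMetricSpace Y] [MeasurableSpace Y] [BorelSpace Y] {L : ℝ≥0} {f : X → Y}
    {s t : Set _} {g : Y → ℝ≥0∞} {h : X → ℝ≥0∞} (d : ℕ) (hf : LipschitzOnWith L f s)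
    (hs : MeasurableSet s) (ht : MeasurableSet t) (hg : ∀ y ∈ t, g y ≠ 0 → y ∈ f '' s)
    (hle : ∀ x ∈ s, g (f x) ≤ h x) :
    ∫⁻ y in t, g y ∂μHE[d] ≤ L ^ d * ∫⁻ x in s, h x ∂μHE[d] := by
  calc
    ∫⁻ y in t, g y ∂μHE[d] = ∫⁻ y, t.indicator g y ∂μHE[d] := (lintegral_indicator ht g).symm
    _ ≤ ∫⁻ y, (f '' s).indicator g y ∂μHE[d] := lintegral_mono fun y => by
      by_cases hy : y ∈ t ∧ g y ≠ 0
      · rw [indicator_of_mem hy.1, indicator_of_mem (hg y hy.1 hy.2)]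
      · rw [indicator_apply_eq_zero.2 fun hyt => not_not.1 fun h0 => hy ⟨hyt, h0⟩]
        exact zero_le
    _ ≤ ∫⁻ y in f '' s, g y ∂μHE[d] := lintegral_indicator_le _ _
    _ ≤ L ^ d * ∫⁻ x in s, g (f x) ∂μHE[d] := lintegral_image_euclideanHausdorffMeasure_le hf hs d g
    _ ≤ L ^ d * ∫⁻ x in s, h x ∂μHE[d] := by
      gcongr 1
      exact setLIntegral_mono' hs hle

theorem lintegral_le_and_le_of_biLipschitz {X Y : Type*} [EMetricSpace X] [MeasurableSpace X]
    [BorelSpace X] [EMetricSpace Y] [MeasurableSpace Y] [BorelSpace Y] {L : ℝ≥0}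
    {φ : OpenPartialHomeomorph X Y} (hφ : LipschitzOnWith L φ φ.source)
    (hφ' : LipschitzOnWith L φ.symm φ.target) (d : ℕ) {P : Set X} {Q : Set Y}
    (hP : MeasurableSet P) (hQ : MeasurableSet Q) (hPQ : ∀ x ∈ φ.source, x ∈ P ↔ φ x ∈ Q)
    {g : X → ℝ≥0∞} {h : Y → ℝ≥0∞} (hg : ∀ x, g x ≠ 0 → x ∈ φ.source)
    (hh : ∀ y, h y ≠ 0 → y ∈ φ.target) (hgh : ∀ x ∈ φ.source, x ∈ P → h (φ x) = g x) :
    ∫⁻ x in P, g x ∂μHE[d] ≤ L ^ d * ∫⁻ y in Q, h y ∂μHE[d] ∧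
      ∫⁻ y in Q, h y ∂μHE[d] ≤ L ^ d * ∫⁻ x in P, g x ∂μHE[d] := by
  have hQP : ∀ y ∈ φ.target, y ∈ Q → φ.symm y ∈ P := fun y hy hyQ => by
    rwa [hPQ _ (φ.map_target hy), φ.right_inv hy]
  constructor
  · calc
      ∫⁻ x in P, g x ∂μHE[d] ≤ L ^ d * ∫⁻ y in φ.target ∩ Q, h y ∂μHE[d] := by
        refine lintegral_le_of_lipschitzOnWith d (hφ'.mono inter_subset_left)
          (φ.open_target.measurableSet.inter hQ) hP (fun x hx h0 => ?_) fun y hy => ?_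
        · exact ⟨φ x, ⟨φ.map_source (hg x h0), (hPQ x (hg x h0)).1 hx⟩, φ.left_inv (hg x h0)⟩
        · rw [← hgh _ (φ.map_target hy.1) (hQP y hy.1 hy.2), φ.right_inv hy.1]
      _ ≤ L ^ d * ∫⁻ y in Q, h y ∂μHE[d] := by
        gcongr
        exact inter_subset_right
  · calc
      ∫⁻ y in Q, h y ∂μHE[d] ≤ L ^ d * ∫⁻ x in φ.source ∩ P, g x ∂μHE[d] := by
        refine lintegral_le_of_lipschitzOnWith d (hφ.mono inter_subset_left)
          (φ.open_source.measurableSet.inter hP) hQ (fun y hy h0 => ?_) fun x hx =>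
          (hgh x hx.1 hx.2).le
        exact ⟨φ.symm y, ⟨φ.map_target (hh y h0), hQP y (hh y h0) hy⟩, φ.right_inv (hh y h0)⟩
      _ ≤ L ^ d * ∫⁻ x in P, g x ∂μHE[d] := by
        gcongr
        exact inter_subset_right

end Comparison

section Flatten

variable {lam : ℝ≥0} {φ : OpenPartialHomeomorph 𝔼[k + 1] 𝔼[k + 1]}

/-- The kernel `K` read in the chart `φ`, extended by zero. -/
def flatKernel (φ : OpenPartialHomeomorph 𝔼[k + 1] 𝔼[k + 1]) (K : ℝ → 𝔼[k + 1] → ℝ) (θ : ℝ) :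
    𝔼[k + 1] → ℝ :=
  φ.target.indicator fun z => K θ (φ.symm z)

theorem flatKernel_apply (φ : OpenPartialHomeomorph 𝔼[k + 1] 𝔼[k + 1])
    (K : ℝ → 𝔼[k + 1] → ℝ) (θ : ℝ) {x : 𝔼[k + 1]} (hx : x ∈ φ.source) :
    flatKernel φ K θ (φ x) = K θ x := by
  rw [flatKernel, indicator_of_mem (φ.map_source hx), φ.left_inv hx]

theorem exists_of_flatKernel_ne_zero {θ : ℝ} {z : 𝔼[k + 1]} (hz : flatKernel φ K θ z ≠ 0) :
    ∃ x ∈ φ.source, φ x = z ∧ K θ x ≠ 0 := by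
  have hzt := mem_of_indicator_ne_zero hz
  rw [flatKernel, indicator_of_mem hzt] at hz
  exact ⟨φ.symm z, φ.map_target hzt, φ.right_inv hzt, hz⟩

theorem measurable_flatKernel (φ : OpenPartialHomeomorph 𝔼[k + 1] 𝔼[k + 1])
    (hK : Measurable (Function.uncurry K)) : Measurable (Function.uncurry (flatKernel φ K)) := by
  classical
  have hsymm : Measurable (φ.target.piecewise φ.symm fun _ => 0) :=
    φ.continuousOn_symm.measurable_piecewise continuousOn_const φ.open_target.measurableSet
  convert (hK.comp (measurable_fst.prodMk (hsymm.comp measurable_snd))).indicator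
    (measurable_snd φ.open_target.measurableSet) using 1
  ext ⟨θ, z⟩
  by_cases hz : z ∈ φ.target <;> simp [flatKernel, hz]

theorem IsFlattening.tendsto_flatKernel (hφ : IsFlattening u S lam φ) {θ : ℝ} {x : 𝔼[k + 1]}
    (hx : x ∈ φ.source) (hK : Tendsto (K θ) (𝓝[{x | 0 < u x}] x) (𝓝 (K θ x))) :
    Tendsto (flatKernel φ K θ) (𝓝[{z | 0 < z 0}] φ x) (𝓝 (flatKernel φ K θ (φ x))) := by
  have hmem : ∀ᶠ z in 𝓝[{z | 0 < z 0}] φ x, z ∈ φ.target :=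
    nhdsWithin_le_nhds (φ.open_target.mem_nhds (φ.map_source hx))
  have hsymm : Tendsto φ.symm (𝓝[{z | 0 < z 0}] φ x) (𝓝[{x | 0 < u x}] x) := by
    refine tendsto_nhdsWithin_iff.2 ⟨(φ.tendsto_symm hx).mono_left nhdsWithin_le_nhds, ?_⟩
    filter_upwards [hmem, self_mem_nhdsWithin] with z hz hz0
    rwa [hφ.pos_iff _ (φ.map_target hz), φ.right_inv hz]
  rw [flatKernel_apply φ K θ hx]
  refine (hK.comp hsymm).congr' ?_
  filter_upwards [hmem] with z hz using (indicator_of_mem hz _).symm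

theorem IsLayerKernel.flatten (hK : IsLayerKernel u S C K) (hφ : IsFlattening u S lam φ)
    (hC : IsCompact C) (hCφ : C ⊆ φ.source) :
    IsLayerKernel (fun z => z 0) {z | z 0 = 0} (φ '' C) (flatKernel φ K) where
  measurable := measurable_flatKernel φ hK.measurable
  exists_le := by
    obtain ⟨M, hM⟩ := hK.exists_le
    refine ⟨M, fun θ z => ?_⟩
    rw [flatKernel, norm_indicator_eq_indicator_norm]
    exact indicator_le' (fun z _ => hM θ _) (fun _ _ => M.coe_nonneg) z
  exists_le_of_ne_zero := by
    obtain ⟨B, hB⟩ := hK.exists_le_of_ne_zero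
    refine ⟨B, fun θ z hz => ?_⟩
    obtain ⟨x, -, -, hx⟩ := exists_of_flatKernel_ne_zero hz
    exact hB θ x hx
  mem_of_ne_zero θ z hz := by
    obtain ⟨x, -, rfl, hx⟩ := exists_of_flatKernel_ne_zero hz
    exact mem_image_of_mem φ (hK.mem_of_ne_zero θ x hx)
  tendsto z hz := by
    by_cases hzt : z ∈ φ.target
    · have hx := φ.map_target hzt
      filter_upwards [hK.tendsto (φ.symm z) ((hφ.mem_iff _ hx).2 (by rwa [φ.right_inv hzt]))]
        with θ hθ
      simpa only [φ.right_inv hzt] using hφ.tendsto_flatKernel hx hθ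
    · have hzC : (φ '' C)ᶜ ∈ 𝓝 z :=
        (hC.image_of_continuousOn (φ.continuousOn.mono hCφ)).isClosed.isOpen_compl.mem_nhds
          fun ⟨x, hx, hxz⟩ => hzt (hxz ▸ φ.map_source (hCφ hx))
      refine Eventually.of_forall fun θ => ?_
      have hzero : ∀ w ∈ (φ '' C)ᶜ, flatKernel φ K θ w = 0 := fun w hw => by
        by_contra hne
        obtain ⟨x, -, rfl, hx⟩ := exists_of_flatKernel_ne_zero hne
        exact hw (mem_image_of_mem φ (hK.mem_of_ne_zero θ x hx))
      refine (tendsto_congr' ?_).2 tendsto_const_nhds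
      filter_upwards [nhdsWithin_le_nhds hzC] with w hw
      rw [hzero w hw, hzero z (mem_of_mem_nhds hzC)]

theorem IsFlattening.layerLIntegral_le_and_le (hφ : IsFlattening u S lam φ)
    (hK : IsLayerKernel u S C K) (hu : Measurable u) (hCφ : C ⊆ φ.source) (s : ℝ) :
    layerLIntegral u K s ≤ lam ^ (k + 1) * layerLIntegral (fun z => z 0) (flatKernel φ K) s ∧
      layerLIntegral (fun z => z 0) (flatKernel φ K) s ≤
        lam ^ (k + 1) * layerLIntegral u K s := by
  have h0 : Measurable fun z : 𝔼[k + 1] => z 0 := by fun_prop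
  obtain ⟨h₁, h₂⟩ := lintegral_le_and_le_of_biLipschitz hφ.lipschitzOnWith
    hφ.lipschitzOnWith_symm (k + 1) (P := {x | 0 < u x}) (Q := {z | 0 < z 0})
    (g := fun x => ENNReal.ofReal (K (u x / s) x))
    (h := fun z => ENNReal.ofReal (flatKernel φ K (z 0 / s) z))
    (measurableSet_lt measurable_const hu) (measurableSet_lt measurable_const h0) hφ.pos_iff
    (fun x hx => hCφ (hK.mem_of_ne_zero (u x / s) x fun h => hx (by rw [h, ENNReal.ofReal_zero])))
    (fun z hz => by_contra fun hzφ => hz (by simp [flatKernel, hzφ]))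
    (fun x hx hpos => by rw [flatKernel_apply φ K _ hx, hφ.apply_zero_of_pos x hx hpos])
  rw [EuclideanSpace.euclideanHausdorffMeasure_eq_volume] at h₁ h₂
  simp only [layerLIntegral, mul_left_comm _ (ENNReal.ofReal s⁻¹)]
  exact ⟨mul_le_mul_right h₁ _, mul_le_mul_right h₂ _⟩

theorem IsFlattening.surfaceLIntegral_le_and_le (hφ : IsFlattening u S lam φ)
    (hK : IsLayerKernel u S C K) (hS : MeasurableSet S) (hCφ : C ⊆ φ.source) :
    surfaceLIntegral S K ≤ lam ^ k * surfaceLIntegral {z | z 0 = 0} (flatKernel φ K) ∧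
      surfaceLIntegral {z | z 0 = 0} (flatKernel φ K) ≤ lam ^ k * surfaceLIntegral S K := by
  have h0 : Measurable fun z : 𝔼[k + 1] => z 0 := by fun_prop
  refine lintegral_le_and_le_of_biLipschitz hφ.lipschitzOnWith hφ.lipschitzOnWith_symm k hS
    (measurableSet_eq_fun h0 measurable_const) hφ.mem_iff (fun x hx => ?_) (fun z hz => ?_)
    fun x hx _ => by simp_rw [flatKernel_apply φ K _ hx]
  · by_contra hxφ
    have hzero (θ : ℝ) : K θ x = 0 := not_not.1 fun h => hxφ (hCφ (hK.mem_of_ne_zero θ x h))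
    simp [hzero] at hx
  · by_contra hzφ
    simp [flatKernel, hzφ] at hz

end Flatten

section Comparable

theorem eventually_le_mul_add_of_tendsto {ι : Type*} {l : Filter ι} {a f : ι → ℝ≥0∞}
    {b c L M : ℝ≥0∞} (hL : L ≠ ∞) (hb : b ≠ ∞) (ha : Tendsto a l (𝓝 b))
    (hf : ∀ᶠ i in l, f i ≤ L * a i) (hbc : b ≤ M * c) {η : ℝ≥0∞} (hη : η ≠ 0) :
    ∀ᶠ i in l, f i ≤ L * M * c + η := by
  have hlt : L * b < L * b + η := ENNReal.lt_add_right (ENNReal.mul_ne_top hL hb) hη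
  filter_upwards [hf, (ENNReal.Tendsto.const_mul ha (Or.inr hL)).eventually (gt_mem_nhds hlt)]
    with i hfi hi
  calc
    f i ≤ L * b + η := hfi.trans hi.le
    _ ≤ L * (M * c) + η := by gcongr
    _ = L * M * c + η := by rw [mul_assoc]

theorem eventually_le_mul_add_of_tendsto' {ι : Type*} {l : Filter ι} {a f : ι → ℝ≥0∞}
    {b c L M : ℝ≥0∞} (hM : M ≠ ∞) (hb : b ≠ ∞) (ha : Tendsto a l (𝓝 b))
    (hf : ∀ᶠ i in l, a i ≤ L * f i) (hcb : c ≤ M * b) {η : ℝ≥0∞} (hη : η ≠ 0) :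
    ∀ᶠ i in l, c ≤ L * M * f i + η := by
  have hlt : M * b < M * b + η := ENNReal.lt_add_right (ENNReal.mul_ne_top hM hb) hη
  have hlim := (ENNReal.Tendsto.const_mul ha (Or.inr hM)).add_const η
  filter_upwards [hf, hlim.eventually (lt_mem_nhds hlt)] with i hfi hi
  calc
    c ≤ M * a i + η := hcb.trans hi.le
    _ ≤ M * (L * f i) + η := by gcongr
    _ = L * M * f i + η := by rw [← mul_assoc, mul_comm M]

/-- On `V`, layer integrals and surface integrals of layer kernels agree up to the factor `L` and an
arbitrarily small error. -/
def LayerComparable (u : 𝔼[k + 1] → ℝ) (S : Set 𝔼[k + 1]) (L : ℝ≥0∞) (V : Set 𝔼[k + 1]) : Prop :=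
  ∀ C K, IsCompact C → C ⊆ V → IsLayerKernel u S C K → surfaceLIntegral S K ≠ ∞ ∧
    ∀ η ≠ 0, ∀ᶠ s in 𝓝[>] 0, layerLIntegral u K s ≤ L * surfaceLIntegral S K + η ∧
      surfaceLIntegral S K ≤ L * layerLIntegral u K s + η

theorem IsFlattening.layerComparable {lam : ℝ≥0} {φ : OpenPartialHomeomorph 𝔼[k + 1] 𝔼[k + 1]}
    (hφ : IsFlattening u S lam φ) (hu : Measurable u) (hS : MeasurableSet S) :
    LayerComparable u S (lam ^ (2 * k + 1)) φ.source := by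
  intro C K hC hCφ hK
  have hpow (m : ℕ) : (lam : ℝ≥0∞) ^ m ≠ ∞ := ENNReal.pow_ne_top ENNReal.coe_ne_top
  obtain ⟨hfin, hlim⟩ := (hK.flatten hφ hC hCφ).tendsto_layerLIntegral_halfSpace
    (hC.image_of_continuousOn (φ.continuousOn.mono hCφ))
  obtain ⟨hS₁, hS₂⟩ := hφ.surfaceLIntegral_le_and_le hK hS hCφ
  refine ⟨ne_top_of_le_ne_top (ENNReal.mul_ne_top (hpow k) hfin) hS₁, fun η hη => ?_⟩
  rw [show 2 * k + 1 = (k + 1) + k by ring, pow_add]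
  exact (eventually_le_mul_add_of_tendsto (hpow _) hfin hlim (Eventually.of_forall fun s =>
      (hφ.layerLIntegral_le_and_le hK hu hCφ s).1) hS₂ hη).and
    (eventually_le_mul_add_of_tendsto' (hpow _) hfin hlim (Eventually.of_forall fun s =>
      (hφ.layerLIntegral_le_and_le hK hu hCφ s).2) hS₁ hη)

theorem layerComparable_of_disjoint (hu : Measurable u) (hS : MeasurableSet S) (L : ℝ≥0∞) {δ : ℝ}
    (hδ : 0 < δ) (hVS : Disjoint V S) (hVδ : ∀ x ∈ V, 0 < u x → δ < u x) :
    LayerComparable u S L V := by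
  intro C K _ hCV hK
  have hsurf : surfaceLIntegral S K = 0 := setLIntegral_eq_zero hS fun x hx => by
    have hzero (θ : ℝ) : K θ x = 0 :=
      not_not.1 fun h => hVS.notMem_of_mem_right hx (hCV (hK.mem_of_ne_zero θ x h))
    simp [hzero]
  obtain ⟨B, hB⟩ := hK.exists_le_of_ne_zero
  have hsmall : ∀ᶠ s in 𝓝[>] (0 : ℝ), B * s < δ := by
    have : Tendsto (fun s : ℝ => B * s) (𝓝[>] 0) (𝓝 (B * 0)) :=
      ((continuous_const_mul B).tendsto 0).mono_left nhdsWithin_le_nhds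
    rw [mul_zero] at this
    exact this.eventually (gt_mem_nhds hδ)
  rw [hsurf]
  refine ⟨ENNReal.zero_ne_top, fun η _ => ?_⟩
  filter_upwards [hsmall, self_mem_nhdsWithin] with s hs hs0
  refine ⟨?_, zero_le⟩
  rw [layerLIntegral, setLIntegral_eq_zero (measurableSet_lt measurable_const hu) fun x hx => ?_,
    mul_zero]
  · exact zero_le
  · have hzero : K (u x / s) x = 0 := by
      by_contra hne
      have hle := (div_le_iff₀ hs0).1 (hB _ x hne)
      exact (hVδ x (hCV (hK.mem_of_ne_zero _ x hne)) hx).not_ge (hle.trans hs.le)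
    simp [hzero]

theorem IsLayerKernel.mul_left (hK : IsLayerKernel u S C K) {f : 𝔼[k + 1] → ℝ} (hf : Continuous f)
    (hf01 : ∀ x, f x ∈ Icc (0 : ℝ) 1) :
    IsLayerKernel u S (C ∩ tsupport f) fun θ x => f x * K θ x where
  measurable := (hf.measurable.comp measurable_snd).mul hK.measurable
  exists_le := by
    obtain ⟨M, hM⟩ := hK.exists_le
    refine ⟨M, fun θ x => ?_⟩
    rw [norm_mul, Real.norm_of_nonneg (hf01 x).1]
    exact (mul_le_of_le_one_left (norm_nonneg _) (hf01 x).2).trans (hM θ x)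
  exists_le_of_ne_zero :=
    hK.exists_le_of_ne_zero.imp fun _ hB θ x hx => hB θ x (right_ne_zero_of_mul hx)
  mem_of_ne_zero θ x hx := ⟨hK.mem_of_ne_zero θ x (right_ne_zero_of_mul hx),
    subset_tsupport _ (left_ne_zero_of_mul hx)⟩
  tendsto x hx := by
    filter_upwards [hK.tendsto x hx] with θ hθ
    exact ((hf.tendsto x).mono_left nhdsWithin_le_nhds).mul hθ

variable {ι : Type*} [Fintype ι] {f : ι → 𝔼[k + 1] → ℝ}

theorem IsLayerKernel.ofReal_eq_sum (hK : IsLayerKernel u S C K) (hf0 : ∀ i x, 0 ≤ f i x)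
    (hf1 : ∀ x ∈ C, ∑ i, f i x = 1) (θ : ℝ) (x : 𝔼[k + 1]) :
    ENNReal.ofReal (K θ x) = ∑ i, ENNReal.ofReal (f i x * K θ x) := by
  by_cases hx : K θ x = 0
  · simp [hx]
  · simp_rw [fun i => ENNReal.ofReal_mul (q := K θ x) (hf0 i x)]
    rw [← Finset.sum_mul, ← ENNReal.ofReal_sum_of_nonneg fun i _ => hf0 i x,
      hf1 x (hK.mem_of_ne_zero θ x hx), ENNReal.ofReal_one, one_mul]

theorem IsLayerKernel.surfaceLIntegral_eq_sum (hK : IsLayerKernel u S C K)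
    (hf : ∀ i, Continuous (f i)) (hf01 : ∀ i x, f i x ∈ Icc (0 : ℝ) 1)
    (hf1 : ∀ x ∈ C, ∑ i, f i x = 1) :
    surfaceLIntegral S K = ∑ i, surfaceLIntegral S fun θ x => f i x * K θ x := by
  have hm i := hK.mul_left (hf i) (hf01 i)
  simp only [surfaceLIntegral]
  rw [← lintegral_finsetSum _ fun i _ => (hm i).measurable_lintegral]
  refine lintegral_congr fun x => ?_
  have hmx i : Measurable fun θ => ENNReal.ofReal (f i x * K θ x) :=
    ((hm i).measurable.comp (measurable_id.prodMk measurable_const)).ennreal_ofReal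
  rw [← lintegral_finsetSum _ fun i _ => hmx i]
  exact lintegral_congr fun θ => hK.ofReal_eq_sum (fun i x => (hf01 i x).1) hf1 θ x

theorem IsLayerKernel.layerLIntegral_eq_sum (hK : IsLayerKernel u S C K) (hu : Measurable u)
    (hf : ∀ i, Continuous (f i)) (hf01 : ∀ i x, f i x ∈ Icc (0 : ℝ) 1)
    (hf1 : ∀ x ∈ C, ∑ i, f i x = 1) (s : ℝ) :
    layerLIntegral u K s = ∑ i, layerLIntegral u (fun θ x => f i x * K θ x) s := by
  have hm i := hK.mul_left (hf i) (hf01 i)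
  simp only [layerLIntegral]
  rw [← Finset.mul_sum, ← lintegral_finsetSum _ fun i _ =>
    ((hm i).measurable_comp_div hu s).ennreal_ofReal]
  congr 1
  exact lintegral_congr fun x => hK.ofReal_eq_sum (fun i x => (hf01 i x).1) hf1 _ x

theorem sum_le_mul_sum_add {a b : ι → ℝ≥0∞} {L η : ℝ≥0∞}
    (h : ∀ i, a i ≤ L * b i + η / Fintype.card ι) : ∑ i, a i ≤ L * ∑ i, b i + η := by
  calc
    ∑ i, a i ≤ ∑ i, (L * b i + η / Fintype.card ι) := Finset.sum_le_sum fun i _ => h i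
    _ = L * ∑ i, b i + Fintype.card ι * (η / Fintype.card ι) := by
      rw [Finset.sum_add_distrib, Finset.mul_sum, Finset.sum_const, Finset.card_univ,
        nsmul_eq_mul]
    _ ≤ L * ∑ i, b i + η := by
      gcongr
      exact ENNReal.mul_div_le

theorem layerComparable_of_forall_mem (hu : Measurable u) {L : ℝ≥0∞} (hC : IsCompact C)
    (h : ∀ x ∈ C, ∃ V, IsOpen V ∧ x ∈ V ∧ LayerComparable u S L V) :
    LayerComparable u S L C := by
  choose! V hVo hxV hV using h
  obtain ⟨t, ht, hCt⟩ := hC.elim_nhds_subcover V fun x hx => (hVo x hx).mem_nhds (hxV x hx)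
  obtain ⟨f, hfV, hf1, hf01, -⟩ := exists_continuous_sum_one_of_isOpen_isCompact
    (s := fun i => V (t.equivFin.symm i)) (fun i => hVo _ (ht _ (t.equivFin.symm i).2)) hC
    (hCt.trans (iUnion₂_subset fun x hx => subset_iUnion_of_subset (t.equivFin ⟨x, hx⟩) (by simp)))
  have hf1' : ∀ x ∈ C, ∑ i, f i x = 1 := fun x hx => by simpa using hf1 hx
  intro C' K hC' hCC' hK
  have hsum := (hK.mono hCC').surfaceLIntegral_eq_sum (fun i => (f i).continuous) hf01 hf1'
  have hlayer := (hK.mono hCC').layerLIntegral_eq_sum hu (fun i => (f i).continuous) hf01 hf1'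
  have hgood i := hV _ (ht _ (t.equivFin.symm i).2) (C' ∩ tsupport (f i)) _
    (hC'.inter_right (isClosed_tsupport _)) (inter_subset_right.trans (hfV i))
    (hK.mul_left (f i).continuous (hf01 i))
  refine ⟨?_, fun η hη => ?_⟩
  · rw [hsum]
    exact (ENNReal.sum_lt_top.2 fun i _ => (hgood i).1.lt_top).ne
  · have hη' : η / Fintype.card (Fin t.card) ≠ 0 :=
      (ENNReal.div_pos hη (ENNReal.natCast_ne_top _)).ne'
    filter_upwards [eventually_all.2 fun i => (hgood i).2 _ hη'] with s hs
    rw [hlayer, hsum]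
    exact ⟨sum_le_mul_sum_add fun i => (hs i).1,
      sum_le_mul_sum_add fun i => (hs i).2⟩

end Comparable

theorem tendsto_of_eventually_le_mul_add {ι : Type*} {l : Filter ι} {f : ι → ℝ≥0∞} {a : ℝ≥0∞}
    (ha : a ≠ ∞) (m : ℕ) (h : ∀ lam : ℝ≥0, 1 < lam → ∀ η ≠ 0, ∀ᶠ i in l,
      f i ≤ lam ^ m * a + η ∧ a ≤ lam ^ m * f i + η) : Tendsto f l (𝓝 a) := by
  have hlim (c : ℝ≥0∞) (hc : c ≠ ∞) :
      Tendsto (fun lam : ℝ≥0 => (lam : ℝ≥0∞) ^ m * c + (lam - 1 : ℝ≥0)) (𝓝[>] 1) (𝓝 c) := by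
    lift c to ℝ≥0 using hc
    have hcont : Continuous fun lam : ℝ≥0 => lam ^ m * c + (lam - 1) := by fun_prop
    have := ENNReal.tendsto_coe.2 ((hcont.tendsto 1).mono_left (nhdsWithin_le_nhds (s := Ioi 1)))
    simpa using this
  have hη {lam : ℝ≥0} (hlam : 1 < lam) : ((lam - 1 : ℝ≥0) : ℝ≥0∞) ≠ 0 :=
    ENNReal.coe_ne_zero.2 (tsub_pos_of_lt hlam).ne'
  refine tendsto_order.2 ⟨fun a' ha' => ?_, fun a' ha' => ?_⟩
  · obtain ⟨lam, hlt, hlam⟩ := (((hlim a' (ha'.trans_le le_top).ne).eventually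
      (gt_mem_nhds ha')).and self_mem_nhdsWithin).exists
    filter_upwards [h lam hlam _ (hη hlam)] with i hi
    by_contra! hle
    exact (hi.2.trans (by gcongr)).not_gt hlt
  · obtain ⟨lam, hlt, hlam⟩ := (((hlim a ha).eventually
      (gt_mem_nhds ha')).and self_mem_nhdsWithin).exists
    filter_upwards [h lam hlam _ (hη hlam)] with i hi using hi.1.trans_lt hlt

end LayerFormula

section LayerFormulaOfCone

namespace IsLayerKernel

variable {k : ℕ} {u : 𝔼[k + 1] → ℝ} {S C : Set 𝔼[k + 1]} {K : ℝ → 𝔼[k + 1] → ℝ}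

theorem neg (hK : IsLayerKernel u S C K) : IsLayerKernel u S C fun θ x => -K θ x where
  measurable := hK.measurable.neg
  exists_le := hK.exists_le.imp fun _ hM θ x => (norm_neg _).trans_le (hM θ x)
  exists_le_of_ne_zero := hK.exists_le_of_ne_zero.imp fun _ hB θ x hx => hB θ x (neg_ne_zero.1 hx)
  mem_of_ne_zero θ x hx := hK.mem_of_ne_zero θ x (neg_ne_zero.1 hx)
  tendsto x hx := by filter_upwards [hK.tendsto x hx] with θ hθ using hθ.neg

theorem lintegral_ne_top (hK : IsLayerKernel u S C K) (x : 𝔼[k + 1]) :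
    ∫⁻ θ in Ioi 0, ENNReal.ofReal (K θ x) ≠ ∞ := by
  obtain ⟨b, hb, hbint⟩ := hK.exists_lintegral_bound
  exact ne_top_of_le_ne_top hbint (lintegral_mono fun θ => hb θ x)

theorem integrableOn_Ioi (hK : IsLayerKernel u S C K) (x : 𝔼[k + 1]) :
    IntegrableOn (fun θ => K θ x) (Ioi 0) := by
  have hm : Measurable fun θ => K θ x := hK.measurable.comp (measurable_id.prodMk measurable_const)
  refine ⟨hm.aestronglyMeasurable, (hasFiniteIntegral_iff_norm _).2 ?_⟩
  have hle (θ : ℝ) :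
      ENNReal.ofReal ‖K θ x‖ ≤ ENNReal.ofReal (K θ x) + ENNReal.ofReal (-K θ x) := by
    rcases abs_cases (K θ x) with h | h <;> rw [Real.norm_eq_abs, h.1] <;> simp
  refine (lintegral_mono hle).trans_lt ?_
  rw [lintegral_add_left hm.ennreal_ofReal]
  exact ENNReal.add_lt_top.2 ⟨(hK.lintegral_ne_top x).lt_top, (hK.neg.lintegral_ne_top x).lt_top⟩

theorem integrableOn_comp_div (hK : IsLayerKernel u S C K) (hu : Measurable u) (hC : IsCompact C)
    (s : ℝ) : IntegrableOn (fun x => K (u x / s) x) {x | 0 < u x} := by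
  obtain ⟨M, hM⟩ := hK.exists_le
  have hint : IntegrableOn (fun x => K (u x / s) x) C :=
    Measure.integrableOn_of_bounded (M := M) hC.measure_lt_top.ne
      (hK.measurable_comp_div hu s).aestronglyMeasurable (Eventually.of_forall fun x => hM _ x)
  exact ((integrableOn_iff_integrable_of_support_subset
    fun x hx => hK.mem_of_ne_zero _ x hx).1 hint).integrableOn

theorem integral_eq_surfaceLIntegral_sub (hK : IsLayerKernel u S C K)
    (hfin : surfaceLIntegral S K ≠ ∞) (hfin' : surfaceLIntegral S (fun θ x => -K θ x) ≠ ∞) :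
    ∫ x in S, (∫ θ in Ioi 0, K θ x) ∂μHE[k] =
      (surfaceLIntegral S K).toReal - (surfaceLIntegral S fun θ x => -K θ x).toReal := by
  rw [surfaceLIntegral, surfaceLIntegral,
    ← integral_toReal hK.measurable_lintegral.aemeasurable
      (Eventually.of_forall fun x => (hK.lintegral_ne_top x).lt_top),
    ← integral_toReal hK.neg.measurable_lintegral.aemeasurable
      (Eventually.of_forall fun x => (hK.neg.lintegral_ne_top x).lt_top),
    ← integral_sub
      (integrable_toReal_of_lintegral_ne_top hK.measurable_lintegral.aemeasurable hfin)
      (integrable_toReal_of_lintegral_ne_top hK.neg.measurable_lintegral.aemeasurable hfin')]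
  exact integral_congr_ae (Eventually.of_forall fun x =>
    integral_eq_lintegral_pos_part_sub_lintegral_neg_part (hK.integrableOn_Ioi x))

theorem integral_eq_layerLIntegral_sub (hK : IsLayerKernel u S C K) (hu : Measurable u)
    (hC : IsCompact C) {s : ℝ} (hs : 0 < s) :
    s⁻¹ * ∫ x in {x | 0 < u x}, K (u x / s) x =
      (layerLIntegral u K s).toReal - (layerLIntegral u (fun θ x => -K θ x) s).toReal := by
  rw [integral_eq_lintegral_pos_part_sub_lintegral_neg_part (hK.integrableOn_comp_div hu hC s),
    layerLIntegral, layerLIntegral, ENNReal.toReal_mul, ENNReal.toReal_mul,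
    ENNReal.toReal_ofReal (inv_nonneg.2 hs.le), mul_sub]

end IsLayerKernel

theorem IsFlattening.measure_inter_le_and_le {k : ℕ} {u : 𝔼[k + 1] → ℝ} {S : Set 𝔼[k + 1]}
    {lam : ℝ≥0} {φ : OpenPartialHomeomorph 𝔼[k + 1] 𝔼[k + 1]} (hφ : IsFlattening u S lam φ)
    (hS : MeasurableSet S) {B : Set 𝔼[k + 1]} (hB : IsOpen B) (hBφ : B ⊆ φ.target) :
    μHE[k] (φ.source ∩ φ ⁻¹' B ∩ S) ≤ lam ^ k * volume (euclideanCons (k := k) 0 ⁻¹' B) ∧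
      volume (euclideanCons (k := k) 0 ⁻¹' B) ≤ lam ^ k * μHE[k] (φ.source ∩ φ ⁻¹' B ∩ S) := by
  have hA : MeasurableSet (φ.source ∩ φ ⁻¹' B) := (φ.isOpen_inter_preimage hB).measurableSet
  have hcons : MeasurableSet (euclideanCons (k := k) 0 ⁻¹' B) :=
    (hB.preimage isometry_euclideanCons_zero.continuous).measurableSet
  have h0 : Measurable fun z : 𝔼[k + 1] => z 0 := by fun_prop
  have hcomp := lintegral_le_and_le_of_biLipschitz hφ.lipschitzOnWith hφ.lipschitzOnWith_symm k
    hS (measurableSet_eq_fun h0 measurable_const) hφ.mem_iff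
    (g := (φ.source ∩ φ ⁻¹' B).indicator 1) (h := B.indicator 1)
    (fun x hx => (mem_of_indicator_ne_zero hx).1)
    (fun z hz => hBφ (mem_of_indicator_ne_zero hz)) fun x hx _ => by
      by_cases hxB : φ x ∈ B
      · rw [indicator_of_mem hxB,
          indicator_of_mem (show x ∈ φ.source ∩ φ ⁻¹' B from ⟨hx, hxB⟩)]
        rfl
      · rw [indicator_of_notMem hxB,
          indicator_of_notMem fun hmem : x ∈ φ.source ∩ φ ⁻¹' B => hxB hmem.2]
  rw [setLIntegral_hyperplane (measurable_one.indicator hB.measurableSet),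
    lintegral_indicator_one hA, Measure.restrict_apply hA] at hcomp
  have hvol : ∫⁻ y : 𝔼[k], B.indicator 1 (euclideanCons 0 y) =
      volume (euclideanCons (k := k) 0 ⁻¹' B) :=
    (lintegral_congr fun y => rfl).trans (lintegral_indicator_one hcons)
  rwa [hvol] at hcomp

namespace IsSmoothCone

variable {k : ℕ} {u U : 𝔼[k + 1] → ℝ} {W C : Set 𝔼[k + 1]} {K : ℝ → 𝔼[k + 1] → ℝ}

theorem exists_layerComparable (h : IsSmoothCone u U W) {x : 𝔼[k + 1]} (hx : x ≠ 0) {lam : ℝ≥0}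
    (hlam : 1 < lam) :
    ∃ V, IsOpen V ∧ x ∈ V ∧ LayerComparable u (freeBoundary u) (lam ^ (2 * k + 1)) V := by
  have hu := h.continuous.measurable
  have hS := measurableSet_freeBoundary u
  by_cases hcl : x ∈ closure {x | 0 < u x}
  · rcases h.pos_or_mem_freeBoundary hcl hx with hpos | hfb
    · refine ⟨{y | u x / 2 < u y}, isOpen_lt continuous_const h.continuous, half_lt_self hpos,
        layerComparable_of_disjoint hu hS _ (half_pos hpos) ?_ fun y hy _ => hy⟩
      refine Set.disjoint_left.2 fun y (hy : u x / 2 < u y) hyS => ?_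
      rw [h.eq_zero_of_mem hyS] at hy
      exact hy.not_gt (half_pos hpos)
    · obtain ⟨φ, hxφ, -, hφ⟩ := h.exists_isFlattening hfb hlam
      exact ⟨φ.source, φ.open_source, hxφ, hφ.layerComparable hu hS⟩
  · refine ⟨(closure {x | 0 < u x})ᶜ, isClosed_closure.isOpen_compl, hcl,
      layerComparable_of_disjoint hu hS _ one_pos ?_
        fun y hy hpos => (hy (subset_closure hpos)).elim⟩
    exact Set.disjoint_left.2 fun y hy hyS => hy (frontier_subset_closure hyS.1)

theorem layerComparable (h : IsSmoothCone u U W) (hC : IsCompact C) (hC0 : 0 ∉ C) {lam : ℝ≥0}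
    (hlam : 1 < lam) : LayerComparable u (freeBoundary u) (lam ^ (2 * k + 1)) C :=
  layerComparable_of_forall_mem h.continuous.measurable hC fun _ hx =>
    h.exists_layerComparable (ne_of_mem_of_not_mem hx hC0) hlam

theorem surfaceLIntegral_ne_top (h : IsSmoothCone u U W)
    (hK : IsLayerKernel u (freeBoundary u) C K) (hC : IsCompact C) (hC0 : 0 ∉ C) :
    surfaceLIntegral (freeBoundary u) K ≠ ∞ :=
  (h.layerComparable hC hC0 one_lt_two C K hC Subset.rfl hK).1

theorem tendsto_layerLIntegral (h : IsSmoothCone u U W)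
    (hK : IsLayerKernel u (freeBoundary u) C K) (hC : IsCompact C) (hC0 : 0 ∉ C) :
    Tendsto (layerLIntegral u K) (𝓝[>] 0) (𝓝 (surfaceLIntegral (freeBoundary u) K)) :=
  tendsto_of_eventually_le_mul_add (h.surfaceLIntegral_ne_top hK hC hC0) (2 * k + 1)
    fun _ hlam η hη => (h.layerComparable hC hC0 hlam C K hC Subset.rfl hK).2 η hη

theorem tendsto_layer_integral (h : IsSmoothCone u U W)
    (hK : IsLayerKernel u (freeBoundary u) C K) (hC : IsCompact C) (hC0 : 0 ∉ C) :
    Tendsto (fun s => s⁻¹ * ∫ x in {x | 0 < u x}, K (u x / s) x) (𝓝[>] 0)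
      (𝓝 (∫ x in freeBoundary u, (∫ θ in Ioi 0, K θ x) ∂μHE[k])) := by
  have hfin := h.surfaceLIntegral_ne_top hK hC hC0
  have hfin' := h.surfaceLIntegral_ne_top hK.neg hC hC0
  rw [hK.integral_eq_surfaceLIntegral_sub hfin hfin']
  refine (((ENNReal.tendsto_toReal hfin).comp (h.tendsto_layerLIntegral hK hC hC0)).sub
    ((ENNReal.tendsto_toReal hfin').comp (h.tendsto_layerLIntegral hK.neg hC hC0))).congr' ?_
  filter_upwards [self_mem_nhdsWithin] with s hs
  exact (hK.integral_eq_layerLIntegral_sub h.continuous.measurable hC hs).symm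

theorem measure_freeBoundary_inter_lt_top (h : IsSmoothCone u U W) (hC : IsCompact C)
    (hC0 : 0 ∉ C) : μHE[k] (freeBoundary u ∩ C) < ∞ := by
  have hS := measurableSet_freeBoundary u
  rw [inter_comm, ← Measure.restrict_apply' hS]
  refine hC.measure_lt_top_of_nhdsWithin fun x hx => ?_
  by_cases hfb : x ∈ freeBoundary u
  · obtain ⟨φ, hxφ, -, hφ⟩ := h.exists_isFlattening hfb one_lt_two
    have hB : IsOpen (ball (φ x) 1 ∩ φ.target) := isOpen_ball.inter φ.open_target
    refine ⟨φ.source ∩ φ ⁻¹' (ball (φ x) 1 ∩ φ.target),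
      mem_nhdsWithin_of_mem_nhds ((φ.isOpen_inter_preimage hB).mem_nhds
        ⟨hxφ, mem_ball_self one_pos, φ.map_source hxφ⟩), ?_⟩
    rw [Measure.restrict_apply' hS]
    refine (hφ.measure_inter_le_and_le hS hB inter_subset_right).1.trans_lt
      (ENNReal.mul_lt_top (ENNReal.pow_lt_top ENNReal.coe_lt_top) ?_)
    exact (isometry_euclideanCons_zero.antilipschitz.isBounded_preimage
      (isBounded_ball.subset inter_subset_left)).measure_lt_top
  · have hx0 : x ≠ 0 := ne_of_mem_of_not_mem hx hC0
    refine ⟨(frontier {x | 0 < u x})ᶜ, mem_nhdsWithin_of_mem_nhds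
      (isClosed_frontier.isOpen_compl.mem_nhds fun hfr => hfb ⟨hfr, hx0⟩), ?_⟩
    have hdisj : (frontier {x | 0 < u x})ᶜ ∩ freeBoundary u = ∅ :=
      eq_empty_of_forall_notMem fun y hy => hy.1 hy.2.1
    rw [Measure.restrict_apply' hS, hdisj, measure_empty]
    exact ENNReal.zero_lt_top

theorem measure_freeBoundary_inter_pos (h : IsSmoothCone u U W) {x : 𝔼[k + 1]}
    (hx : x ∈ freeBoundary u) {V : Set 𝔼[k + 1]} (hV : IsOpen V) (hxV : x ∈ V) :
    0 < μHE[k] (freeBoundary u ∩ V) := by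
  obtain ⟨φ, hxφ, -, hφ⟩ := h.exists_isFlattening hx one_lt_two
  have hB : IsOpen (φ.target ∩ φ.symm ⁻¹' V) := φ.symm.isOpen_inter_preimage hV
  obtain ⟨y, hy⟩ : φ x ∈ range (euclideanCons (k := k) 0) := by
    rw [range_euclideanCons_zero]
    exact (hφ.mem_iff x hxφ).1 hx
  have hpos : 0 < volume (euclideanCons (k := k) 0 ⁻¹' (φ.target ∩ φ.symm ⁻¹' V)) := by
    refine (hB.preimage isometry_euclideanCons_zero.continuous).measure_pos volume ⟨y, ?_⟩
    rw [mem_preimage, hy]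
    exact ⟨φ.map_source hxφ, by rwa [mem_preimage, φ.left_inv hxφ]⟩
  refine (pos_of_mul_pos_right (hpos.trans_le (hφ.measure_inter_le_and_le
    (measurableSet_freeBoundary u) hB inter_subset_left).2) zero_le).trans_le (measure_mono ?_)
  rintro z ⟨⟨hz, -, hzV⟩, hzS⟩
  rw [mem_preimage, φ.left_inv hz] at hzV
  exact ⟨hzS, hzV⟩

end IsSmoothCone

end LayerFormulaOfCone

section BoundaryCalculus

section StrictDerivative

variable {E : Type*} [NormedAddCommGroup E] [NormedSpace ℝ E] {U F : E → ℝ} {U' F' : E →L[ℝ] ℝ}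
  {x e : E}

theorem exists_sub_smul_eq_zero {s : Set E} {c : ℝ≥0} (happ : ApproximatesLinearOn U U' s c)
    (hUe : U' e = 1) (hc : c * ‖e‖ ≤ 1 / 2)
    (hs : ∀ τ ∈ Icc (-(2 * |U x|)) (2 * |U x|), x - τ • e ∈ s) :
    ∃ τ : ℝ, |τ| ≤ 2 * |U x| ∧ U (x - τ • e) = 0 := by
  have hle : -(2 * |U x|) ≤ 2 * |U x| := by linarith [abs_nonneg (U x)]
  have hx : x ∈ s := by simpa using hs 0 ⟨by simp, by simp⟩
  have hbound : ∀ τ ∈ Icc (-(2 * |U x|)) (2 * |U x|), |U (x - τ • e) - U x + τ| ≤ |τ| / 2 := by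
    intro τ hτ
    have := happ _ (hs τ hτ) _ hx
    rw [sub_sub_cancel_left, norm_neg, map_neg, map_smul, hUe, smul_eq_mul, mul_one, sub_neg_eq_add,
      norm_smul, Real.norm_eq_abs, Real.norm_eq_abs] at this
    nlinarith [mul_le_mul_of_nonneg_left hc (abs_nonneg τ)]
  have hcont : ContinuousOn (fun τ : ℝ => U (x - τ • e)) (Icc (-(2 * |U x|)) (2 * |U x|)) :=
    happ.continuousOn.comp (by fun_prop) hs
  have hright := abs_le.1 (hbound _ (right_mem_Icc.2 hle))
  have hleft := abs_le.1 (hbound _ (left_mem_Icc.2 hle))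
  rw [abs_neg] at hleft
  rw [abs_mul, abs_two, abs_abs] at hleft hright
  obtain ⟨τ, hτ, hτ0⟩ : (0 : ℝ) ∈ (fun τ : ℝ => U (x - τ • e)) '' Icc _ _ :=
    intermediate_value_Icc' hle hcont
      ⟨by linarith [le_abs_self (U x)], by linarith [neg_abs_le (U x)]⟩
  exact ⟨τ, abs_le.2 hτ, hτ0⟩

theorem eventually_exists_sub_smul_eq_zero (hU : HasStrictFDerivAt U U' x) (hUx : U x = 0)
    (hUe : U' e = 1) : ∀ᶠ y in 𝓝 x, ∃ τ : ℝ, |τ| ≤ 2 * |U y| ∧ U (y - τ • e) = 0 := by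
  have he : 0 < ‖e‖₊ := nnnorm_pos.2 fun h => by simp [h] at hUe
  obtain ⟨s, hs, happ⟩ := hU.approximates_deriv_on_nhds (c := (2 * ‖e‖₊)⁻¹) (Or.inr (by positivity))
  obtain ⟨r, hr, hrs⟩ := Metric.mem_nhds_iff.1 hs
  have hsmall : ∀ᶠ y in 𝓝 x, ‖y - x‖ + 2 * |U y| * ‖e‖ < r := by
    have hcont : ContinuousAt (fun y => ‖y - x‖ + 2 * |U y| * ‖e‖) x := by
      have := hU.continuousAt
      fun_prop
    exact hcont.eventually_lt continuousAt_const (by simpa [hUx] using hr)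
  filter_upwards [hsmall] with y hy
  refine exists_sub_smul_eq_zero happ hUe ?_ fun τ hτ => hrs ?_
  · rw [NNReal.coe_inv, NNReal.coe_mul, NNReal.coe_ofNat, coe_nnnorm]
    have he' : ‖e‖ ≠ 0 := (NNReal.coe_pos.2 he).ne'
    exact (by field_simp : (2 * ‖e‖)⁻¹ * ‖e‖ = 1 / 2).le
  · rw [mem_ball_iff_norm, sub_right_comm]
    refine (norm_sub_le _ _).trans_lt (lt_of_le_of_lt ?_ hy)
    rw [norm_smul]
    gcongr
    exact abs_le.2 hτ

theorem isLittleO_of_eq_zero_imp (hU : HasStrictFDerivAt U U' x)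
    (hF : HasStrictFDerivAt F F' x) (hUx : U x = 0) (hUe : U' e = 1) (hFe : F' e = 0)
    (hUF : ∀ᶠ y in 𝓝 x, U y = 0 → F y = 0) : F =o[𝓝 x] U := by
  obtain ⟨τ, hτ⟩ := (eventually_exists_sub_smul_eq_zero hU hUx hUe).choice
  have hτU : (fun y => τ y • e) =O[𝓝 x] U := Asymptotics.IsBigO.of_bound (2 * ‖e‖) <| by
    filter_upwards [hτ] with y hy
    rw [norm_smul, mul_right_comm]
    exact mul_le_mul_of_nonneg_right hy.1 (norm_nonneg e)
  have hfoot : Tendsto (fun y => y - τ y • e) (𝓝 x) (𝓝 x) := by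
    have hU0 : Tendsto U (𝓝 x) (𝓝 0) := hUx ▸ hU.continuousAt.tendsto
    simpa using tendsto_id.sub (hτU.trans_tendsto hU0)
  have hdiff := (hF.isLittleO.comp_tendsto (tendsto_id.prodMk_nhds hfoot)).trans_isBigO
    (hτU.congr_left fun y => (sub_sub_cancel y (τ y • e)).symm)
  refine hdiff.congr' ?_ EventuallyEq.rfl
  filter_upwards [hτ, hfoot.eventually hUF] with y hy hyF
  simp [hyF hy.2, hFe]

end StrictDerivative

/-- The part in `A` of the positivity domain together with its free boundary, where subsolutions
are required to be `C¹`. -/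
def regularDomain {n : ℕ} (u : 𝔼[n] → ℝ) (A : Set 𝔼[n]) : Set 𝔼[n] :=
  ({x | 0 < u x} ∩ A) ∪ (freeBoundary u ∩ A)

namespace IsSmoothCone

variable {k : ℕ} {u U v : 𝔼[k + 1] → ℝ} {W A : Set 𝔼[k + 1]} {x w : 𝔼[k + 1]}

theorem contDiffOn_gradient (h : IsSmoothCone u U W) :
    ContDiffOn ℝ (⊤ : ℕ∞) (gradient U) W :=
  (InnerProductSpace.toDual ℝ 𝔼[k + 1]).symm.contDiff.comp_contDiffOn
    (h.contDiffOn.fderiv_of_isOpen h.isOpen (by simp))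

theorem differentiableAt (h : IsSmoothCone u U W) (hx : x ∈ W) : DifferentiableAt ℝ U x :=
  (h.contDiffAt hx).differentiableAt (by simp)

theorem differentiableAt_gradient (h : IsSmoothCone u U W) (hx : x ∈ W) :
    DifferentiableAt ℝ (gradient U) x :=
  (h.contDiffOn_gradient.contDiffAt (h.isOpen.mem_nhds hx)).differentiableAt (by simp)

theorem eventuallyEq_extension (h : IsSmoothCone u U W) (hx : 0 < u x) : u =ᶠ[𝓝 x] U := by
  filter_upwards [h.isOpen_pos.mem_nhds hx] with y hy using (h.extension_eq_of_pos hy).symm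

theorem gradient_eq (h : IsSmoothCone u U W) (hx : 0 < u x) : gradient u x = gradient U x := by
  rw [gradient, gradient, (h.eventuallyEq_extension hx).fderiv_eq]

theorem inner_gradient_self (h : IsSmoothCone u U W) (hx : x ∈ freeBoundary u) :
    ⟪gradient U x, gradient U x⟫ = 1 := by
  rw [real_inner_self_eq_norm_sq, h.norm_gradient x hx, one_pow]

theorem eventually_pos_iff (h : IsSmoothCone u U W) (hx : x ∈ freeBoundary u) :
    ∀ᶠ y in 𝓝 x, 0 < u y ↔ 0 < U y := by
  obtain ⟨φ, hxφ, hφU, hφ⟩ := h.exists_isFlattening hx one_lt_two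
  filter_upwards [φ.open_source.mem_nhds hxφ] with y hy
  rw [hφ.pos_iff y hy, hφU]

theorem eventually_mem_freeBoundary (h : IsSmoothCone u U W) (hx : x ∈ freeBoundary u) :
    ∀ᶠ y in 𝓝 x, U y = 0 → y ∈ freeBoundary u := by
  obtain ⟨ε, hε, heq⟩ := h.exists_ball_inter_eq x hx
  filter_upwards [ball_mem_nhds x hε] with y hy hy0
  exact (heq.ge ⟨hy, hy0⟩ : y ∈ freeBoundary u ∩ ball x ε).1

theorem eventually_add_smul_pos (h : IsSmoothCone u U W) (hx : x ∈ freeBoundary u)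
    (hw : 0 < ⟪gradient U x, w⟫) : ∀ᶠ t in 𝓝[>] (0 : ℝ), 0 < u (x + t • w) := by
  have hline : HasDerivAt (fun t : ℝ => x + t • w) w 0 := by
    simpa using ((hasDerivAt_id (0 : ℝ)).smul_const w).const_add x
  have hcont : Tendsto (fun t : ℝ => x + t • w) (𝓝 0) (𝓝 x) := by
    simpa using hline.continuousAt.tendsto
  have hderiv : HasDerivAt (fun t : ℝ => U (x + t • w)) ⟪gradient U x, w⟫ 0 := by
    rw [inner_gradient_left]
    refine HasFDerivAt.comp_hasDerivAt (0 : ℝ) ?_ hline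
    simpa using (h.differentiableAt (h.freeBoundary_subset hx)).hasFDerivAt
  have hsign := eventually_nhdsWithin_sign_eq_of_deriv_pos (hderiv.deriv.symm ▸ hw)
    (by simpa using h.extension_eq_zero_of_mem hx)
  filter_upwards [hsign.filter_mono nhdsWithin_le_nhds,
    (hcont.eventually (h.eventually_pos_iff hx)).filter_mono nhdsWithin_le_nhds,
    self_mem_nhdsWithin] with t hsgn hiff ht
  rw [sub_zero, sign_pos (mem_Ioi.1 ht), sign_eq_one_iff] at hsgn
  exact hiff.2 hsgn

theorem eventually_add_smul_mem (h : IsSmoothCone u U W) (hA : IsOpen A)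
    (hx : x ∈ freeBoundary u ∩ A) (hw : 0 < ⟪gradient U x, w⟫) :
    ∀ᶠ t in 𝓝[>] (0 : ℝ), x + t • w ∈ {x | 0 < u x} ∩ A := by
  have hcont : Tendsto (fun t : ℝ => x + t • w) (𝓝 0) (𝓝 x) :=
    Continuous.tendsto' (by fun_prop) _ _ (by simp)
  exact (h.eventually_add_smul_pos hx.1 hw).and
    ((hcont.eventually (hA.mem_nhds hx.2)).filter_mono nhdsWithin_le_nhds)

theorem uniqueDiffOn_regularDomain (h : IsSmoothCone u U W) (hA : IsOpen A) :
    UniqueDiffOn ℝ (regularDomain u A) := by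
  rintro x (hx | hx)
  · exact ((h.isOpen_pos.inter hA).uniqueDiffWithinAt hx).mono subset_union_left
  · have hcone : {w | 0 < ⟪gradient U x, w⟫} ⊆ tangentConeAt ℝ (regularDomain u A) x :=
      fun w hw => mem_tangentConeAt_of_add_smul_mem (l := 𝓝[>] (0 : ℝ)) (c := id)
        (tendsto_id'.2 (nhdsWithin_mono _ fun t ht => (ne_of_gt ht)))
        ((h.eventually_add_smul_mem hA hx hw).mono fun t => Or.inl)
    have hopen : IsOpen {w : 𝔼[k + 1] | 0 < ⟪gradient U x, w⟫} :=
      isOpen_lt continuous_const (by fun_prop)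
    refine ⟨?_, subset_closure (Or.inr hx)⟩
    rw [Submodule.eq_top_of_nonempty_interior' _ ⟨gradient U x, mem_interior.2
      ⟨_, hcone.trans Submodule.subset_span, hopen, ?_⟩⟩]
    · exact dense_univ
    · rw [mem_ofPred_eq, h.inner_gradient_self hx.1]
      exact one_pos

theorem meanCurv_eq (h : IsSmoothCone u U W) (hx : x ∈ W) :
    meanCurv U x = -⟪fderiv ℝ (gradient U) x (gradient U x), gradient U x⟫ := by
  have hderiv := (h.differentiableAt_gradient hx).hasFDerivAt.inner ℝ
    (hasFDerivAt_const (-gradient U x) x)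
  rw [meanCurv, nuVec, hderiv.fderiv]
  simp

theorem continuousOn_meanCurv (h : IsSmoothCone u U W) : ContinuousOn (meanCurv U) W := by
  have hgrad := h.contDiffOn_gradient.continuousOn
  have hhess := h.contDiffOn_gradient.continuousOn_fderiv_of_isOpen h.isOpen (by simp)
  exact ((hhess.clm_apply hgrad).inner hgrad).neg.congr fun x hx => h.meanCurv_eq hx

theorem tendsto_one_sub_norm_gradient_sq_div (h : IsSmoothCone u U W) (hx : x ∈ freeBoundary u) :
    Tendsto (fun y => (1 - ‖gradient u y‖ ^ 2) / u y) (𝓝[{x | 0 < u x}] x)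
      (𝓝 (2 * meanCurv U x)) := by
  have hxW := h.freeBoundary_subset hx
  set F : 𝔼[k + 1] → ℝ := fun y => 1 - ‖gradient U y‖ ^ 2 - 2 * meanCurv U x * U y with hF
  have hU : ContDiffAt ℝ 1 U x := (h.contDiffAt hxW).of_le (by simp)
  have hgrad : ContDiffAt ℝ 1 (gradient U) x :=
    (h.contDiffOn_gradient.contDiffAt (h.isOpen.mem_nhds hxW)).of_le (by simp)
  have hF1 : ContDiffAt ℝ 1 F x :=
    (contDiffAt_const.sub (hgrad.norm_sq ℝ)).sub (contDiffAt_const.mul hU)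
  have hUe : fderiv ℝ U x (gradient U x) = 1 := by
    rw [← inner_gradient_left, h.inner_gradient_self hx]
  have hFe : fderiv ℝ F x (gradient U x) = 0 := by
    have hd := ((h.differentiableAt_gradient hxW).hasFDerivAt.norm_sq.const_sub 1).sub
      ((h.differentiableAt hxW).hasFDerivAt.const_mul (2 * meanCurv U x))
    rw [show fderiv ℝ F x = _ from hd.fderiv]
    simp [hUe, h.meanCurv_eq hxW]
  have hlittle : F =o[𝓝 x] U := by
    refine isLittleO_of_eq_zero_imp (hU.hasStrictFDerivAt one_ne_zero)
      (hF1.hasStrictFDerivAt one_ne_zero) (h.extension_eq_zero_of_mem hx) hUe hFe ?_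
    filter_upwards [h.eventually_mem_freeBoundary hx] with y hy hy0
    simp [hF, h.norm_gradient y (hy hy0), hy0]
  have hlim := ((hlittle.tendsto_div_nhds_zero).mono_left
    (nhdsWithin_le_nhds (s := {x | 0 < u x}))).add_const (2 * meanCurv U x)
  rw [zero_add] at hlim
  refine hlim.congr' ?_
  filter_upwards [self_mem_nhdsWithin] with y hy
  have hUy : 0 < U y := (h.extension_eq_of_pos hy).symm ▸ hy
  rw [h.gradient_eq hy, ← h.extension_eq_of_pos hy, hF]
  field_simp
  ring

theorem dNu_eq (h : IsSmoothCone u U W) (hA : IsOpen A)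
    (hv : ContDiffOn ℝ 1 v (regularDomain u A)) (hx : x ∈ freeBoundary u ∩ A) :
    dNu U v x = -fderivWithin ℝ v (regularDomain u A) x (gradient U x) := by
  have hxS : x ∈ regularDomain u A := Or.inr hx
  have hd := ((hv x hxS).differentiableWithinAt one_ne_zero).hasFDerivWithinAt
  obtain ⟨δ, hδ, hδS⟩ := mem_nhdsGT_iff_exists_Ioo_subset.1
    (h.eventually_add_smul_mem hA hx ((h.inner_gradient_self hx.1).symm ▸ one_pos))
  have hmaps : MapsTo (fun t : ℝ => x + t • nuVec U x) (Ioc (-δ) 0) (regularDomain u A) := by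
    intro t ht
    rcases ht.2.eq_or_lt with rfl | ht0
    · simpa using hxS
    · have := hδS (show -t ∈ Ioo 0 δ from ⟨neg_pos.2 ht0, neg_lt.1 ht.1⟩)
      rw [mem_ofPred_eq, neg_smul, ← smul_neg] at this
      exact Or.inl this
  have hline : HasDerivWithinAt (fun t : ℝ => x + t • nuVec U x) (nuVec U x) (Ioc (-δ) 0) 0 := by
    simpa using (((hasDerivAt_id (0 : ℝ)).smul_const (nuVec U x)).const_add x).hasDerivWithinAt
  have hcomp := HasFDerivWithinAt.comp_hasDerivWithinAt (0 : ℝ) (by simpa using hd) hline hmaps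
  have := (hcomp.mono_of_mem_nhdsWithin
    (Ioc_mem_nhdsLE (neg_lt_zero.2 hδ))).derivWithin (uniqueDiffWithinAt_Iic 0)
  rwa [nuVec, map_neg] at this

end IsSmoothCone

end BoundaryCalculus

section DivergenceTheorem

theorem integral_mul_fderiv_eq_neg_of_eq_zero_off_compact {E : Type*} [NormedAddCommGroup E]
    [NormedSpace ℝ E] [FiniteDimensional ℝ E] [MeasurableSpace E] [BorelSpace E] {μ : Measure E}
    [μ.IsAddHaarMeasure] {O C : Set E} (hO : IsOpen O) (hC : IsCompact C) (hCO : C ⊆ O)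
    {f ψ : E → ℝ} (hf : ContDiffOn ℝ 1 f O) (hψ : ContDiffOn ℝ 1 ψ O) (hψ0 : ∀ x ∉ C, ψ x = 0)
    (v : E) :
    Integrable (fun x => f x * fderiv ℝ ψ x v) μ ∧ Integrable (fun x => fderiv ℝ f x v * ψ x) μ ∧
      ∫ x, f x * fderiv ℝ ψ x v ∂μ = -∫ x, fderiv ℝ f x v * ψ x ∂μ := by
  have hf' := hf.continuousOn_fderiv_of_isOpen hO le_rfl
  have hψ' := hψ.continuousOn_fderiv_of_isOpen hO le_rfl
  have hψ_ev : ∀ x ∉ C, ψ =ᶠ[𝓝 x] fun _ => 0 := fun x hx =>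
    eventuallyEq_of_mem (hC.isClosed.isOpen_compl.mem_nhds hx) hψ0
  have hfderiv0 : ∀ x ∉ C, fderiv ℝ ψ x = 0 := fun x hx => by
    rw [(hψ_ev x hx).fderiv_eq, fderiv_fun_const, Pi.zero_apply]
  have hint : ∀ g : E → ℝ, ContinuousOn g O → (∀ x ∉ C, g x = 0) → Integrable g μ :=
    fun g hg hg0 => ((hg.mono hCO).integrableOn_compact hC).integrable_of_forall_notMem_eq_zero hg0
  have hint1 := hint (fun x => f x * fderiv ℝ ψ x v)
    (hf.continuousOn.mul (hψ'.clm_apply continuousOn_const)) fun x hx => by simp [hfderiv0 x hx]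
  have hint2 := hint (fun x => fderiv ℝ f x v * ψ x)
    ((hf'.clm_apply continuousOn_const).mul hψ.continuousOn) fun x hx => by simp [hψ0 x hx]
  have hint3 := hint (fun x => f x * ψ x) (hf.continuousOn.mul hψ.continuousOn)
    fun x hx => by simp [hψ0 x hx]
  have htsupport : tsupport ψ ⊆ C :=
    closure_minimal (fun x hx => not_imp_comm.1 (hψ0 x) hx) hC.isClosed
  refine ⟨hint1, hint2, integral_mul_fderiv_eq_neg_fderiv_mul_of_integrable hint2 hint1 hint3
    (fun x hx => ?_) fun x _ => ?_⟩
  · exact (hf.contDiffAt (hO.mem_nhds (hCO (htsupport hx)))).differentiableAt one_ne_zero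
  · by_cases hx : x ∈ C
    · exact (hψ.contDiffAt (hO.mem_nhds (hCO hx))).differentiableAt one_ne_zero
    · exact (differentiableAt_const 0).congr_of_eventuallyEq (hψ_ev x hx)

theorem inner_gradient_gradient_eq_sum {n : ℕ} (ψ w : 𝔼[n] → ℝ) (x : 𝔼[n]) :
    ⟪gradient ψ x, gradient w x⟫ = ∑ i, fderiv ℝ w x (EuclideanSpace.single i 1) *
      fderiv ℝ ψ x (EuclideanSpace.single i 1) := by
  rw [← (EuclideanSpace.basisFun (Fin n) ℝ).sum_inner_mul_inner]
  refine Finset.sum_congr rfl fun i _ => ?_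
  rw [EuclideanSpace.basisFun_apply, inner_gradient_left, real_inner_comm, inner_gradient_left,
    mul_comm]

theorem setIntegral_inner_gradient_eq_neg_lap {n : ℕ} {O C : Set 𝔼[n]} (hO : IsOpen O)
    (hC : IsCompact C) (hCO : C ⊆ O) {w ψ : 𝔼[n] → ℝ} (hw : ContDiffOn ℝ 2 w O)
    (hψ : ContDiffOn ℝ 1 ψ O) (hψ0 : ∀ x ∈ O, x ∉ C → ψ x = 0) :
    IntegrableOn (fun x => ⟪gradient ψ x, gradient w x⟫) O ∧
      IntegrableOn (fun x => lap w x * ψ x) O ∧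
      ∫ x in O, ⟪gradient ψ x, gradient w x⟫ = -∫ x in O, lap w x * ψ x := by
  have hψO : ∀ x ∈ O, O.indicator ψ =ᶠ[𝓝 x] ψ := fun x hx =>
    eventuallyEq_of_mem (hO.mem_nhds hx) fun y => indicator_of_mem (f := ψ)
  have hψC : ∀ x ∉ C, O.indicator ψ x = 0 := fun x hx =>
    indicator_apply_eq_zero.2 fun hxO => hψ0 x hxO hx
  have hcoord (i : Fin n) := integral_mul_fderiv_eq_neg_of_eq_zero_off_compact (μ := volume)
    hO hC hCO ((hw.fderiv_of_isOpen hO one_add_one_eq_two.le).clm_apply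
      (contDiffOn_const (c := EuclideanSpace.single i 1)))
    (hψ.congr fun x hx => indicator_of_mem hx ψ) hψC (EuclideanSpace.single i 1)
  have heq1 : EqOn (fun x => ⟪gradient ψ x, gradient w x⟫)
      (fun x => ∑ i, fderiv ℝ w x (EuclideanSpace.single i 1) *
        fderiv ℝ (O.indicator ψ) x (EuclideanSpace.single i 1)) O := fun x hx => by
    simp only [inner_gradient_gradient_eq_sum, (hψO x hx).fderiv_eq]
  have heq2 : EqOn (fun x => lap w x * ψ x) (fun x => ∑ i, fderiv ℝ (fun y => fderiv ℝ w y
      (EuclideanSpace.single i 1)) x (EuclideanSpace.single i 1) * O.indicator ψ x) O :=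
    fun x hx => by simp only [lap, Finset.sum_mul, indicator_of_mem hx ψ]
  have hzero : ∀ x ∉ O, O.indicator ψ x = 0 ∧ fderiv ℝ (O.indicator ψ) x = 0 := fun x hx => by
    have hxC : x ∉ C := fun h => hx (hCO h)
    refine ⟨hψC x hxC, ?_⟩
    rw [(eventuallyEq_of_mem (hC.isClosed.isOpen_compl.mem_nhds hxC) hψC).fderiv_eq,
      fderiv_fun_const, Pi.zero_apply]
  refine ⟨(integrable_finsetSum _ fun i _ => (hcoord i).1).integrableOn.congr_fun heq1.symm
    hO.measurableSet, (integrable_finsetSum _ fun i _ => (hcoord i).2.1).integrableOn.congr_fun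
    heq2.symm hO.measurableSet, ?_⟩
  rw [setIntegral_congr_fun hO.measurableSet heq1, setIntegral_congr_fun hO.measurableSet heq2,
    setIntegral_eq_integral_of_forall_compl_eq_zero fun x hx => by simp [hzero x hx],
    setIntegral_eq_integral_of_forall_compl_eq_zero fun x hx => by simp [hzero x hx],
    integral_finsetSum _ fun i _ => (hcoord i).1, integral_finsetSum _ fun i _ => (hcoord i).2.1,
    ← Finset.sum_neg_distrib]
  exact Finset.sum_congr rfl fun i _ => (hcoord i).2.2

end DivergenceTheorem

section SoftTruncation

/-- A `C¹` approximation of the positive part of `t`: it vanishes for `t ≤ ε` and has slope `1` for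
`t ≥ 2 * ε`. -/
def softPosPart (ε t : ℝ) : ℝ := (max (t - ε) 0 ^ 2 - max (t - 2 * ε) 0 ^ 2) / (2 * ε)

/-- The derivative of `softPosPart ε`, a piecewise linear step from `0` to `1`. -/
def softStep (ε t : ℝ) : ℝ := (max (t - ε) 0 - max (t - 2 * ε) 0) / ε

variable {ε t : ℝ}

theorem hasDerivAt_max_sub_zero_sq (a t : ℝ) :
    HasDerivAt (fun t : ℝ => max (t - a) 0 ^ 2) (2 * max (t - a) 0) t := by
  refine hasDerivAt_iff_isLittleO.2 (Asymptotics.IsBigO.trans_isLittleO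
    (g := fun s => (s - t) ^ 2)
    (Asymptotics.IsBigO.of_bound 1 (Eventually.of_forall fun s => ?_)) ?_)
  · rw [smul_eq_mul, Real.norm_eq_abs, Real.norm_of_nonneg (sq_nonneg _), one_mul, abs_le]
    constructor <;> rcases max_cases (s - a) 0 with h | h <;>
      rcases max_cases (t - a) 0 with h' | h' <;> rw [h.1, h'.1] <;> nlinarith
  · simpa [sq] using (Asymptotics.isBigO_refl (fun s : ℝ => s - t) (𝓝 t)).mul_isLittleO
      (g₂ := fun _ => (1 : ℝ)) ((Asymptotics.isLittleO_one_iff ℝ).2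
        (Continuous.tendsto' (by fun_prop) t 0 (sub_self t) : Tendsto (fun s => s - t) _ _))

theorem hasDerivAt_softPosPart (ε t : ℝ) : HasDerivAt (softPosPart ε) (softStep ε t) t := by
  have hderiv := ((hasDerivAt_max_sub_zero_sq ε t).sub
    (hasDerivAt_max_sub_zero_sq (2 * ε) t)).div_const (2 * ε)
  rwa [← mul_sub, mul_div_mul_left _ _ two_ne_zero] at hderiv

theorem continuous_softStep (ε : ℝ) : Continuous (softStep ε) := by
  unfold softStep
  fun_prop

theorem contDiff_softPosPart (ε : ℝ) : ContDiff ℝ 1 (softPosPart ε) := by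
  rw [contDiff_one_iff_deriv, funext fun t => (hasDerivAt_softPosPart ε t).deriv]
  exact ⟨fun t => (hasDerivAt_softPosPart ε t).differentiableAt, continuous_softStep ε⟩

theorem softPosPart_of_le (hε : 0 ≤ ε) (ht : t ≤ ε) : softPosPart ε t = 0 := by
  rw [softPosPart, max_eq_right (by linarith), max_eq_right (by linarith), sub_self, zero_div]

theorem softStep_of_le (hε : 0 ≤ ε) (ht : t ≤ ε) : softStep ε t = 0 := by
  rw [softStep, max_eq_right (by linarith), max_eq_right (by linarith), sub_self, zero_div]

theorem softStep_of_ge (hε : 0 < ε) (ht : 2 * ε ≤ t) : softStep ε t = 1 := by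
  rw [softStep, max_eq_left (by linarith), max_eq_left (by linarith)]
  field_simp
  ring

theorem softStep_nonneg (hε : 0 ≤ ε) (t : ℝ) : 0 ≤ softStep ε t :=
  div_nonneg (sub_nonneg.2 (max_le_max_right 0 (by linarith))) hε

theorem softStep_le_one (hε : 0 < ε) (t : ℝ) : softStep ε t ≤ 1 := by
  rw [softStep, div_le_one hε]
  rcases max_cases (t - ε) 0 with h | h <;> rcases max_cases (t - 2 * ε) 0 with h' | h' <;>
    rw [h.1, h'.1] <;> linarith

theorem softPosPart_nonneg (hε : 0 ≤ ε) (t : ℝ) : 0 ≤ softPosPart ε t :=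
  div_nonneg (sub_nonneg.2 (pow_le_pow_left₀ (le_max_right _ _)
    (max_le_max_right 0 (by linarith)) 2)) (by positivity)

theorem softPosPart_le (hε : 0 < ε) (ht : 0 ≤ t) : softPosPart ε t ≤ t := by
  rw [softPosPart, div_le_iff₀ (by positivity)]
  rcases max_cases (t - ε) 0 with h | h <;> rcases max_cases (t - 2 * ε) 0 with h' | h' <;>
    rw [h.1, h'.1] <;> nlinarith

theorem sub_le_softPosPart (hε : 0 < ε) (t : ℝ) : t - 2 * ε ≤ softPosPart ε t := by
  rw [softPosPart, le_div_iff₀ (by positivity)]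
  rcases max_cases (t - ε) 0 with h | h <;> rcases max_cases (t - 2 * ε) 0 with h' | h' <;>
    rw [h.1, h'.1] <;> nlinarith

/-- A `C¹` approximation of `min a b` for `a, b ≥ 0` that vanishes where `a ≤ 3 * τ` or `b ≤ τ`. -/
def softMin (τ a b : ℝ) : ℝ := softPosPart (3 * τ) (a - softPosPart τ (a - b))

/-- The partial derivative of `softMin τ a b` in `a`. -/
def softMinLeft (τ a b : ℝ) : ℝ :=
  softStep (3 * τ) (a - softPosPart τ (a - b)) * (1 - softStep τ (a - b))

/-- The partial derivative of `softMin τ a b` in `b`. -/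
def softMinRight (τ a b : ℝ) : ℝ :=
  softStep (3 * τ) (a - softPosPart τ (a - b)) * softStep τ (a - b)

variable {τ a b : ℝ}

theorem softMin_of_left_le (hτ : 0 ≤ τ) (ha : a ≤ 3 * τ) : softMin τ a b = 0 :=
  softPosPart_of_le (by positivity) (by linarith [softPosPart_nonneg hτ (a - b)])

theorem softMin_of_right_le (hτ : 0 < τ) (hb : b ≤ τ) : softMin τ a b = 0 :=
  softPosPart_of_le (by positivity) (by linarith [sub_le_softPosPart hτ (a - b)])

theorem abs_softMinLeft_le_one (hτ : 0 < τ) : |softMinLeft τ a b| ≤ 1 := by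
  have hτ3 : 0 < 3 * τ := by positivity
  have h0 := softStep_nonneg hτ.le (a - b)
  have h1 := softStep_le_one hτ (a - b)
  rw [softMinLeft, abs_mul, abs_of_nonneg (softStep_nonneg hτ3.le _), abs_of_nonneg (by linarith)]
  exact mul_le_one₀ (softStep_le_one hτ3 _) (by linarith) (by linarith)

theorem abs_softMinRight_le_one (hτ : 0 < τ) : |softMinRight τ a b| ≤ 1 := by
  have hτ3 : 0 < 3 * τ := by positivity
  rw [softMinRight, abs_mul, abs_of_nonneg (softStep_nonneg hτ3.le _),
    abs_of_nonneg (softStep_nonneg hτ.le _)]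
  exact mul_le_one₀ (softStep_le_one hτ3 _) (softStep_nonneg hτ.le _) (softStep_le_one hτ _)

theorem softMinRight_of_le (hτ : 0 ≤ τ) (hab : a ≤ b) : softMinRight τ a b = 0 := by
  rw [softMinRight, softStep_of_le hτ (by linarith), mul_zero]

theorem eventually_softMinLeft_of_le (ha : 0 < a) (hab : a ≤ b) :
    ∀ᶠ τ in 𝓝[>] (0 : ℝ), softMinLeft τ a b = 1 := by
  filter_upwards [Ioo_mem_nhdsGT (by positivity : 0 < a / 6)] with τ hτ
  have hτ0 := hτ.1.le
  rw [softMinLeft, softPosPart_of_le hτ0 (by linarith), softStep_of_le hτ0 (by linarith),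
    softStep_of_ge (mul_pos three_pos hτ.1) (by linarith [hτ.2]), sub_zero, mul_one]

theorem eventually_softMin_deriv_of_lt (hb : 0 < b) (hab : b < a) :
    ∀ᶠ τ in 𝓝[>] (0 : ℝ), softMinLeft τ a b = 0 ∧ softMinRight τ a b = 1 := by
  filter_upwards [Ioo_mem_nhdsGT (half_pos (sub_pos.2 hab)),
    Ioo_mem_nhdsGT (by positivity : 0 < b / 6)] with τ hτ hτb
  have hle := softPosPart_le hτ.1 (sub_pos.2 hab).le
  rw [softMinLeft, softMinRight, softStep_of_ge hτ.1 (by linarith [hτ.2]),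
    softStep_of_ge (mul_pos three_pos hτ.1) (by linarith [hτb.2]), sub_self, mul_zero, mul_one]
  exact ⟨rfl, rfl⟩

theorem contDiffOn_softMin {E : Type*} [NormedAddCommGroup E] [NormedSpace ℝ E] {f g : E → ℝ}
    {s : Set E} (hf : ContDiffOn ℝ 1 f s) (hg : ContDiffOn ℝ 1 g s) (τ : ℝ) :
    ContDiffOn ℝ 1 (fun x => softMin τ (f x) (g x)) s :=
  (contDiff_softPosPart _).comp_contDiffOn
    (hf.sub ((contDiff_softPosPart τ).comp_contDiffOn (hf.sub hg)))

theorem hasGradientAt_softMin {n : ℕ} {f g : 𝔼[n] → ℝ} {f' g' x : 𝔼[n]} (hf : HasGradientAt f f' x)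
    (hg : HasGradientAt g g' x) (τ : ℝ) : HasGradientAt (fun y => softMin τ (f y) (g y))
      (softMinLeft τ (f x) (g x) • f' + softMinRight τ (f x) (g x) • g') x := by
  have hinner := (hasDerivAt_softPosPart τ (f x - g x)).comp_hasFDerivAt x
    (hf.hasFDerivAt.sub hg.hasFDerivAt)
  have houter := (hasDerivAt_softPosPart (3 * τ) _).comp_hasFDerivAt x
    (hf.hasFDerivAt.sub hinner)
  refine HasFDerivAt.congr_fderiv houter ?_
  simp only [softMinLeft, softMinRight, map_add, map_smul, Pi.sub_apply, Function.comp_apply]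
  module

end SoftTruncation

section TestFunction

theorem norm_gradient_le_of_lipschitzWith {n : ℕ} {f : 𝔼[n] → ℝ} {K : ℝ≥0} (hf : LipschitzWith K f)
    (x : 𝔼[n]) : ‖gradient f x‖ ≤ K := by
  rw [gradient, LinearIsometryEquiv.norm_map]
  exact norm_fderiv_le_of_lipschitz ℝ hf

theorem measurable_gradient {n : ℕ} (f : 𝔼[n] → ℝ) : Measurable (gradient f) :=
  (InnerProductSpace.toDual ℝ 𝔼[n]).symm.continuous.measurable.comp (measurable_fderiv ℝ f)

theorem exists_lipschitzWith_of_homogeneous {E : Type*} [SeminormedAddCommGroup E]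
    [NormedSpace ℝ E] {f : E → ℝ} (hf : LocallyLipschitz f)
    (hhom : ∀ t : ℝ, 0 < t → ∀ x, f (t • x) = t * f x) : ∃ K : ℝ≥0, LipschitzWith K f := by
  obtain ⟨K, s, hs, hK⟩ := hf 0
  have hshrink : ∀ x : E, ∀ᶠ r in 𝓝[>] (0 : ℝ), r • x ∈ s := fun x =>
    ((Continuous.tendsto' (by fun_prop) 0 0 (zero_smul ℝ x)).mono_left
      nhdsWithin_le_nhds).eventually hs
  refine ⟨K, LipschitzWith.of_dist_le_mul fun x y => ?_⟩
  obtain ⟨r, hx, hy, hr⟩ :=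
    ((hshrink x).and ((hshrink y).and self_mem_nhdsWithin)).exists
  have hdist := hK.dist_le_mul _ hx _ hy
  rw [hhom r hr, hhom r hr, Real.dist_eq, ← mul_sub, abs_mul, ← Real.dist_eq, dist_smul₀,
    Real.norm_eq_abs, mul_left_comm] at hdist
  exact le_of_mul_le_mul_left hdist (abs_pos.2 (ne_of_gt hr))

theorem measurable_of_continuousOn_of_eq_zero {α F : Type*} [TopologicalSpace α] [MeasurableSpace α]
    [OpensMeasurableSpace α] [TopologicalSpace F] [Zero F] [MeasurableSpace F] [BorelSpace F]
    {f : α → F} {s : Set α} (hs : MeasurableSet s) (hf : ContinuousOn f s)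
    (hf0 : ∀ x ∉ s, f x = 0) : Measurable f := by
  classical
  have heq : s.piecewise f 0 = f := by
    rw [piecewise_eq_indicator, indicator_eq_self]
    exact fun x hx => not_imp_comm.1 (hf0 x) hx
  exact heq ▸ hf.measurable_piecewise (g := 0) continuousOn_const hs

theorem exists_norm_le_of_continuousOn_of_eq_zero {α F : Type*} [TopologicalSpace α]
    [SeminormedAddCommGroup F] {f : α → F} {s : Set α} (hs : IsCompact s) (hf : ContinuousOn f s)
    (hf0 : ∀ x ∉ s, f x = 0) : ∃ M : ℝ≥0, ∀ x, ‖f x‖ ≤ M := by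
  obtain ⟨M, hM⟩ := hs.exists_bound_of_continuousOn hf
  refine ⟨M.toNNReal, fun x => ?_⟩
  by_cases hx : x ∈ s
  · exact (hM x hx).trans (Real.le_coe_toNNReal M)
  · rw [hf0 x hx, norm_zero]
    exact NNReal.coe_nonneg _

/-- `φ ≥ 0` is a test function on the positivity domain of `u`: it is supported in a compact set
`C` that may touch the free boundary but avoids the vertex, and it is `C¹` up to the free boundary,
`G` being the continuous extension of its gradient. -/
structure IsTestFunction {n : ℕ} (u φ : 𝔼[n] → ℝ) (G : 𝔼[n] → 𝔼[n]) (C : Set 𝔼[n]) : Prop where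
  isCompact : IsCompact C
  zero_notMem : (0 : 𝔼[n]) ∉ C
  subset : C ⊆ {x | 0 < u x} ∪ freeBoundary u
  eq_zero : ∀ x ∉ C, φ x = 0
  grad_eq_zero : ∀ x ∉ C, G x = 0
  nonneg : ∀ x, 0 ≤ φ x
  hasGradientAt : ∀ x, 0 < u x → HasGradientAt φ (G x) x
  continuousOn : ContinuousOn φ ({x | 0 < u x} ∪ freeBoundary u)
  continuousOn_grad : ContinuousOn G ({x | 0 < u x} ∪ freeBoundary u)

namespace IsTestFunction

variable {n : ℕ} {u φ : 𝔼[n] → ℝ} {G : 𝔼[n] → 𝔼[n]} {C : Set 𝔼[n]} {x : 𝔼[n]}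

theorem measurable (ht : IsTestFunction u φ G C) : Measurable φ :=
  measurable_of_continuousOn_of_eq_zero ht.isCompact.measurableSet
    (ht.continuousOn.mono ht.subset) ht.eq_zero

theorem measurable_grad (ht : IsTestFunction u φ G C) : Measurable G :=
  measurable_of_continuousOn_of_eq_zero ht.isCompact.measurableSet
    (ht.continuousOn_grad.mono ht.subset) ht.grad_eq_zero

theorem exists_norm_le (ht : IsTestFunction u φ G C) : ∃ M : ℝ≥0, ∀ x, ‖φ x‖ ≤ M :=
  exists_norm_le_of_continuousOn_of_eq_zero ht.isCompact (ht.continuousOn.mono ht.subset) ht.eq_zero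

theorem exists_norm_grad_le (ht : IsTestFunction u φ G C) : ∃ M : ℝ≥0, ∀ x, ‖G x‖ ≤ M :=
  exists_norm_le_of_continuousOn_of_eq_zero ht.isCompact (ht.continuousOn_grad.mono ht.subset)
    ht.grad_eq_zero

theorem grad_eq_zero_of_eq_zero (ht : IsTestFunction u φ G C) (hx : 0 < u x) (hφ : φ x = 0) :
    G x = 0 := by
  have hmin : IsLocalMin φ x := Eventually.of_forall fun y => hφ ▸ ht.nonneg y
  simpa using hmin.hasFDerivAt_eq_zero (ht.hasGradientAt x hx).hasFDerivAt

theorem contDiffOn (ht : IsTestFunction u φ G C) (hu : IsOpen {x | 0 < u x}) :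
    ContDiffOn ℝ 1 φ {x | 0 < u x} := by
  rw [show (1 : WithTop ℕ∞) = 0 + 1 from (zero_add 1).symm,
    contDiffOn_succ_iff_fderiv_of_isOpen hu, contDiffOn_zero]
  refine ⟨fun x hx => (ht.hasGradientAt x hx).differentiableAt.differentiableWithinAt, by simp,
    ContinuousOn.congr ?_ fun x hx => (ht.hasGradientAt x hx).hasFDerivAt.fderiv⟩
  exact (InnerProductSpace.toDual ℝ 𝔼[n]).continuous.comp_continuousOn
    (ht.continuousOn_grad.mono subset_union_left)

theorem const_smul (ht : IsTestFunction u φ G C) {s : ℝ} (hs : 0 ≤ s) :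
    IsTestFunction u (fun x => s * φ x) (fun x => s • G x) C where
  isCompact := ht.isCompact
  zero_notMem := ht.zero_notMem
  subset := ht.subset
  eq_zero x hx := by rw [ht.eq_zero x hx, mul_zero]
  grad_eq_zero x hx := by rw [ht.grad_eq_zero x hx, smul_zero]
  nonneg x := mul_nonneg hs (ht.nonneg x)
  hasGradientAt x hx := by
    rw [hasGradientAt_iff_hasFDerivAt, map_smul]
    exact (ht.hasGradientAt x hx).hasFDerivAt.const_mul s
  continuousOn := continuousOn_const.mul ht.continuousOn
  continuousOn_grad := ht.continuousOn_grad.const_smul s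

end IsTestFunction

namespace IsSmoothCone

variable {k : ℕ} {u U φ : 𝔼[k + 1] → ℝ} {W C : Set 𝔼[k + 1]} {G : 𝔼[k + 1] → 𝔼[k + 1]}
  {x : 𝔼[k + 1]} {τ : ℝ}

theorem exists_lipschitzWith (h : IsSmoothCone u U W) : ∃ K : ℝ≥0, LipschitzWith K u :=
  exists_lipschitzWith_of_homogeneous h.locallyLipschitz h.homogeneous

theorem contDiffOn_pos (h : IsSmoothCone u U W) : ContDiffOn ℝ (⊤ : ℕ∞) u {x | 0 < u x} :=
  (h.contDiffOn.mono h.pos_subset).congr fun _ hx => (h.extension_eq_of_pos hx).symm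

theorem differentiableAt_of_pos (h : IsSmoothCone u U W) (hx : 0 < u x) : DifferentiableAt ℝ u x :=
  (h.contDiffOn_pos.contDiffAt (h.isOpen_pos.mem_nhds hx)).differentiableAt (by simp)

theorem setIntegral_softMin_eq_zero (h : IsSmoothCone u U W) (ht : IsTestFunction u φ G C)
    (hτ : 0 < τ) :
    IntegrableOn (fun x => softMinLeft τ (φ x) (u x) * ⟪G x, gradient u x⟫ +
      softMinRight τ (φ x) (u x) * ‖gradient u x‖ ^ 2) {x | 0 < u x} ∧
    ∫ x in {x | 0 < u x}, (softMinLeft τ (φ x) (u x) * ⟪G x, gradient u x⟫ +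
      softMinRight τ (φ x) (u x) * ‖gradient u x‖ ^ 2) = 0 := by
  have hu1 : ContDiffOn ℝ 1 u {x | 0 < u x} := h.contDiffOn_pos.of_le (by simp)
  have hu2 : ContDiffOn ℝ 2 u {x | 0 < u x} :=
    h.contDiffOn_pos.of_le (WithTop.coe_le_coe.2 (le_top : (2 : ℕ∞) ≤ ⊤))
  have hcompact : IsCompact (C ∩ {x | τ ≤ u x}) :=
    ht.isCompact.inter_right (isClosed_le continuous_const h.continuous)
  have hzero : ∀ x ∈ {x | 0 < u x}, x ∉ C ∩ {x | τ ≤ u x} → softMin τ (φ x) (u x) = 0 := by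
    intro x _ hx
    by_cases hxC : x ∈ C
    · exact softMin_of_right_le hτ (not_le.1 fun hle => hx ⟨hxC, hle⟩).le
    · exact softMin_of_left_le hτ.le ((ht.eq_zero x hxC).trans_le (by positivity))
  obtain ⟨hint, -, heq⟩ := setIntegral_inner_gradient_eq_neg_lap h.isOpen_pos hcompact
    (fun x hx => hτ.trans_le hx.2) hu2
    (contDiffOn_softMin (ht.contDiffOn h.isOpen_pos) hu1 τ) hzero
  have hcongr : EqOn (fun x => ⟪gradient (fun y => softMin τ (φ y) (u y)) x, gradient u x⟫)
      (fun x => softMinLeft τ (φ x) (u x) * ⟪G x, gradient u x⟫ +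
        softMinRight τ (φ x) (u x) * ‖gradient u x‖ ^ 2) {x | 0 < u x} := fun x hx => by
    simp only [(hasGradientAt_softMin (ht.hasGradientAt x hx)
      (h.differentiableAt_of_pos hx).hasGradientAt τ).gradient, inner_add_left,
      real_inner_smul_left, real_inner_self_eq_norm_sq]
  rw [setIntegral_congr_fun h.isOpen_pos.measurableSet hcongr] at heq
  refine ⟨hint.congr_fun hcongr h.isOpen_pos.measurableSet, heq.trans (neg_eq_zero.2 ?_)⟩
  exact setIntegral_eq_zero_of_forall_eq_zero fun x hx => by rw [h.lap_eq_zero x hx, zero_mul]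

theorem tendsto_softMin_deriv (ht : IsTestFunction u φ G C) (hx : 0 < u x) :
    Tendsto (fun τ => softMinLeft τ (φ x) (u x) * ⟪G x, gradient u x⟫ +
      softMinRight τ (φ x) (u x) * ‖gradient u x‖ ^ 2) (𝓝[>] 0)
      (𝓝 (if u x < φ x then ‖gradient u x‖ ^ 2 else ⟪G x, gradient u x⟫)) := by
  refine tendsto_const_nhds.congr' ?_
  split_ifs with hlt
  · filter_upwards [eventually_softMin_deriv_of_lt hx hlt] with τ hτ
    rw [hτ.1, hτ.2, zero_mul, zero_add, one_mul]
  · rw [not_lt] at hlt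
    rcases (ht.nonneg x).eq_or_lt with h0 | h0
    · filter_upwards [self_mem_nhdsWithin] with τ hτ
      rw [softMinRight_of_le (mem_Ioi.1 hτ).le hlt, ht.grad_eq_zero_of_eq_zero hx h0.symm,
        inner_zero_left, mul_zero, zero_mul, zero_add]
    · filter_upwards [eventually_softMinLeft_of_le h0 hlt, self_mem_nhdsWithin] with τ hτ hτ0
      rw [hτ, softMinRight_of_le (mem_Ioi.1 hτ0).le hlt, one_mul, zero_mul, add_zero]

theorem norm_softMin_deriv_le (ht : IsTestFunction u φ G C) {K M : ℝ≥0} (hK : LipschitzWith K u)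
    (hM : ∀ x, ‖G x‖ ≤ M) (hτ : 0 < τ) (hx : 0 < u x) :
    ‖softMinLeft τ (φ x) (u x) * ⟪G x, gradient u x⟫ +
      softMinRight τ (φ x) (u x) * ‖gradient u x‖ ^ 2‖ ≤
        C.indicator (fun _ => (M * K + K ^ 2 : ℝ)) x := by
  have hgrad := norm_gradient_le_of_lipschitzWith hK x
  by_cases hxC : x ∈ C
  · rw [indicator_of_mem hxC]
    refine (norm_add_le _ _).trans (add_le_add ?_ ?_)
    · rw [norm_mul, ← one_mul (M * K : ℝ)]
      exact mul_le_mul (abs_softMinLeft_le_one hτ) ((norm_inner_le_norm _ _).trans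
        (mul_le_mul (hM x) hgrad (norm_nonneg _) M.2)) (norm_nonneg _) zero_le_one
    · rw [norm_mul, norm_pow, norm_norm, ← one_mul (K ^ 2 : ℝ)]
      exact mul_le_mul (abs_softMinRight_le_one hτ) (pow_le_pow_left₀ (norm_nonneg _) hgrad 2)
        (by positivity) zero_le_one
  · rw [softMinRight_of_le hτ.le ((ht.eq_zero x hxC).trans_le hx.le), ht.grad_eq_zero x hxC,
      inner_zero_left, mul_zero, zero_mul, zero_add, norm_zero, indicator_of_notMem hxC]

-- Test the harmonicity of `u` against `softMin τ φ u ≈ min φ u` and let `τ → 0`.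
theorem setIntegral_gradient_min_eq_zero (h : IsSmoothCone u U W) (ht : IsTestFunction u φ G C) :
    ∫ x in {x | 0 < u x}, (if u x < φ x then ‖gradient u x‖ ^ 2 else ⟪G x, gradient u x⟫) = 0 := by
  obtain ⟨K, hK⟩ := h.exists_lipschitzWith
  obtain ⟨M, hM⟩ := ht.exists_norm_grad_le
  have hpos := h.isOpen_pos.measurableSet
  refine tendsto_nhds_unique (tendsto_integral_filter_of_dominated_convergence
    (C.indicator fun _ => (M * K + K ^ 2 : ℝ)) ?_ ?_ ?_
    (ae_restrict_of_forall_mem hpos fun x hx => tendsto_softMin_deriv ht hx))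
    (tendsto_const_nhds.congr' ?_)
  · filter_upwards [self_mem_nhdsWithin] with τ hτ
    exact (h.setIntegral_softMin_eq_zero ht hτ).1.aestronglyMeasurable
  · filter_upwards [self_mem_nhdsWithin] with τ hτ
    exact ae_restrict_of_forall_mem hpos fun x hx => norm_softMin_deriv_le ht hK hM hτ hx
  · exact ((integrable_indicator_iff ht.isCompact.measurableSet).2
      (integrableOn_const ht.isCompact.measure_lt_top.ne)).integrableOn
  · filter_upwards [self_mem_nhdsWithin] with τ hτ
    exact (h.setIntegral_softMin_eq_zero ht hτ).2.symm

end IsSmoothCone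

end TestFunction

section Competitor

variable {k : ℕ} {u U φ : 𝔼[k + 1] → ℝ} {W C : Set 𝔼[k + 1]} {G : 𝔼[k + 1] → 𝔼[k + 1]}
  {x : 𝔼[k + 1]} {s : ℝ}

theorem dist_le_mul_of_segment_meets_zero {E : Type*} [SeminormedAddCommGroup E] [NormedSpace ℝ E]
    {f w : E → ℝ} {K : ℝ≥0} {x y z : E} (hf : LipschitzWith K f) (hw : ∀ x, w x ∈ Icc 0 (f x))
    (hz : z ∈ segment ℝ x y) (hz0 : f z = 0) : dist (w x) (w y) ≤ K * dist x y := by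
  have hle (p : E) : w p ≤ K * dist p z := by
    have := hf.dist_le_mul p z
    rw [hz0, Real.dist_0_eq_abs] at this
    exact (hw p).2.trans ((le_abs_self _).trans this)
  calc
    dist (w x) (w y) ≤ w x + w y := by
      rw [Real.dist_eq, abs_le]
      constructor <;> linarith [(hw x).1, (hw y).1]
    _ ≤ K * dist x z + K * dist z y := add_le_add (hle x) (dist_comm y z ▸ hle y)
    _ = K * dist x y := by rw [← mul_add, dist_add_dist_of_mem_segment hz]

theorem IsTestFunction.mem_of_pos (ht : IsTestFunction u φ G C) (hx : 0 < φ x) : x ∈ C := by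
  by_contra hxC
  exact hx.ne' (ht.eq_zero x hxC)

theorem IsSmoothCone.exists_lipschitzWith_max_sub (h : IsSmoothCone u U W)
    (ht : IsTestFunction u φ G C) :
    ∃ K : ℝ≥0, LipschitzWith K fun x => max (u x - φ x) 0 := by
  obtain ⟨K, hK⟩ := h.exists_lipschitzWith
  obtain ⟨M, hM⟩ := ht.exists_norm_grad_le
  refine ⟨K + M, LipschitzWith.of_dist_le_mul fun x y => ?_⟩
  by_cases hseg : ∀ z ∈ segment ℝ x y, 0 < u z
  · have hbound : ‖(u y - φ y) - (u x - φ x)‖ ≤ (K + M) * ‖y - x‖ :=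
      (convex_segment x y).norm_image_sub_le_of_norm_hasFDerivWithin_le (f := fun z => u z - φ z)
        (fun z hz => ((h.differentiableAt_of_pos (hseg z hz)).hasFDerivAt.sub
          (ht.hasGradientAt z (hseg z hz)).hasFDerivAt).hasFDerivWithinAt)
        (fun z _ => (norm_sub_le _ _).trans (add_le_add (norm_fderiv_le_of_lipschitz ℝ hK)
          ((LinearIsometryEquiv.norm_map _ _).trans_le (hM z))))
        (left_mem_segment ℝ x y) (right_mem_segment ℝ x y)
    rw [← dist_eq_norm, ← dist_eq_norm, dist_comm, dist_comm y] at hbound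
    exact (abs_max_sub_max_le_abs _ _ _).trans hbound
  · push Not at hseg
    obtain ⟨z, hz, hz0⟩ := hseg
    have hbounds (p) : max (u p - φ p) 0 ∈ Icc 0 (u p) :=
      ⟨le_max_right _ _, max_le (sub_le_self _ (ht.nonneg p)) (h.nonneg p)⟩
    exact (dist_le_mul_of_segment_meets_zero hK hbounds hz (hz0.antisymm (h.nonneg z))).trans
      (mul_le_mul_of_nonneg_right (by simp) dist_nonneg)

section LayerWeight

/-- The quotient `(1 - |∇u|²) / u`, continued to the free boundary by its limit `2H`. -/
def boundaryQuotient (u U : 𝔼[k + 1] → ℝ) (x : 𝔼[k + 1]) : ℝ :=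
  if 0 < u x then (1 - ‖gradient u x‖ ^ 2) / u x else 2 * meanCurv U x

theorem IsSmoothCone.boundaryQuotient_eq (h : IsSmoothCone u U W) (hx : x ∈ freeBoundary u) :
    boundaryQuotient u U x = 2 * meanCurv U x :=
  if_neg (h.eq_zero_of_mem hx).not_gt

theorem IsSmoothCone.tendsto_boundaryQuotient (h : IsSmoothCone u U W) (hx : x ∈ freeBoundary u) :
    Tendsto (boundaryQuotient u U) (𝓝[{x | 0 < u x}] x) (𝓝 (boundaryQuotient u U x)) := by
  rw [h.boundaryQuotient_eq hx]
  refine (h.tendsto_one_sub_norm_gradient_sq_div hx).congr' ?_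
  filter_upwards [self_mem_nhdsWithin] with y hy using (if_pos hy).symm

theorem IsSmoothCone.continuousOn_boundaryQuotient (h : IsSmoothCone u U W) :
    ContinuousOn (boundaryQuotient u U) ({x | 0 < u x} ∪ freeBoundary u) := by
  rintro x (hx | hx)
  · have hgrad : ContinuousOn (gradient u) {x | 0 < u x} :=
      (h.contDiffOn_gradient.continuousOn.mono h.pos_subset).congr fun x hx => h.gradient_eq hx
    have hquot : ContinuousOn (fun x => (1 - ‖gradient u x‖ ^ 2) / u x) {x | 0 < u x} :=
      (continuousOn_const.sub (hgrad.norm.pow 2)).div h.continuous.continuousOn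
        fun x hx => ne_of_gt hx
    have hnhds := h.isOpen_pos.mem_nhds hx
    refine ((hquot.continuousAt hnhds).congr ?_).continuousWithinAt
    filter_upwards [hnhds] with y hy using (if_pos hy).symm
  · have hcurv : ContinuousOn (fun x => 2 * meanCurv U x) (freeBoundary u) :=
      continuousOn_const.mul (h.continuousOn_meanCurv.mono h.freeBoundary_subset)
    exact ContinuousWithinAt.union (h.tendsto_boundaryQuotient hx)
      (hcurv.congr (fun _ hy => h.boundaryQuotient_eq hy) x hx)

/-- The layer kernel `θ (1 - |∇u|²) / u` on `{0 < θ < φ}`: at `θ = u / s` it is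
`s⁻¹ (1 - |∇u|²)` on `{u < s φ}`, and its integral in `θ` is `H φ²` on the free boundary. -/
def layerWeight (u U φ : 𝔼[k + 1] → ℝ) (C : Set 𝔼[k + 1]) (θ : ℝ) (x : 𝔼[k + 1]) : ℝ :=
  if 0 < θ ∧ θ < φ x then θ * C.indicator (boundaryQuotient u U) x else 0

theorem layerWeight_of_mem (U : 𝔼[k + 1] → ℝ) (ht : IsTestFunction u φ G C) {θ : ℝ} (hθ : 0 < θ)
    (hx : θ < φ x) : layerWeight u U φ C θ x = θ * boundaryQuotient u U x := by
  rw [layerWeight, if_pos ⟨hθ, hx⟩, indicator_of_mem (ht.mem_of_pos (hθ.trans hx))]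

theorem layerWeight_of_le (u U : 𝔼[k + 1] → ℝ) (C : Set 𝔼[k + 1]) {θ : ℝ} (hx : φ x ≤ θ) :
    layerWeight u U φ C θ x = 0 :=
  if_neg fun h => hx.not_gt h.2

theorem pos_lt_of_layerWeight_ne_zero {θ : ℝ} (hx : layerWeight u U φ C θ x ≠ 0) :
    0 < θ ∧ θ < φ x := by
  by_contra hθ
  exact hx (if_neg hθ)

theorem IsSmoothCone.tendsto_layerWeight (h : IsSmoothCone u U W) (ht : IsTestFunction u φ G C)
    (hx : x ∈ freeBoundary u) {θ : ℝ} (hθ : 0 < θ) (hne : θ ≠ φ x) :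
    Tendsto (layerWeight u U φ C θ) (𝓝[{x | 0 < u x}] x) (𝓝 (layerWeight u U φ C θ x)) := by
  have hφ : Tendsto φ (𝓝[{x | 0 < u x}] x) (𝓝 (φ x)) :=
    (ht.continuousOn x (Or.inr hx)).mono subset_union_left
  rcases hne.lt_or_gt with hlt | hlt
  · rw [layerWeight_of_mem U ht hθ hlt]
    refine ((h.tendsto_boundaryQuotient hx).const_mul θ).congr' ?_
    filter_upwards [hφ.eventually (lt_mem_nhds hlt)] with y hy
    exact (layerWeight_of_mem U ht hθ hy).symm
  · rw [layerWeight_of_le u U C hlt.le]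
    refine tendsto_const_nhds.congr' ?_
    filter_upwards [hφ.eventually (gt_mem_nhds hlt)] with y hy
    exact (layerWeight_of_le u U C hy.le).symm

theorem IsSmoothCone.isLayerKernel_layerWeight (h : IsSmoothCone u U W)
    (ht : IsTestFunction u φ G C) :
    IsLayerKernel u (freeBoundary u) C (layerWeight u U φ C) := by
  have hq : ContinuousOn (C.indicator (boundaryQuotient u U)) C :=
    (h.continuousOn_boundaryQuotient.mono ht.subset).congr fun x hx => indicator_of_mem hx _
  have hq0 : ∀ x ∉ C, C.indicator (boundaryQuotient u U) x = 0 :=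
    fun x hx => indicator_of_notMem hx _
  obtain ⟨M, hM⟩ := ht.exists_norm_le
  obtain ⟨N, hN⟩ := exists_norm_le_of_continuousOn_of_eq_zero ht.isCompact hq hq0
  have hφM (x) : φ x ≤ M := (le_abs_self _).trans (hM x)
  refine ⟨?_, ⟨M * N, fun θ x => ?_⟩, ⟨M, fun θ x hx => ?_⟩, fun θ x hx => ?_, fun x hx => ?_⟩
  · have hset : MeasurableSet {p : ℝ × 𝔼[k + 1] | 0 < p.1 ∧ p.1 < φ p.2} :=
      (measurableSet_lt measurable_const measurable_fst).inter
        (measurableSet_lt measurable_fst (ht.measurable.comp measurable_snd))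
    exact Measurable.ite hset (measurable_fst.mul ((measurable_of_continuousOn_of_eq_zero
      ht.isCompact.measurableSet hq hq0).comp measurable_snd)) measurable_const
  · rw [layerWeight]
    split_ifs with hθ
    · rw [norm_mul, Real.norm_of_nonneg hθ.1.le]
      exact mul_le_mul (hθ.2.le.trans (hφM x)) (hN x) (norm_nonneg _) M.2
    · rw [norm_zero]
      exact NNReal.coe_nonneg _
  · exact (pos_lt_of_layerWeight_ne_zero hx).2.le.trans (hφM x)
  · have hθ := pos_lt_of_layerWeight_ne_zero hx
    exact ht.mem_of_pos (hθ.1.trans hθ.2)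
  · filter_upwards [ae_restrict_of_ae (Measure.ae_ne volume (φ x)),
      ae_restrict_mem measurableSet_Ioi] with θ hne hθ using h.tendsto_layerWeight ht hx hθ hne

theorem layerWeight_div_eq (U : 𝔼[k + 1] → ℝ) (ht : IsTestFunction u φ G C) (hs : 0 < s)
    (hx : 0 < u x) : layerWeight u U φ C (u x / s) x =
      s⁻¹ * (if u x < s * φ x then 1 - ‖gradient u x‖ ^ 2 else 0) := by
  have hiff : u x / s < φ x ↔ u x < s * φ x := div_lt_iff₀' hs
  split_ifs with hlt
  · rw [layerWeight_of_mem U ht (div_pos hx hs) (hiff.2 hlt), boundaryQuotient, if_pos hx]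
    field_simp
  · rw [layerWeight_of_le u U C (not_lt.1 (hiff.not.2 hlt)), mul_zero]

theorem IsSmoothCone.integral_layerWeight (h : IsSmoothCone u U W) (ht : IsTestFunction u φ G C)
    (hx : x ∈ freeBoundary u) :
    ∫ θ in Ioi 0, layerWeight u U φ C θ x = meanCurv U x * φ x ^ 2 := by
  have hind : ∀ θ, layerWeight u U φ C θ x =
      (Ioo 0 (φ x)).indicator (fun θ => θ * C.indicator (boundaryQuotient u U) x) θ := fun θ => by
    simp only [layerWeight, indicator, mem_Ioo]
  simp only [hind]
  rw [setIntegral_indicator measurableSet_Ioo, inter_eq_right.2 Ioo_subset_Ioi_self,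
    ← integral_Ioc_eq_integral_Ioo, ← intervalIntegral.integral_of_le (ht.nonneg x),
    intervalIntegral.integral_mul_const, integral_id]
  rcases (ht.nonneg x).eq_or_lt with h0 | h0
  · simp [← h0]
  · rw [indicator_of_mem (ht.mem_of_pos h0), h.boundaryQuotient_eq hx]
    ring

theorem IsSmoothCone.integrableOn_one_sub_norm_gradient_sq (h : IsSmoothCone u U W)
    (ht : IsTestFunction u φ G C) :
    IntegrableOn (fun x => if u x < φ x then 1 - ‖gradient u x‖ ^ 2 else 0) {x | 0 < u x} := by
  refine ((h.isLayerKernel_layerWeight ht).integrableOn_comp_div h.continuous.measurable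
    ht.isCompact 1).congr_fun (fun x hx => ?_) h.isOpen_pos.measurableSet
  simpa using layerWeight_div_eq U ht one_pos hx

theorem IsSmoothCone.tendsto_setIntegral_one_sub_norm_gradient_sq (h : IsSmoothCone u U W)
    (ht : IsTestFunction u φ G C) :
    Tendsto (fun s => s⁻¹ * (s⁻¹ * ∫ x in {x | 0 < u x},
        (if u x < s * φ x then 1 - ‖gradient u x‖ ^ 2 else 0))) (𝓝[>] 0)
      (𝓝 (∫ x in freeBoundary u, meanCurv U x * φ x ^ 2 ∂μHE[k])) := by
  have hlim := h.tendsto_layer_integral (h.isLayerKernel_layerWeight ht) ht.isCompact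
    ht.zero_notMem
  rw [setIntegral_congr_fun (measurableSet_freeBoundary u)
    fun x hx => h.integral_layerWeight ht hx] at hlim
  refine hlim.congr' ?_
  filter_upwards [self_mem_nhdsWithin] with s hs
  rw [setIntegral_congr_fun h.isOpen_pos.measurableSet fun x hx => layerWeight_div_eq U ht hs hx,
    integral_const_mul]

end LayerWeight

end Competitor

section Energy

theorem gradient_eq_zero_of_nonneg_of_eq_zero {n : ℕ} {f : 𝔼[n] → ℝ} (hf : ∀ x, 0 ≤ f x) {x : 𝔼[n]}
    (hx : f x = 0) : gradient f x = 0 := by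
  have hmin : IsLocalMin f x := Eventually.of_forall fun y => hx ▸ hf y
  rw [gradient, hmin.fderiv_eq_zero, map_zero]

theorem integrable_of_norm_le_of_eq_zero {α F : Type*} [MeasurableSpace α] [NormedAddCommGroup F]
    {μ : Measure α} {s : Set α} {f : α → F} {M : ℝ} (hs : MeasurableSet s) (hμ : μ s ≠ ∞)
    (hf : AEStronglyMeasurable f μ) (hM : ∀ x, ‖f x‖ ≤ M) (hf0 : ∀ x ∉ s, f x = 0) :
    Integrable f μ := by
  refine ((integrable_indicator_iff hs).2 (integrableOn_const (C := M) hμ)).mono' hf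
    (Eventually.of_forall fun x => ?_)
  by_cases hx : x ∈ s
  · rw [indicator_of_mem hx]
    exact hM x
  · rw [indicator_of_notMem hx, hf0 x hx, norm_zero]

/-- The integrand of the Alt–Caffarelli energy `acEnergy 1 f`. -/
def energyDensity {n : ℕ} (f : 𝔼[n] → ℝ) (x : 𝔼[n]) : ℝ :=
  ‖gradient f x‖ ^ 2 + 1 ^ 2 * {y | 0 < f y}.indicator (fun _ => (1 : ℝ)) x

theorem energyDensity_of_pos {n : ℕ} {f : 𝔼[n] → ℝ} {x : 𝔼[n]} (hx : 0 < f x) :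
    energyDensity f x = ‖gradient f x‖ ^ 2 + 1 := by
  rw [energyDensity, indicator_of_mem (mem_ofPred_eq ▸ hx), one_pow, one_mul]

theorem energyDensity_of_eq_zero {n : ℕ} {f : 𝔼[n] → ℝ} {x : 𝔼[n]} (hf : ∀ x, 0 ≤ f x)
    (hx : f x = 0) : energyDensity f x = 0 := by
  simp [energyDensity, gradient_eq_zero_of_nonneg_of_eq_zero hf hx, hx]

theorem integrableOn_energyDensity {n : ℕ} {f : 𝔼[n] → ℝ} {K : ℝ≥0} (hf : LipschitzWith K f)
    {s : Set 𝔼[n]} (hs : volume s ≠ ∞) : IntegrableOn (energyDensity f) s := by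
  have hmeas : Measurable (energyDensity f) :=
    ((measurable_gradient f).norm.pow_const 2).add ((measurable_const.indicator
      (isOpen_lt continuous_const hf.continuous).measurableSet).const_mul _)
  refine Measure.integrableOn_of_bounded (M := (K : ℝ) ^ 2 + 1) hs hmeas.aestronglyMeasurable
    (Eventually.of_forall fun x => ?_)
  refine (norm_add_le _ _).trans (add_le_add ?_ ?_)
  · rw [norm_pow, norm_norm]
    exact pow_le_pow_left₀ (norm_nonneg _) (norm_gradient_le_of_lipschitzWith hf x) 2
  · rw [one_pow, one_mul, norm_indicator_eq_indicator_norm, norm_one]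
    exact indicator_le_self' (fun _ _ => zero_le_one) x

variable {n : ℕ} {u φ : 𝔼[n] → ℝ} {G : 𝔼[n] → 𝔼[n]} {C : Set 𝔼[n]} {x : 𝔼[n]}

/-- An upper bound for the change of `energyDensity` when `u` is replaced by `max (u - φ) 0`, where
`G` is the gradient of `φ`. -/
def energyGain (u φ : 𝔼[n] → ℝ) (G : 𝔼[n] → 𝔼[n]) : 𝔼[n] → ℝ :=
  {x | 0 < u x}.indicator fun x => ‖G x‖ ^ 2 - (if u x < φ x then 1 - ‖gradient u x‖ ^ 2 else 0) -
    2 * (if u x < φ x then ‖gradient u x‖ ^ 2 else ⟪G x, gradient u x⟫)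

theorem IsTestFunction.energyGain_eq_zero (ht : IsTestFunction u φ G C) (hx : x ∉ C) :
    energyGain u φ G x = 0 := by
  refine indicator_apply_eq_zero.2 fun (hpos : 0 < u x) => ?_
  have hlt : ¬u x < φ x := by
    rw [ht.eq_zero x hx]
    exact hpos.le.not_gt
  simp [hlt, ht.grad_eq_zero x hx]

theorem IsTestFunction.energyDensity_max_sub_le (ht : IsTestFunction u φ G C) (hu : ∀ x, 0 ≤ u x)
    (hud : ∀ x, 0 < u x → DifferentiableAt ℝ u x) (x : 𝔼[n]) :
    energyDensity (fun x => max (u x - φ x) 0) x ≤ energyDensity u x + energyGain u φ G x := by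
  have hwnonneg (x) : 0 ≤ max (u x - φ x) 0 := le_max_right _ _
  rcases (hu x).eq_or_lt with hux | hux
  · have hw : max (u x - φ x) 0 = 0 := max_eq_right (by linarith [ht.nonneg x])
    rw [energyDensity_of_eq_zero hwnonneg hw, energyDensity_of_eq_zero hu hux.symm, energyGain,
      indicator_of_notMem (by simp [← hux]), add_zero]
  have hsq := norm_sub_sq_real (gradient u x) (G x)
  rw [real_inner_comm] at hsq
  rw [energyDensity_of_pos hux, energyGain, indicator_of_mem (mem_ofPred_eq ▸ hux)]
  by_cases hw : 0 < u x - φ x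
  · have hdiff := (hud x hux).hasFDerivAt.fun_sub (ht.hasGradientAt x hux).hasFDerivAt
    have heq : (fun x => max (u x - φ x) 0) =ᶠ[𝓝 x] fun x => u x - φ x := by
      filter_upwards [hdiff.continuousAt.eventually (lt_mem_nhds hw)] with y hy
      exact max_eq_left (le_of_lt hy)
    have hgrad : gradient (fun x => max (u x - φ x) 0) x = gradient u x - G x := by
      rw [gradient, heq.fderiv_eq, hdiff.fderiv, map_sub, LinearIsometryEquiv.symm_apply_apply,
        gradient]
    have hlt : ¬u x < φ x := by linarith
    rw [energyDensity_of_pos (lt_max_of_lt_left hw), hgrad, hsq, if_neg hlt, if_neg hlt]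
    linarith
  · rw [energyDensity_of_eq_zero hwnonneg (max_eq_right (not_lt.1 hw))]
    have hsq0 := sq_nonneg ‖gradient u x - G x‖
    split_ifs
    · linarith [sq_nonneg ‖G x‖]
    · linarith

theorem IsTestFunction.integrable_norm_grad_sq (ht : IsTestFunction u φ G C) :
    Integrable fun x => ‖G x‖ ^ 2 := by
  obtain ⟨M, hM⟩ := ht.exists_norm_grad_le
  refine integrable_of_norm_le_of_eq_zero (M := M ^ 2) ht.isCompact.measurableSet
    ht.isCompact.measure_lt_top.ne (ht.measurable_grad.norm.pow_const 2).aestronglyMeasurable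
    (fun x => ?_) fun x hx => by simp [ht.grad_eq_zero x hx]
  rw [norm_pow, norm_norm]
  exact pow_le_pow_left₀ (norm_nonneg _) (hM x) 2

theorem IsTestFunction.integrableOn_gradient_min (ht : IsTestFunction u φ G C) {K : ℝ≥0}
    (hK : LipschitzWith K u) :
    IntegrableOn (fun x => if u x < φ x then ‖gradient u x‖ ^ 2 else ⟪G x, gradient u x⟫)
      {x | 0 < u x} := by
  obtain ⟨M, hM⟩ := ht.exists_norm_grad_le
  have hpos : MeasurableSet {x | 0 < u x} :=
    measurableSet_lt measurable_const hK.continuous.measurable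
  have hmeas : Measurable
      fun x => if u x < φ x then ‖gradient u x‖ ^ 2 else ⟪G x, gradient u x⟫ :=
    Measurable.ite (measurableSet_lt hK.continuous.measurable ht.measurable)
      ((measurable_gradient u).norm.pow_const 2) (ht.measurable_grad.inner (measurable_gradient u))
  rw [← integrable_indicator_iff hpos]
  refine integrable_of_norm_le_of_eq_zero (M := K ^ 2 + M * K) ht.isCompact.measurableSet
    ht.isCompact.measure_lt_top.ne (hmeas.indicator hpos).aestronglyMeasurable (fun x => ?_)
    fun x hx => indicator_apply_eq_zero.2 fun (hux : 0 < u x) => ?_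
  · have hgrad := norm_gradient_le_of_lipschitzWith hK x
    refine (norm_indicator_le_norm_self _ x).trans ?_
    split_ifs
    · rw [norm_pow, norm_norm]
      exact (pow_le_pow_left₀ (norm_nonneg _) hgrad 2).trans
        (le_add_of_nonneg_right (by positivity))
    · exact (norm_inner_le_norm _ _).trans ((mul_le_mul (hM x) hgrad (norm_nonneg _) M.2).trans
        (le_add_of_nonneg_left (by positivity)))
  · rw [ht.eq_zero x hx, if_neg hux.le.not_gt, ht.grad_eq_zero x hx,
      inner_zero_left]

end Energy

namespace IsSmoothCone

variable {k : ℕ} {u U φ : 𝔼[k + 1] → ℝ} {W C : Set 𝔼[k + 1]} {G : 𝔼[k + 1] → 𝔼[k + 1]}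

theorem integrable_energyGain (h : IsSmoothCone u U W) (ht : IsTestFunction u φ G C) :
    Integrable (energyGain u φ G) ∧ ∫ x, energyGain u φ G x = (∫ x in {x | 0 < u x}, ‖G x‖ ^ 2) -
      ∫ x in {x | 0 < u x}, (if u x < φ x then 1 - ‖gradient u x‖ ^ 2 else 0) := by
  obtain ⟨K, hK⟩ := h.exists_lipschitzWith
  have hpos := h.isOpen_pos.measurableSet
  have hG := ht.integrable_norm_grad_sq.integrableOn (s := {x | 0 < u x})
  have hlayer := h.integrableOn_one_sub_norm_gradient_sq ht
  have hmin := (ht.integrableOn_gradient_min hK).const_mul 2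
  have hdiff : IntegrableOn (fun x => ‖G x‖ ^ 2 - (if u x < φ x then 1 - ‖gradient u x‖ ^ 2 else 0))
      {x | 0 < u x} := hG.sub hlayer
  refine ⟨(integrable_indicator_iff hpos).2 (hdiff.sub hmin), ?_⟩
  simp only [energyGain]
  rw [integral_indicator hpos, integral_sub hdiff hmin, integral_sub hG hlayer,
    integral_const_mul, h.setIntegral_gradient_min_eq_zero ht, mul_zero, sub_zero]

theorem acEnergy_max_sub_le (h : IsSmoothCone u U W) (ht : IsTestFunction u φ G C) {R : ℝ}
    (hR : C ⊆ ball 0 R) :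
    acEnergy 1 (fun x => max (u x - φ x) 0) (ball 0 R) ≤ acEnergy 1 u (ball 0 R) +
      ((∫ x in {x | 0 < u x}, ‖G x‖ ^ 2) -
        ∫ x in {x | 0 < u x}, (if u x < φ x then 1 - ‖gradient u x‖ ^ 2 else 0)) := by
  obtain ⟨K, hK⟩ := h.exists_lipschitzWith
  obtain ⟨K', hK'⟩ := h.exists_lipschitzWith_max_sub ht
  obtain ⟨hint, heq⟩ := h.integrable_energyGain ht
  have hball : volume (ball (0 : 𝔼[k + 1]) R) ≠ ∞ := measure_ball_lt_top.ne
  have hu := integrableOn_energyDensity hK hball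
  calc
    acEnergy 1 (fun x => max (u x - φ x) 0) (ball 0 R)
      ≤ ∫ x in ball 0 R, (energyDensity u x + energyGain u φ G x) :=
        integral_mono (integrableOn_energyDensity hK' hball) (hu.add hint.integrableOn)
          (ht.energyDensity_max_sub_le h.nonneg fun _ => h.differentiableAt_of_pos)
    _ = acEnergy 1 u (ball 0 R) + ∫ x, energyGain u φ G x := by
        rw [integral_add hu hint.integrableOn, setIntegral_eq_integral_of_forall_compl_eq_zero
          fun x hx => ht.energyGain_eq_zero fun hxC => hx (hR hxC)]
        rfl
    _ = _ := by rw [heq]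

-- The competitors are `max (u - s φ) 0` for small `s > 0`.
theorem not_isSymMinimizer_of_lt (h : IsSmoothCone u U W) (ht : IsTestFunction u φ G C)
    {Γ : Subgroup (𝔼[k + 1] ≃ₗᵢ[ℝ] 𝔼[k + 1])} (hφ : IsSymmetricUnder Γ φ)
    (hlt : ∫ x in {x | 0 < u x}, ‖G x‖ ^ 2 <
      ∫ x in freeBoundary u, meanCurv U x * φ x ^ 2 ∂μHE[k]) :
    ¬ IsSymMinimizer Γ u := by
  rintro ⟨-, -, hsymm, hmin⟩
  obtain ⟨s, hslt, hs⟩ := (((h.tendsto_setIntegral_one_sub_norm_gradient_sq ht).eventually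
    (lt_mem_nhds hlt)).and self_mem_nhdsWithin).exists
  obtain ⟨R, hR0, hR⟩ := ht.isCompact.isBounded.subset_ball_lt 0 0
  have hs0 : 0 < s := hs
  have hts := ht.const_smul hs0.le
  obtain ⟨K, hK⟩ := h.exists_lipschitzWith_max_sub hts
  have hle := (hmin R hR0 _ (fun x => le_max_right _ _) hK.locallyLipschitz
    (fun g hg x => by simp only [hsymm g hg x, hφ g hg x])
    (fun x hx => by rw [ht.eq_zero x fun hxC => hx (hR hxC), mul_zero, sub_zero,
      max_eq_left (h.nonneg x)])).trans (h.acEnergy_max_sub_le hts hR)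
  simp only [norm_smul, mul_pow, integral_const_mul, Real.norm_of_nonneg hs0.le] at hle
  rw [← mul_assoc, ← mul_inv, ← sq, inv_mul_eq_div, lt_div_iff₀' (by positivity)] at hslt
  linarith

end IsSmoothCone

section Subsolution

/-- The open annulus `{a < ‖x‖ < b}`. -/
def annulus (E : Type*) [SeminormedAddCommGroup E] (a b : ℝ) : Set E :=
  {x | a < ‖x‖ ∧ ‖x‖ < b}

section Annulus

variable {E : Type*} [NormedAddCommGroup E] {a b : ℝ}

theorem isOpen_annulus : IsOpen (annulus E a b) :=
  isOpen_Ioo.preimage continuous_norm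

theorem closure_annulus_subset : closure (annulus E a b) ⊆ {x | a ≤ ‖x‖ ∧ ‖x‖ ≤ b} :=
  closure_minimal (fun _ hx => ⟨hx.1.le, hx.2.le⟩) (isClosed_Icc.preimage continuous_norm)

theorem isBounded_annulus : Bornology.IsBounded (annulus E a b) :=
  isBounded_closedBall.subset fun _ hx => mem_closedBall_zero_iff.2 hx.2.le

theorem mem_frontier_annulus [NormedSpace ℝ E] (ha : 0 < a) (hab : a < b) {z : E}
    (hz : ‖z‖ = a ∨ ‖z‖ = b) : z ∈ frontier (annulus E a b) := by
  have hz0 : 0 < ‖z‖ := by rcases hz with hz | hz <;> linarith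
  have hmaps : MapsTo (fun t : ℝ => t • (‖z‖⁻¹ • z)) (Ioo a b) (annulus E a b) := by
    intro t ht
    have hnorm : ‖t • (‖z‖⁻¹ • z)‖ = t := by
      rw [norm_smul, norm_smul, norm_inv, norm_norm, inv_mul_cancel₀ hz0.ne', mul_one,
        Real.norm_of_nonneg (ha.trans ht.1).le]
    rwa [annulus, mem_ofPred_eq, hnorm]
  have hmem : ‖z‖ ∈ closure (Ioo a b) := by
    rw [closure_Ioo hab.ne]
    rcases hz with hz | hz
    · exact ⟨hz.ge, hz.trans_le hab.le⟩
    · exact ⟨hab.le.trans_eq hz.symm, hz.le⟩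
  have hcl := map_mem_closure (by fun_prop) hmem hmaps
  rw [smul_inv_smul₀ hz0.ne'] at hcl
  rw [isOpen_annulus.frontier_eq]
  refine ⟨hcl, fun h => ?_⟩
  rcases hz with hz | hz
  · exact h.1.ne' hz
  · exact h.2.ne hz

end Annulus

/-- `v` is a nonnegative subsolution in the region `A` of the linearization at `u` of the one-phase
problem, which vanishes continuously at `∂A`. The latter is encoded by the compactness of the sets
`{v ≥ ε}`, `ε > 0`. -/
structure IsSubsolution {n : ℕ} (u U : 𝔼[n] → ℝ) (A : Set 𝔼[n]) (v : 𝔼[n] → ℝ) : Prop where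
  isOpen : IsOpen A
  isBounded : Bornology.IsBounded A
  zero_notMem_closure : (0 : 𝔼[n]) ∉ closure A
  nonneg : ∀ x ∈ regularDomain u A, 0 ≤ v x
  exists_le : ∃ M, ∀ x ∈ regularDomain u A, v x ≤ M
  isCompact_superlevel : ∀ ε > 0, IsCompact {x | x ∈ regularDomain u A ∧ ε ≤ v x}
  contDiffOn_two : ContDiffOn ℝ 2 v ({x | 0 < u x} ∩ A)
  contDiffOn : ContDiffOn ℝ 1 v (regularDomain u A)
  lap_nonneg : ∀ x ∈ {x | 0 < u x} ∩ A, 0 ≤ lap v x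
  dNu_le : ∀ x ∈ freeBoundary u ∩ A, dNu U v x ≤ meanCurv U x * v x

section RegularDomain

variable {n : ℕ} {u : 𝔼[n] → ℝ} {A : Set 𝔼[n]}

theorem regularDomain_eq_inter : regularDomain u A = ({x | 0 < u x} ∪ freeBoundary u) ∩ A :=
  (union_inter_distrib_right ..).symm

theorem regularDomain_subset_closure (hA : IsOpen A) :
    regularDomain u A ⊆ closure ({x | 0 < u x} ∩ A) := by
  rintro x (hx | hx)
  · exact subset_closure hx
  · rw [inter_comm]
    exact hA.inter_closure ⟨hx.2, frontier_subset_closure hx.1.1⟩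

theorem regularDomain_subset {U : 𝔼[n] → ℝ} {W : Set 𝔼[n]} (h : IsSmoothCone u U W) :
    regularDomain u A ⊆ W :=
  regularDomain_eq_inter.trans_subset
    (inter_subset_left.trans (union_subset h.pos_subset h.freeBoundary_subset))

theorem continuousOn_of_continuousOn_regularDomain {F : Type*} [TopologicalSpace F] [Zero F]
    {C : Set 𝔼[n]} {f : 𝔼[n] → F} (hA : IsOpen A) (hC : IsClosed C) (hCA : C ⊆ A)
    (hf : ContinuousOn f (regularDomain u A)) (hf0 : ∀ x ∉ C, f x = 0) :
    ContinuousOn f ({x | 0 < u x} ∪ freeBoundary u) := by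
  intro x hx
  by_cases hxC : x ∈ C
  · rw [regularDomain_eq_inter] at hf
    exact (continuousWithinAt_inter (hA.mem_nhds (hCA hxC))).1 (hf x ⟨hx, hCA hxC⟩)
  · have hev : f =ᶠ[𝓝 x] fun _ => 0 := by
      filter_upwards [hC.isOpen_compl.mem_nhds hxC] with y hy using hf0 y hy
    exact (continuousAt_const.congr hev.symm).continuousWithinAt

end RegularDomain

namespace IsSmoothCone

variable {n : ℕ} {u U v : 𝔼[n] → ℝ} {W : Set 𝔼[n]} {a b : ℝ}

-- A sphere of radius `‖x‖ ∈ {a, b}` meets `{u > 0}` near every point of the closure, since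
-- `{u > 0}` is a cone.
theorem eq_zero_of_norm_eq (h : IsSmoothCone u U W) (ha : 0 < a) (hab : a < b)
    (hv : ContinuousOn v (closure ({x | 0 < u x} ∩ annulus 𝔼[n] a b)))
    (hv0 : ∀ x, 0 < u x → x ∈ frontier (annulus 𝔼[n] a b) → v x = 0) {x : 𝔼[n]}
    (hx : x ∈ closure ({x | 0 < u x} ∩ annulus 𝔼[n] a b)) (hxr : ‖x‖ = a ∨ ‖x‖ = b) :
    v x = 0 := by
  set O := {x | 0 < u x} ∩ annulus 𝔼[n] a b
  have hx0 : 0 < ‖x‖ := by rcases hxr with hxr | hxr <;> linarith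
  have : (𝓝[O] x).NeBot := mem_closure_iff_nhdsWithin_neBot.1 hx
  let T : 𝔼[n] → 𝔼[n] := fun y => (‖x‖ / ‖y‖) • y
  have hT : Tendsto T (𝓝[O] x) (𝓝 x) := by
    have hcont : ContinuousAt T x :=
      (continuousAt_const.div continuous_norm.continuousAt hx0.ne').smul continuousAt_id
    have hTx : T x = x := by rw [show T x = (‖x‖ / ‖x‖) • x from rfl, div_self hx0.ne', one_smul]
    exact (hTx ▸ hcont.tendsto).mono_left nhdsWithin_le_nhds
  have hTO : ∀ y ∈ O, 0 < u (T y) ∧ T y ∈ frontier (annulus 𝔼[n] a b) := by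
    intro y hy
    have hu : 0 < u y := hy.1
    have hy0 : 0 < ‖y‖ := ha.trans hy.2.1
    have hnorm : ‖T y‖ = ‖x‖ := by
      rw [norm_smul, norm_div, norm_norm, norm_norm, div_mul_cancel₀ _ hy0.ne']
    refine ⟨?_, mem_frontier_annulus ha hab (hnorm ▸ hxr)⟩
    rw [h.homogeneous _ (by positivity)]
    positivity
  have hTcl : Tendsto T (𝓝[O] x) (𝓝[closure O] x) := by
    refine tendsto_nhdsWithin_iff.2 ⟨hT, ?_⟩
    filter_upwards [self_mem_nhdsWithin] with y hy
    exact h.isOpen_pos.inter_closure ⟨(hTO y hy).1, frontier_subset_closure (hTO y hy).2⟩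
  have hzero : (fun _ => 0) =ᶠ[𝓝[O] x] v ∘ T := by
    filter_upwards [self_mem_nhdsWithin] with y hy using (hv0 _ (hTO y hy).1 (hTO y hy).2).symm
  exact tendsto_nhds_unique ((hv x hx).tendsto.comp hTcl) (tendsto_const_nhds.congr' hzero)

theorem mem_regularDomain_of_mem_closure (h : IsSmoothCone u U W) (ha : 0 < a) {x : 𝔼[n]}
    (hx : x ∈ closure ({x | 0 < u x} ∩ annulus 𝔼[n] a b)) (hxa : ‖x‖ ≠ a) (hxb : ‖x‖ ≠ b) :
    x ∈ regularDomain u (annulus 𝔼[n] a b) := by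
  have hnorm := closure_annulus_subset (closure_mono inter_subset_right hx)
  have hx0 : x ≠ 0 := norm_pos_iff.1 (ha.trans_le hnorm.1)
  have hpos := h.pos_or_mem_freeBoundary (closure_mono inter_subset_left hx) hx0
  exact regularDomain_eq_inter ▸ ⟨hpos, hnorm.1.lt_of_ne' hxa, hnorm.2.lt_of_ne hxb⟩

theorem isSubsolution_annulus (h : IsSmoothCone u U W) (ha : 0 < a) (hab : a < b)
    (hv0 : ∀ x ∈ closure ({x | 0 < u x} ∩ annulus 𝔼[n] a b), 0 ≤ v x)
    (hv : ContinuousOn v (closure ({x | 0 < u x} ∩ annulus 𝔼[n] a b)))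
    (hv2 : ContDiffOn ℝ 2 v ({x | 0 < u x} ∩ annulus 𝔼[n] a b))
    (hv1 : ContDiffOn ℝ 1 v (regularDomain u (annulus 𝔼[n] a b)))
    (hlap : ∀ x ∈ {x | 0 < u x} ∩ annulus 𝔼[n] a b, 0 ≤ lap v x)
    (hdNu : ∀ x ∈ freeBoundary u ∩ annulus 𝔼[n] a b, dNu U v x ≤ meanCurv U x * v x)
    (hzero : ∀ x, 0 < u x → x ∈ frontier (annulus 𝔼[n] a b) → v x = 0) :
    IsSubsolution u U (annulus 𝔼[n] a b) v := by
  set O := {x | 0 < u x} ∩ annulus 𝔼[n] a b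
  have hsub : regularDomain u (annulus 𝔼[n] a b) ⊆ closure O :=
    regularDomain_subset_closure isOpen_annulus
  have hcompact : IsCompact (closure O) :=
    (isBounded_annulus.subset inter_subset_right).isCompact_closure
  refine ⟨isOpen_annulus, isBounded_annulus, fun h0 => ?_, fun x hx => hv0 x (hsub hx), ?_,
    fun ε hε => ?_, hv2, hv1, hlap, hdNu⟩
  · have := (closure_annulus_subset h0).1
    rw [norm_zero] at this
    linarith
  · obtain ⟨M, hM⟩ := hcompact.bddAbove_image hv
    exact ⟨M, fun x hx => hM (mem_image_of_mem v (hsub hx))⟩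
  · have heq : {x | x ∈ regularDomain u (annulus 𝔼[n] a b) ∧ ε ≤ v x} =
        closure O ∩ v ⁻¹' Ici ε := by
      refine Subset.antisymm (fun x hx => ⟨hsub hx.1, hx.2⟩) fun x hx => ⟨?_, hx.2⟩
      have hvx : v x ≠ 0 := (hε.trans_le hx.2).ne'
      have hvr := mt (h.eq_zero_of_norm_eq ha hab hv hzero hx.1) hvx
      rw [not_or] at hvr
      exact h.mem_regularDomain_of_mem_closure ha hx.1 hvr.1 hvr.2
    rw [heq]
    exact hcompact.of_isClosed_subset
      (hv.preimage_isClosed_of_isClosed isClosed_closure isClosed_Ici) inter_subset_left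

end IsSmoothCone

end Subsolution

section Truncation

variable {n : ℕ} {u U v : 𝔼[n] → ℝ} {A W : Set 𝔼[n]} {ε : ℝ} {x : 𝔼[n]}

/-- The `C¹` truncation of a subsolution near its zero set, extended by zero outside its domain.
It is the test function built from `v`. -/
def truncation (u : 𝔼[n] → ℝ) (A : Set 𝔼[n]) (v : 𝔼[n] → ℝ) (ε : ℝ) : 𝔼[n] → ℝ :=
  (regularDomain u A).indicator fun x => softPosPart ε (v x)

/-- The gradient of `truncation`, one-sided along the free boundary. -/
def truncationGrad (u : 𝔼[n] → ℝ) (A : Set 𝔼[n]) (v : 𝔼[n] → ℝ) (ε : ℝ) : 𝔼[n] → 𝔼[n] :=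
  (regularDomain u A).indicator fun x => softStep ε (v x) • gradientWithin v (regularDomain u A) x

theorem truncation_of_mem (hx : x ∈ regularDomain u A) :
    truncation u A v ε x = softPosPart ε (v x) :=
  indicator_of_mem hx _

theorem truncationGrad_of_mem (hx : x ∈ regularDomain u A) :
    truncationGrad u A v ε x = softStep ε (v x) • gradientWithin v (regularDomain u A) x :=
  indicator_of_mem hx _

theorem truncation_nonneg (hε : 0 < ε) (x : 𝔼[n]) : 0 ≤ truncation u A v ε x :=
  indicator_nonneg (fun _ _ => softPosPart_nonneg hε.le _) x

theorem truncation_eq_zero (hε : 0 < ε) (hx : x ∉ {x | x ∈ regularDomain u A ∧ ε ≤ v x}) :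
    truncation u A v ε x = 0 :=
  indicator_apply_eq_zero.2 fun hxS =>
    softPosPart_of_le hε.le (not_le.1 fun hle => hx ⟨hxS, hle⟩).le

theorem truncationGrad_eq_zero (hε : 0 < ε) (hx : x ∉ {x | x ∈ regularDomain u A ∧ ε ≤ v x}) :
    truncationGrad u A v ε x = 0 :=
  indicator_apply_eq_zero.2 fun hxS => by
    rw [softStep_of_le hε.le (not_le.1 fun hle => hx ⟨hxS, hle⟩).le, zero_smul]

theorem IsSmoothCone.gradientWithin_eq (h : IsSmoothCone u U W) (hA : IsOpen A)
    (hx : x ∈ {x | 0 < u x} ∩ A) : gradientWithin v (regularDomain u A) x = gradient v x := by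
  rw [gradientWithin, gradient, fderivWithin_of_mem_nhds]
  exact mem_of_superset ((h.isOpen_pos.inter hA).mem_nhds hx) subset_union_left

theorem IsSubsolution.hasGradientAt_truncation (h : IsSmoothCone u U W)
    (d : IsSubsolution u U A v) (hε : 0 < ε) (hx : 0 < u x) :
    HasGradientAt (truncation u A v ε) (truncationGrad u A v ε x) x := by
  by_cases hxA : x ∈ A
  · have hO := h.isOpen_pos.inter d.isOpen
    have hxO : x ∈ {x | 0 < u x} ∩ A := ⟨hx, hxA⟩
    have hev : truncation u A v ε =ᶠ[𝓝 x] fun x => softPosPart ε (v x) := by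
      filter_upwards [hO.mem_nhds hxO] with y hy using truncation_of_mem (Or.inl hy)
    have hv : HasGradientAt v (gradient v x) x :=
      ((d.contDiffOn_two.contDiffAt (hO.mem_nhds hxO)).differentiableAt two_ne_zero).hasGradientAt
    have hcomp := (hasDerivAt_softPosPart ε (v x)).comp_hasFDerivAt x hv.hasFDerivAt
    rw [truncationGrad_of_mem (Or.inl hxO), h.gradientWithin_eq d.isOpen hxO,
      hasGradientAt_iff_hasFDerivAt, map_smul]
    exact hcomp.congr_of_eventuallyEq hev
  · have hxC : x ∉ {x | x ∈ regularDomain u A ∧ ε ≤ v x} := fun hxC =>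
      hxA (regularDomain_eq_inter.subset hxC.1).2
    have hev : truncation u A v ε =ᶠ[𝓝 x] fun _ => 0 := by
      filter_upwards [(d.isCompact_superlevel ε hε).isClosed.isOpen_compl.mem_nhds hxC] with y hy
        using truncation_eq_zero hε hy
    rw [truncationGrad_eq_zero hε hxC]
    exact (hasGradientAt_const x 0).congr_of_eventuallyEq hev

theorem mem_freeBoundary_linearIsometryEquiv {g : 𝔼[n] ≃ₗᵢ[ℝ] 𝔼[n]} (hu : ∀ x, u (g x) = u x) :
    g x ∈ freeBoundary u ↔ x ∈ freeBoundary u := by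
  have hpos : g.toHomeomorph ⁻¹' {x | 0 < u x} = {x | 0 < u x} := by
    ext y
    exact iff_of_eq (congrArg (0 < ·) (hu y))
  have hfrontier : g x ∈ frontier {x | 0 < u x} ↔ x ∈ frontier {x | 0 < u x} := by
    conv_rhs => rw [← hpos, ← g.toHomeomorph.preimage_frontier]
    rfl
  exact and_congr hfrontier (not_congr (map_eq_zero_iff g g.injective))

theorem isSymmetricUnder_truncation {Γ : Subgroup (𝔼[n] ≃ₗᵢ[ℝ] 𝔼[n])}
    (hu : IsSymmetricUnder Γ u) (hv : IsSymmetricUnder Γ v)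
    (hA : ∀ g ∈ Γ, ∀ x, g x ∈ A ↔ x ∈ A) (ε : ℝ) :
    IsSymmetricUnder Γ (truncation u A v ε) := by
  intro g hg x
  have hmem : g x ∈ regularDomain u A ↔ x ∈ regularDomain u A := by
    simp only [regularDomain, mem_union, mem_inter_iff, mem_ofPred_eq, hu g hg x, hA g hg x,
      mem_freeBoundary_linearIsometryEquiv (hu g hg)]
  by_cases hx : x ∈ regularDomain u A
  · rw [truncation_of_mem hx, truncation_of_mem (hmem.2 hx), hv g hg x]
  · rw [truncation, indicator_of_notMem hx, indicator_of_notMem (mt hmem.1 hx)]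

end Truncation

section TestFunction

variable {k : ℕ} {u U v : 𝔼[k + 1] → ℝ} {A W : Set 𝔼[k + 1]}

theorem IsSmoothCone.continuousOn_gradientWithin (h : IsSmoothCone u U W) (hA : IsOpen A)
    (hv : ContDiffOn ℝ 1 v (regularDomain u A)) :
    ContinuousOn (gradientWithin v (regularDomain u A)) (regularDomain u A) :=
  (InnerProductSpace.toDual ℝ 𝔼[k + 1]).symm.continuous.comp_continuousOn
    (hv.continuousOn_fderivWithin (h.uniqueDiffOn_regularDomain hA) le_rfl)

theorem IsSubsolution.isTestFunction_truncation (h : IsSmoothCone u U W) (d : IsSubsolution u U A v)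
    {ε : ℝ} (hε : 0 < ε) : IsTestFunction u (truncation u A v ε) (truncationGrad u A v ε)
      {x | x ∈ regularDomain u A ∧ ε ≤ v x} := by
  have hC := d.isCompact_superlevel ε hε
  have hCA : {x | x ∈ regularDomain u A ∧ ε ≤ v x} ⊆ A := fun x hx =>
    (regularDomain_eq_inter.subset hx.1).2
  have hv := d.contDiffOn.continuousOn
  exact {
    isCompact := hC
    zero_notMem := fun h0 => d.zero_notMem_closure (subset_closure (hCA h0))
    subset := fun x hx => (regularDomain_eq_inter.subset hx.1).1
    eq_zero := fun x hx => truncation_eq_zero hε hx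
    grad_eq_zero := fun x hx => truncationGrad_eq_zero hε hx
    nonneg := truncation_nonneg hε
    hasGradientAt := fun x hx => d.hasGradientAt_truncation h hε hx
    continuousOn := continuousOn_of_continuousOn_regularDomain d.isOpen hC.isClosed hCA
      (((contDiff_softPosPart ε).continuous.comp_continuousOn hv).congr fun x hx =>
        truncation_of_mem hx) fun x hx => truncation_eq_zero hε hx
    continuousOn_grad := continuousOn_of_continuousOn_regularDomain d.isOpen hC.isClosed hCA
      ((((continuous_softStep ε).comp_continuousOn hv).smul
        (h.continuousOn_gradientWithin d.isOpen d.contDiffOn)).congr fun x hx =>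
          truncationGrad_of_mem hx)
      fun x hx => truncationGrad_eq_zero hε hx }

end TestFunction

section Cutoff

/-- A smooth cutoff of the real line, equal to `0` on `t ≤ 1` and to `1` on `t ≥ 2`. The functions
`cutoff (u / s)` exhaust `{u > 0}` as `s → 0`. -/
def cutoff (t : ℝ) : ℝ :=
  Real.smoothTransition (t - 1)

theorem contDiff_cutoff : ContDiff ℝ 1 cutoff :=
  Real.smoothTransition.contDiff.comp (contDiff_id.sub contDiff_const)

theorem cutoff_of_le {t : ℝ} (ht : t ≤ 1) : cutoff t = 0 :=
  Real.smoothTransition.zero_of_nonpos (sub_nonpos.2 ht)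

theorem cutoff_of_ge {t : ℝ} (ht : 2 ≤ t) : cutoff t = 1 :=
  Real.smoothTransition.one_of_one_le (by linarith)

theorem deriv_cutoff_eq_zero {t : ℝ} (ht : t ∉ Icc 1 2) : deriv cutoff t = 0 := by
  rw [mem_Icc, not_and_or, not_le, not_le] at ht
  rcases ht with ht | ht
  · have hev : cutoff =ᶠ[𝓝 t] fun _ => 0 := by
      filter_upwards [Iio_mem_nhds ht] with y hy using cutoff_of_le (mem_Iio.1 hy).le
    rw [hev.deriv_eq, deriv_const]
  · have hev : cutoff =ᶠ[𝓝 t] fun _ => 1 := by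
      filter_upwards [Ioi_mem_nhds ht] with y hy using cutoff_of_ge (mem_Ioi.1 hy).le
    rw [hev.deriv_eq, deriv_const]

theorem continuous_deriv_cutoff : Continuous (deriv cutoff) :=
  contDiff_cutoff.continuous_deriv le_rfl

theorem exists_norm_deriv_cutoff_le : ∃ M : ℝ≥0, ∀ t, ‖deriv cutoff t‖ ≤ M :=
  exists_norm_le_of_continuousOn_of_eq_zero isCompact_Icc continuous_deriv_cutoff.continuousOn
    fun _ ht => deriv_cutoff_eq_zero ht

theorem integral_deriv_cutoff : ∫ t in Ioi (0 : ℝ), deriv cutoff t = 1 := by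
  have hint : Integrable (deriv cutoff) :=
    (continuous_deriv_cutoff.continuousOn.integrableOn_compact
      isCompact_Icc).integrable_of_forall_notMem_eq_zero fun _ ht => deriv_cutoff_eq_zero ht
  have hlim : Tendsto cutoff atTop (𝓝 1) :=
    tendsto_const_nhds.congr' ((eventually_ge_atTop 2).mono fun t ht => (cutoff_of_ge ht).symm)
  rw [integral_Ioi_of_hasDerivAt_of_tendsto' (fun t _ => (contDiff_cutoff.differentiable
    one_ne_zero t).hasDerivAt) hint.integrableOn hlim, cutoff_of_le zero_le_one, sub_zero]

theorem eventually_cutoff_div_eq_one {m : ℝ} (hm : 0 < m) :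
    ∀ᶠ s in 𝓝[>] (0 : ℝ), ∀ t ≥ m, cutoff (t / s) = 1 := by
  filter_upwards [Ioo_mem_nhdsGT (half_pos hm)] with s hs t ht
  refine cutoff_of_ge ((le_div_iff₀ hs.1).2 ?_)
  linarith [hs.2]

theorem tendsto_setIntegral_cutoff_mul {α : Type*} [MeasurableSpace α] {μ : Measure α} {u f : α → ℝ}
    (hu : Measurable u) (hf : IntegrableOn f {x | 0 < u x} μ) :
    Tendsto (fun s => ∫ x in {x | 0 < u x}, cutoff (u x / s) * f x ∂μ) (𝓝[>] 0)
      (𝓝 (∫ x in {x | 0 < u x}, f x ∂μ)) := by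
  refine tendsto_integral_filter_of_dominated_convergence (fun x => ‖f x‖)
    (Eventually.of_forall fun s => ?_) (Eventually.of_forall fun s => ae_of_all _ fun x => ?_)
    hf.norm ?_
  · exact (contDiff_cutoff.continuous.measurable.comp
      (hu.div_const s)).aestronglyMeasurable.mul hf.aestronglyMeasurable
  · rw [norm_mul, Real.norm_of_nonneg (show 0 ≤ cutoff _ from Real.smoothTransition.nonneg _)]
    exact mul_le_of_le_one_left (norm_nonneg _) (Real.smoothTransition.le_one _)
  · filter_upwards [ae_restrict_mem (measurableSet_lt measurable_const hu)] with x hx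
    refine tendsto_const_nhds.congr' ?_
    filter_upwards [eventually_cutoff_div_eq_one (m := u x) hx] with s hs
    rw [hs (u x) le_rfl, one_mul]

end Cutoff

section Green

variable {k : ℕ} {u U v φ f : 𝔼[k + 1] → ℝ} {G : 𝔼[k + 1] → 𝔼[k + 1]} {A C K W : Set 𝔼[k + 1]}
  {s : ℝ} {x : 𝔼[k + 1]}

theorem isLayerKernel_deriv_cutoff_mul (hC : IsCompact C) (hCu : C ⊆ {x | 0 < u x} ∪ freeBoundary u)
    (hf : ContinuousOn f ({x | 0 < u x} ∪ freeBoundary u)) (hf0 : ∀ x ∉ C, f x = 0) :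
    IsLayerKernel u (freeBoundary u) C fun θ x => deriv cutoff θ * f x := by
  obtain ⟨M, hM⟩ := exists_norm_deriv_cutoff_le
  obtain ⟨N, hN⟩ := exists_norm_le_of_continuousOn_of_eq_zero hC (hf.mono hCu) hf0
  have hfm := measurable_of_continuousOn_of_eq_zero hC.measurableSet (hf.mono hCu) hf0
  refine ⟨?_, ⟨M * N, fun θ x => ?_⟩, ⟨2, fun θ x hx => ?_⟩, fun θ x hx => ?_, fun x hx => ?_⟩
  · exact (continuous_deriv_cutoff.measurable.comp measurable_fst).mul (hfm.comp measurable_snd)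
  · rw [norm_mul]
    exact mul_le_mul (hM θ) (hN x) (norm_nonneg _) M.coe_nonneg
  · by_contra hθ
    exact left_ne_zero_of_mul hx (deriv_cutoff_eq_zero fun hmem => hθ hmem.2)
  · exact not_imp_comm.1 (hf0 x) (right_ne_zero_of_mul hx)
  · exact ae_of_all _ fun θ => ((hf x (Or.inr hx)).mono subset_union_left).const_mul _

theorem IsSmoothCone.tendsto_deriv_cutoff_layer (h : IsSmoothCone u U W) (hC : IsCompact C)
    (hC0 : 0 ∉ C) (hCu : C ⊆ {x | 0 < u x} ∪ freeBoundary u)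
    (hf : ContinuousOn f ({x | 0 < u x} ∪ freeBoundary u)) (hf0 : ∀ x ∉ C, f x = 0) :
    Tendsto (fun s => s⁻¹ * ∫ x in {x | 0 < u x}, deriv cutoff (u x / s) * f x) (𝓝[>] 0)
      (𝓝 (∫ x in freeBoundary u, f x ∂μHE[k])) := by
  simpa only [integral_mul_const, integral_deriv_cutoff, one_mul] using
    h.tendsto_layer_integral (isLayerKernel_deriv_cutoff_mul hC hCu hf hf0) hC hC0

theorem IsSmoothCone.hasGradientAt_mul_cutoff (h : IsSmoothCone u U W)
    (ht : IsTestFunction u φ G C) (hx : 0 < u x) :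
    HasGradientAt (fun x => φ x * cutoff (u x / s))
      (cutoff (u x / s) • G x + (s⁻¹ * deriv cutoff (u x / s) * φ x) • gradient U x) x := by
  have hu : HasFDerivAt u (InnerProductSpace.toDual ℝ _ (gradient U x)) x :=
    h.gradient_eq hx ▸ (h.differentiableAt_of_pos hx).hasGradientAt.hasFDerivAt
  have hcut := (contDiff_cutoff.differentiable one_ne_zero (u x / s)).hasDerivAt.comp_hasFDerivAt x
    (hu.mul_const s⁻¹)
  refine hasGradientAt_iff_hasFDerivAt.2
    (((ht.hasGradientAt x hx).hasFDerivAt.mul hcut).congr_fderiv ?_)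
  simp only [map_add, map_smul, smul_smul, Function.comp_apply, div_eq_mul_inv]
  module

theorem IsTestFunction.continuousOn_inner_grad (ht : IsTestFunction u φ G C) (hA : IsOpen A)
    (hCA : C ⊆ A) {X : 𝔼[k + 1] → 𝔼[k + 1]} (hX : ContinuousOn X (regularDomain u A)) :
    ContinuousOn (fun x => ⟪G x, X x⟫) ({x | 0 < u x} ∪ freeBoundary u) :=
  continuousOn_of_continuousOn_regularDomain hA ht.isCompact.isClosed hCA
    ((ht.continuousOn_grad.mono (regularDomain_eq_inter.trans_subset inter_subset_left)).inner hX)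
    fun x hx => by rw [ht.grad_eq_zero x hx, inner_zero_left]

theorem IsTestFunction.continuousOn_mul (ht : IsTestFunction u φ G C) (hA : IsOpen A) (hCA : C ⊆ A)
    (hf : ContinuousOn f (regularDomain u A)) :
    ContinuousOn (fun x => φ x * f x) ({x | 0 < u x} ∪ freeBoundary u) :=
  continuousOn_of_continuousOn_regularDomain hA ht.isCompact.isClosed hCA
    ((ht.continuousOn.mono (regularDomain_eq_inter.trans_subset inter_subset_left)).mul hf)
    fun x hx => by rw [ht.eq_zero x hx, zero_mul]

theorem IsTestFunction.integrable_inner_grad (ht : IsTestFunction u φ G C) (hA : IsOpen A)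
    (hCA : C ⊆ A) {X : 𝔼[k + 1] → 𝔼[k + 1]} (hX : ContinuousOn X (regularDomain u A)) :
    Integrable fun x => ⟪G x, X x⟫ :=
  (((ht.continuousOn_inner_grad hA hCA hX).mono ht.subset).integrableOn_compact
    ht.isCompact).integrable_of_forall_notMem_eq_zero fun x hx => by
      rw [ht.grad_eq_zero x hx, inner_zero_left]

theorem IsSmoothCone.continuousOn_inner_gradient_gradientWithin (h : IsSmoothCone u U W)
    (hA : IsOpen A) (hv : ContDiffOn ℝ 1 v (regularDomain u A)) :
    ContinuousOn (fun x => ⟪gradient U x, gradientWithin v (regularDomain u A) x⟫)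
      (regularDomain u A) :=
  (h.contDiffOn_gradient.continuousOn.mono (regularDomain_subset h)).inner
    (h.continuousOn_gradientWithin hA hv)

theorem IsSmoothCone.isLayerKernel_deriv_cutoff_mul_inner (h : IsSmoothCone u U W) (hA : IsOpen A)
    (ht : IsTestFunction u φ G C) (hCA : C ⊆ A) (hv : ContDiffOn ℝ 1 v (regularDomain u A)) :
    IsLayerKernel u (freeBoundary u) C fun θ x =>
      deriv cutoff θ * (φ x * ⟪gradient U x, gradientWithin v (regularDomain u A) x⟫) :=
  isLayerKernel_deriv_cutoff_mul ht.isCompact ht.subset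
    (ht.continuousOn_mul hA hCA (h.continuousOn_inner_gradient_gradientWithin hA hv))
    fun x hx => by rw [ht.eq_zero x hx, zero_mul]

theorem IsSmoothCone.integral_cutoff_add_layer_eq_neg_lap (h : IsSmoothCone u U W) (hA : IsOpen A)
    (ht : IsTestFunction u φ G C) (hCA : C ⊆ A) (hv2 : ContDiffOn ℝ 2 v ({x | 0 < u x} ∩ A))
    (hv : ContDiffOn ℝ 1 v (regularDomain u A)) (hs : 0 < s) :
    IntegrableOn (fun x => lap v x * (φ x * cutoff (u x / s))) ({x | 0 < u x} ∩ A) ∧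
      (∫ x in {x | 0 < u x}, cutoff (u x / s) * ⟪G x, gradientWithin v (regularDomain u A) x⟫) +
          s⁻¹ * (∫ x in {x | 0 < u x}, deriv cutoff (u x / s) *
            (φ x * ⟪gradient U x, gradientWithin v (regularDomain u A) x⟫)) =
        -∫ x in {x | 0 < u x} ∩ A, lap v x * (φ x * cutoff (u x / s)) := by
  have hO := h.isOpen_pos.inter hA
  have hCs : IsCompact (C ∩ {x | s ≤ u x}) :=
    ht.isCompact.inter_right (isClosed_le continuous_const h.continuous)
  have hψ : ContDiffOn ℝ 1 (fun x => φ x * cutoff (u x / s)) ({x | 0 < u x} ∩ A) :=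
    ((ht.contDiffOn h.isOpen_pos).mul (contDiff_cutoff.comp_contDiffOn
      ((h.contDiffOn_pos.of_le (by simp)).div_const s))).mono inter_subset_left
  have hψ0 : ∀ x ∈ {x | 0 < u x} ∩ A, x ∉ C ∩ {x | s ≤ u x} → φ x * cutoff (u x / s) = 0 := by
    intro x _ hx
    by_cases hxC : x ∈ C
    · have hus : u x < s := not_le.1 fun hle => hx ⟨hxC, hle⟩
      rw [cutoff_of_le ((div_le_one hs).2 hus.le), mul_zero]
    · rw [ht.eq_zero x hxC, zero_mul]
  obtain ⟨-, hint, hparts⟩ := setIntegral_inner_gradient_eq_neg_lap hO hCs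
    (fun x hx => ⟨hs.trans_le hx.2, hCA hx.1⟩) hv2 hψ hψ0
  have hlayer := (h.isLayerKernel_deriv_cutoff_mul_inner hA ht hCA hv).integrableOn_comp_div
    h.continuous.measurable ht.isCompact s
  refine ⟨hint, ?_⟩
  rw [← hparts, ← integral_const_mul, ← integral_add ?_ (hlayer.const_mul _)]
  · rw [setIntegral_eq_of_subset_of_forall_sdiff_eq_zero h.isOpen_pos.measurableSet
      inter_subset_left fun x hx => ?_]
    · refine setIntegral_congr_fun hO.measurableSet fun x hx => ?_
      simp only [(h.hasGradientAt_mul_cutoff ht hx.1).gradient, h.gradientWithin_eq hA hx,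
        inner_add_left, real_inner_smul_left]
      ring
    · have hxC : x ∉ C := fun hxC => hx.2 ⟨hx.1, hCA hxC⟩
      simp only [ht.eq_zero x hxC, ht.grad_eq_zero x hxC, inner_zero_left, zero_mul, mul_zero,
        add_zero]
  · refine (ht.integrable_inner_grad hA hCA
      (h.continuousOn_gradientWithin hA hv)).integrableOn.bdd_mul (c := 1) ?_ ?_
    · exact (contDiff_cutoff.continuous.measurable.comp
        (h.continuous.measurable.div_const s)).aestronglyMeasurable
    · exact ae_of_all _ fun x => by
        rw [Real.norm_of_nonneg (show 0 ≤ cutoff _ from Real.smoothTransition.nonneg _)]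
        exact Real.smoothTransition.le_one _

-- Green's first identity. The Laplacian term is kept as a limit: `lap v` may fail to be integrable
-- up to the free boundary.
theorem IsSmoothCone.tendsto_setIntegral_lap_mul_cutoff (h : IsSmoothCone u U W) (hA : IsOpen A)
    (ht : IsTestFunction u φ G C) (hCA : C ⊆ A) (hv2 : ContDiffOn ℝ 2 v ({x | 0 < u x} ∩ A))
    (hv : ContDiffOn ℝ 1 v (regularDomain u A)) :
    Tendsto (fun s => ∫ x in {x | 0 < u x} ∩ A, lap v x * (φ x * cutoff (u x / s))) (𝓝[>] 0)
      (𝓝 ((∫ x in freeBoundary u ∩ A, φ x * dNu U v x ∂μHE[k]) -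
        ∫ x in {x | 0 < u x}, ⟪G x, gradientWithin v (regularDomain u A) x⟫)) := by
  have hbulk := tendsto_setIntegral_cutoff_mul h.continuous.measurable
    (ht.integrable_inner_grad hA hCA (h.continuousOn_gradientWithin hA hv)).integrableOn
  have hlayer := h.tendsto_deriv_cutoff_layer ht.isCompact ht.zero_notMem ht.subset
    (ht.continuousOn_mul hA hCA (h.continuousOn_inner_gradient_gradientWithin hA hv))
    fun x hx => by rw [ht.eq_zero x hx, zero_mul]
  have hsurface : ∫ x in freeBoundary u,
      φ x * ⟪gradient U x, gradientWithin v (regularDomain u A) x⟫ ∂μHE[k] =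
      -∫ x in freeBoundary u ∩ A, φ x * dNu U v x ∂μHE[k] := by
    rw [← integral_neg, setIntegral_eq_of_subset_of_forall_sdiff_eq_zero
      (measurableSet_freeBoundary u) inter_subset_left fun x hx => ?_]
    · refine setIntegral_congr_fun ((measurableSet_freeBoundary u).inter hA.measurableSet)
        fun x hx => ?_
      rw [h.dNu_eq hA hv hx, real_inner_comm, inner_gradientWithin_left, mul_neg, neg_neg]
    · rw [ht.eq_zero x fun hxC => hx.2 ⟨hx.1, hCA hxC⟩, zero_mul]
  rw [← neg_sub, sub_eq_add_neg, ← hsurface]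
  refine (hbulk.add hlayer).neg.congr' ?_
  filter_upwards [self_mem_nhdsWithin] with s hs
  rw [(h.integral_cutoff_add_layer_eq_neg_lap hA ht hCA hv2 hv hs).2, neg_neg]

theorem IsSmoothCone.setIntegral_inner_add_lap_le (h : IsSmoothCone u U W) (hA : IsOpen A)
    (ht : IsTestFunction u φ G C) (hCA : C ⊆ A) (hv2 : ContDiffOn ℝ 2 v ({x | 0 < u x} ∩ A))
    (hv : ContDiffOn ℝ 1 v (regularDomain u A)) (hlap : ∀ x ∈ {x | 0 < u x} ∩ A, 0 ≤ lap v x)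
    (hK : IsCompact K) (hKO : K ⊆ {x | 0 < u x} ∩ A) :
    (∫ x in {x | 0 < u x}, ⟪G x, gradientWithin v (regularDomain u A) x⟫) +
        ∫ x in K, lap v x * φ x ≤
      ∫ x in freeBoundary u ∩ A, φ x * dNu U v x ∂μHE[k] := by
  have hcut : ∀ᶠ s in 𝓝[>] (0 : ℝ), ∀ x ∈ K, cutoff (u x / s) = 1 := by
    rcases K.eq_empty_or_nonempty with rfl | hne
    · exact Eventually.of_forall fun _ x hx => hx.elim
    · obtain ⟨y, hyK, hy⟩ := hK.exists_isMinOn hne h.continuous.continuousOn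
      filter_upwards [eventually_cutoff_div_eq_one (m := u y) (hKO hyK).1] with s hs x hx
      exact hs (u x) (hy hx)
  suffices hle : ∫ x in K, lap v x * φ x ≤ (∫ x in freeBoundary u ∩ A, φ x * dNu U v x ∂μHE[k]) -
      ∫ x in {x | 0 < u x}, ⟪G x, gradientWithin v (regularDomain u A) x⟫ by linarith
  refine ge_of_tendsto (h.tendsto_setIntegral_lap_mul_cutoff hA ht hCA hv2 hv) ?_
  filter_upwards [self_mem_nhdsWithin, hcut] with s hs hone
  calc ∫ x in K, lap v x * φ x = ∫ x in K, lap v x * (φ x * cutoff (u x / s)) :=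
        setIntegral_congr_fun hK.measurableSet fun x hx => by simp only [hone x hx, mul_one]
    _ ≤ ∫ x in {x | 0 < u x} ∩ A, lap v x * (φ x * cutoff (u x / s)) := by
      refine setIntegral_mono_set
        (h.integral_cutoff_add_layer_eq_neg_lap hA ht hCA hv2 hv hs).1 ?_ hKO.eventuallyLE
      filter_upwards [ae_restrict_mem (h.isOpen_pos.inter hA).measurableSet] with x hx
      exact mul_nonneg (hlap x hx) (mul_nonneg (ht.nonneg x) (Real.smoothTransition.nonneg _))

end Green

section Strictness

theorem continuousOn_lap {n : ℕ} {O : Set 𝔼[n]} (hO : IsOpen O) {w : 𝔼[n] → ℝ}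
    (hw : ContDiffOn ℝ 2 w O) : ContinuousOn (lap w) O :=
  continuousOn_finsetSum _ fun _ _ =>
    (((hw.fderiv_of_isOpen hO one_add_one_eq_two.le).clm_apply
      contDiffOn_const).continuousOn_fderiv_of_isOpen hO le_rfl).clm_apply continuousOn_const

theorem exists_isOpen_forall_le {α : Type*} [TopologicalSpace α] {s : Set α} {f g : α → ℝ} {x : α}
    (hf : ContinuousWithinAt f s x) (hg : ContinuousWithinAt g s x) (hfx : 0 < f x)
    (hgx : 0 < g x) :
    ∃ m > 0, ∃ V, IsOpen V ∧ x ∈ V ∧ ∀ y ∈ V ∩ s, m ≤ f y ∧ m ≤ g y := by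
  obtain ⟨m, hm, hmlt⟩ := exists_between (lt_min hfx hgx)
  have hev := (hf.eventually (lt_mem_nhds (hmlt.trans_le (min_le_left _ _)))).and
    (hg.eventually (lt_mem_nhds (hmlt.trans_le (min_le_right _ _))))
  obtain ⟨V, hV, hxV, hVs⟩ := mem_nhdsWithin.1 hev
  exact ⟨m, hm, V, hV, hxV, fun y hy => ⟨(hVs hy).1.le, (hVs hy).2.le⟩⟩

theorem sub_le_truncation {n : ℕ} {u v : 𝔼[n] → ℝ} {A : Set 𝔼[n]} {ε : ℝ} {x : 𝔼[n]} (hε : 0 < ε)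
    (hx : x ∈ regularDomain u A) : v x - 2 * ε ≤ truncation u A v ε x :=
  (sub_le_softPosPart hε _).trans_eq (truncation_of_mem hx).symm

theorem exists_pos_le_setIntegral_truncation_mul {n : ℕ} {u v f : 𝔼[n] → ℝ} {A T : Set 𝔼[n]}
    {μ : Measure 𝔼[n]} {m : ℝ} (hT : MeasurableSet T) (hTS : T ⊆ regularDomain u A)
    (hμ0 : μ T ≠ 0) (hμ : μ T ≠ ∞) (hm : 0 < m) (hv : ∀ x ∈ T, m ≤ v x) (hf : ∀ x ∈ T, m ≤ f x)
    (hint : ∀ ε > 0, IntegrableOn (fun x => truncation u A v ε x * f x) T μ) :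
    ∃ κ > 0, ∀ᶠ ε in 𝓝[>] 0, κ ≤ ∫ x in T, truncation u A v ε x * f x ∂μ := by
  refine ⟨m / 2 * m * μ.real T, mul_pos (by positivity) (ENNReal.toReal_pos hμ0 hμ), ?_⟩
  filter_upwards [Ioo_mem_nhdsGT (by positivity : 0 < m / 4)] with ε hε
  refine setIntegral_ge_of_const_le_real hT hμ (fun x hx => ?_) (hint ε hε.1)
  have htrunc : m / 2 ≤ truncation u A v ε x := by
    linarith [sub_le_truncation (v := v) hε.1 (hTS hx), hv x hx, hε.2]
  exact mul_le_mul htrunc (hf x hx) hm.le (by linarith)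

variable {k : ℕ} {u U v φ f : 𝔼[k + 1] → ℝ} {G : 𝔼[k + 1] → 𝔼[k + 1]} {A C K W : Set 𝔼[k + 1]}
  {ε : ℝ} {x : 𝔼[k + 1]}

theorem IsSmoothCone.integrableOn_mul (h : IsSmoothCone u U W) (hA : IsOpen A)
    (ht : IsTestFunction u φ G C) (hCA : C ⊆ A) (hf : ContinuousOn f (regularDomain u A)) :
    IntegrableOn (fun x => φ x * f x) (freeBoundary u) μHE[k] := by
  have hcont := (ht.continuousOn_mul hA hCA hf).mono ht.subset
  have hzero : ∀ x ∉ C, φ x * f x = 0 := fun x hx => by rw [ht.eq_zero x hx, zero_mul]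
  obtain ⟨M, hM⟩ := exists_norm_le_of_continuousOn_of_eq_zero ht.isCompact hcont hzero
  refine integrable_of_norm_le_of_eq_zero ht.isCompact.measurableSet ?_
    (measurable_of_continuousOn_of_eq_zero ht.isCompact.measurableSet hcont
      hzero).aestronglyMeasurable hM hzero
  rw [Measure.restrict_apply ht.isCompact.measurableSet, inter_comm]
  exact (h.measure_freeBoundary_inter_lt_top ht.isCompact ht.zero_notMem).ne

/-- The defect `H v - ∂_ν v` in the boundary condition of a subsolution, extended continuously from
the free boundary to `regularDomain u A`. -/
def normalDefect {n : ℕ} (u U : 𝔼[n] → ℝ) (A : Set 𝔼[n]) (v : 𝔼[n] → ℝ) (x : 𝔼[n]) : ℝ :=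
  meanCurv U x * v x + ⟪gradient U x, gradientWithin v (regularDomain u A) x⟫

theorem IsSmoothCone.normalDefect_eq (h : IsSmoothCone u U W) (hA : IsOpen A)
    (hv : ContDiffOn ℝ 1 v (regularDomain u A)) (hx : x ∈ freeBoundary u ∩ A) :
    normalDefect u U A v x = meanCurv U x * v x - dNu U v x := by
  rw [normalDefect, h.dNu_eq hA hv hx, real_inner_comm, inner_gradientWithin_left, sub_neg_eq_add]

theorem IsSmoothCone.continuousOn_meanCurv_mul (h : IsSmoothCone u U W)
    (hv : ContinuousOn v (regularDomain u A)) :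
    ContinuousOn (fun x => meanCurv U x * v x) (regularDomain u A) :=
  (h.continuousOn_meanCurv.mono (regularDomain_subset h)).mul hv

theorem IsSmoothCone.continuousOn_normalDefect (h : IsSmoothCone u U W) (hA : IsOpen A)
    (hv : ContDiffOn ℝ 1 v (regularDomain u A)) :
    ContinuousOn (normalDefect u U A v) (regularDomain u A) :=
  (h.continuousOn_meanCurv_mul hv.continuousOn).add
    (h.continuousOn_inner_gradient_gradientWithin hA hv)

namespace IsSubsolution

theorem superlevel_subset : {x | x ∈ regularDomain u A ∧ ε ≤ v x} ⊆ A := fun _ hx =>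
  (regularDomain_eq_inter.subset hx.1).2

theorem normalDefect_nonneg (h : IsSmoothCone u U W) (d : IsSubsolution u U A v)
    (hx : x ∈ freeBoundary u ∩ A) : 0 ≤ normalDefect u U A v x := by
  rw [h.normalDefect_eq d.isOpen d.contDiffOn hx]
  exact sub_nonneg.2 (d.dNu_le x hx)

theorem integrableOn_truncation_mul (h : IsSmoothCone u U W) (d : IsSubsolution u U A v)
    (hε : 0 < ε) (hf : ContinuousOn f (regularDomain u A)) :
    IntegrableOn (fun x => truncation u A v ε x * f x) (freeBoundary u ∩ A) μHE[k] :=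
  (h.integrableOn_mul d.isOpen (d.isTestFunction_truncation h hε) superlevel_subset hf).mono_set
    inter_subset_left

theorem setIntegral_inner_add_defects_le (h : IsSmoothCone u U W) (d : IsSubsolution u U A v)
    (hε : 0 < ε) (hK : IsCompact K) (hKO : K ⊆ {x | 0 < u x} ∩ A) :
    (∫ x in {x | 0 < u x}, ⟪truncationGrad u A v ε x, gradientWithin v (regularDomain u A) x⟫) +
        (∫ x in K, truncation u A v ε x * lap v x) +
        ∫ x in freeBoundary u ∩ A, truncation u A v ε x * normalDefect u U A v x ∂μHE[k] ≤
      ∫ x in freeBoundary u ∩ A, truncation u A v ε x * (meanCurv U x * v x) ∂μHE[k] := by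
  have hgreen := h.setIntegral_inner_add_lap_le d.isOpen (d.isTestFunction_truncation h hε)
    superlevel_subset d.contDiffOn_two d.contDiffOn d.lap_nonneg hK hKO
  have hdefect : ∫ x in freeBoundary u ∩ A, truncation u A v ε x * dNu U v x ∂μHE[k] =
      (∫ x in freeBoundary u ∩ A, truncation u A v ε x * (meanCurv U x * v x) ∂μHE[k]) -
        ∫ x in freeBoundary u ∩ A, truncation u A v ε x * normalDefect u U A v x ∂μHE[k] := by
    rw [← integral_sub
      (d.integrableOn_truncation_mul h hε (h.continuousOn_meanCurv_mul d.contDiffOn.continuousOn))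
      (d.integrableOn_truncation_mul h hε (h.continuousOn_normalDefect d.isOpen d.contDiffOn))]
    refine setIntegral_congr_fun ((measurableSet_freeBoundary u).inter d.isOpen.measurableSet)
      fun x hx => ?_
    simp only [h.normalDefect_eq d.isOpen d.contDiffOn hx]
    ring
  simp only [mul_comm (lap v _)] at hgreen
  linarith

theorem setIntegral_defect_nonneg (h : IsSmoothCone u U W) (d : IsSubsolution u U A v)
    (hε : 0 < ε) :
    0 ≤ ∫ x in freeBoundary u ∩ A, truncation u A v ε x * normalDefect u U A v x ∂μHE[k] :=
  setIntegral_nonneg ((measurableSet_freeBoundary u).inter d.isOpen.measurableSet) fun x hx =>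
    mul_nonneg (truncation_nonneg hε x) (d.normalDefect_nonneg h hx)

theorem exists_pos_le_setIntegral_lap (h : IsSmoothCone u U W) (d : IsSubsolution u U A v)
    (hx : x ∈ {x | 0 < u x} ∩ A) (hvx : 0 < v x) (hlap : 0 < lap v x) :
    ∃ K, IsCompact K ∧ K ⊆ {x | 0 < u x} ∩ A ∧
      ∃ κ > 0, ∀ᶠ ε in 𝓝[>] 0, κ ≤ ∫ x in K, truncation u A v ε x * lap v x := by
  have hO := h.isOpen_pos.inter d.isOpen
  have hcont := continuousOn_lap hO d.contDiffOn_two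
  obtain ⟨m, hm, V, hV, hxV, hVO⟩ :=
    exists_isOpen_forall_le (d.contDiffOn_two.continuousOn x hx) (hcont x hx) hvx hlap
  obtain ⟨r, hr, hball⟩ := nhds_basis_closedBall.mem_iff.1 ((hV.inter hO).mem_nhds ⟨hxV, hx⟩)
  have hK := isCompact_closedBall x r
  have hKO : closedBall x r ⊆ {x | 0 < u x} ∩ A := fun y hy => (hball hy).2
  refine ⟨closedBall x r, hK, hKO, exists_pos_le_setIntegral_truncation_mul measurableSet_closedBall
    (hKO.trans subset_union_left) (measure_closedBall_pos volume x hr).ne'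
    measure_closedBall_lt_top.ne hm (fun y hy => (hVO y (hball hy)).1)
    (fun y hy => (hVO y (hball hy)).2) fun ε hε => ContinuousOn.integrableOn_compact hK ?_⟩
  exact ((d.isTestFunction_truncation h hε).continuousOn.mono
    (hKO.trans fun y hy => Or.inl hy.1)).mul (hcont.mono hKO)

theorem measure_freeBoundary_inter_lt_top (h : IsSmoothCone u U W) (d : IsSubsolution u U A v) :
    μHE[k] (freeBoundary u ∩ A) < ∞ :=
  (measure_mono (inter_subset_inter_right _ subset_closure)).trans_lt
    (h.measure_freeBoundary_inter_lt_top d.isBounded.isCompact_closure d.zero_notMem_closure)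

theorem exists_pos_le_setIntegral_normalDefect (h : IsSmoothCone u U W)
    (d : IsSubsolution u U A v) (hx : x ∈ freeBoundary u ∩ A) (hvx : 0 < v x)
    (hdNu : dNu U v x < meanCurv U x * v x) :
    ∃ κ > 0, ∀ᶠ ε in 𝓝[>] 0, κ ≤
      ∫ x in freeBoundary u ∩ A, truncation u A v ε x * normalDefect u U A v x ∂μHE[k] := by
  have hxS : x ∈ regularDomain u A := Or.inr hx
  have hcont := h.continuousOn_normalDefect d.isOpen d.contDiffOn
  have hq : 0 < normalDefect u U A v x := by
    rw [h.normalDefect_eq d.isOpen d.contDiffOn hx]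
    exact sub_pos.2 hdNu
  obtain ⟨m, hm, V, hV, hxV, hVS⟩ :=
    exists_isOpen_forall_le (d.contDiffOn.continuousOn x hxS) (hcont x hxS) hvx hq
  have hmeas := (measurableSet_freeBoundary u).inter d.isOpen.measurableSet
  have hsub : freeBoundary u ∩ (A ∩ V) ⊆ freeBoundary u ∩ A :=
    inter_subset_inter_right _ inter_subset_left
  have hVle : ∀ y ∈ freeBoundary u ∩ (A ∩ V), m ≤ v y ∧ m ≤ normalDefect u U A v y := fun y hy =>
    hVS y ⟨hy.2.2, Or.inr (hsub hy)⟩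
  have hint (ε : ℝ) (hε : 0 < ε) := d.integrableOn_truncation_mul h hε hcont
  obtain ⟨κ, hκ, hle⟩ := exists_pos_le_setIntegral_truncation_mul
    ((measurableSet_freeBoundary u).inter (d.isOpen.inter hV).measurableSet)
    (hsub.trans subset_union_right)
    (h.measure_freeBoundary_inter_pos hx.1 (d.isOpen.inter hV) ⟨hx.2, hxV⟩).ne'
    ((measure_mono hsub).trans_lt (d.measure_freeBoundary_inter_lt_top h)).ne hm
    (fun y hy => (hVle y hy).1) (fun y hy => (hVle y hy).2) fun ε hε => (hint ε hε).mono_set hsub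
  refine ⟨κ, hκ, ?_⟩
  filter_upwards [hle, self_mem_nhdsWithin] with ε hκε hε
  refine hκε.trans (setIntegral_mono_set (hint ε hε) ?_ hsub.eventuallyLE)
  filter_upwards [ae_restrict_mem hmeas] with y hy
  exact mul_nonneg (truncation_nonneg hε y) (d.normalDefect_nonneg h hy)

theorem exists_pos_setIntegral_inner_add_le (h : IsSmoothCone u U W) (d : IsSubsolution u U A v)
    (hstrict : (∃ x ∈ {x | 0 < u x} ∩ A, 0 < v x ∧ 0 < lap v x) ∨
      ∃ x ∈ freeBoundary u ∩ A, 0 < v x ∧ dNu U v x < meanCurv U x * v x) :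
    ∃ κ > 0, ∀ᶠ ε in 𝓝[>] 0,
      (∫ x in {x | 0 < u x}, ⟪truncationGrad u A v ε x, gradientWithin v (regularDomain u A) x⟫) +
          κ ≤
        ∫ x in freeBoundary u ∩ A, truncation u A v ε x * (meanCurv U x * v x) ∂μHE[k] := by
  rcases hstrict with ⟨x, hx, hvx, hlap⟩ | ⟨x, hx, hvx, hdNu⟩
  · obtain ⟨K, hK, hKO, κ, hκ, hle⟩ := d.exists_pos_le_setIntegral_lap h hx hvx hlap
    refine ⟨κ, hκ, ?_⟩
    filter_upwards [hle, self_mem_nhdsWithin] with ε hκε hε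
    linarith [d.setIntegral_inner_add_defects_le h hε hK hKO, d.setIntegral_defect_nonneg h hε]
  · obtain ⟨κ, hκ, hle⟩ := d.exists_pos_le_setIntegral_normalDefect h hx hvx hdNu
    refine ⟨κ, hκ, ?_⟩
    filter_upwards [hle, self_mem_nhdsWithin] with ε hκε hε
    have hgreen := d.setIntegral_inner_add_defects_le h hε isCompact_empty (empty_subset _)
    rw [setIntegral_empty] at hgreen
    linarith

end IsSubsolution

end Strictness

section Instability

variable {k : ℕ} {u U v f : 𝔼[k + 1] → ℝ} {A W : Set 𝔼[k + 1]} {ε : ℝ} {x : 𝔼[k + 1]}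

theorem truncation_le (hε : 0 < ε) (hx : x ∈ regularDomain u A) (hv : 0 ≤ v x) :
    truncation u A v ε x ≤ v x :=
  (truncation_of_mem hx).trans_le (softPosPart_le hε hv)

theorem tendsto_truncation (hx : x ∈ regularDomain u A) (hv : 0 ≤ v x) :
    Tendsto (fun ε => truncation u A v ε x) (𝓝[>] 0) (𝓝 (v x)) := by
  have hlow : Tendsto (fun ε : ℝ => v x - 2 * ε) (𝓝[>] 0) (𝓝 (v x)) :=
    (Continuous.tendsto' (by fun_prop) 0 _ (by ring)).mono_left nhdsWithin_le_nhds
  refine tendsto_of_tendsto_of_tendsto_of_le_of_le' hlow tendsto_const_nhds ?_ ?_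
  · filter_upwards [self_mem_nhdsWithin] with ε hε using sub_le_truncation hε hx
  · filter_upwards [self_mem_nhdsWithin] with ε hε using truncation_le hε hx hv

theorem inner_truncationGrad (x : 𝔼[k + 1]) :
    ⟪truncationGrad u A v ε x, gradientWithin v (regularDomain u A) x⟫ =
      (regularDomain u A).indicator
        (fun x => softStep ε (v x) * ‖gradientWithin v (regularDomain u A) x‖ ^ 2) x := by
  by_cases hx : x ∈ regularDomain u A
  · rw [truncationGrad_of_mem hx, indicator_of_mem hx, real_inner_smul_left,
      real_inner_self_eq_norm_sq]
  · rw [truncationGrad, indicator_of_notMem hx, indicator_of_notMem hx, inner_zero_left]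

theorem norm_truncationGrad_sq_le (hε : 0 < ε) (x : 𝔼[k + 1]) :
    ‖truncationGrad u A v ε x‖ ^ 2 ≤
      ⟪truncationGrad u A v ε x, gradientWithin v (regularDomain u A) x⟫ := by
  rw [inner_truncationGrad]
  by_cases hx : x ∈ regularDomain u A
  · have hstep := softStep_nonneg hε.le (v x)
    rw [truncationGrad_of_mem hx, indicator_of_mem hx, norm_smul, Real.norm_of_nonneg hstep,
      mul_pow]
    exact mul_le_mul_of_nonneg_right
      (pow_le_of_le_one hstep (softStep_le_one hε _) two_ne_zero) (by positivity)
  · rw [truncationGrad, indicator_of_notMem hx, indicator_of_notMem hx, norm_zero, zero_pow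
      two_ne_zero]

theorem IsSmoothCone.setIntegral_inner_truncationGrad (h : IsSmoothCone u U W) (hA : IsOpen A) :
    ∫ x in {x | 0 < u x}, ⟪truncationGrad u A v ε x, gradientWithin v (regularDomain u A) x⟫ =
      ∫ x in {x | 0 < u x} ∩ A, softStep ε (v x) * ‖gradient v x‖ ^ 2 := by
  rw [setIntegral_eq_of_subset_of_forall_sdiff_eq_zero h.isOpen_pos.measurableSet
    inter_subset_left fun x hx => ?_]
  · refine setIntegral_congr_fun (h.isOpen_pos.inter hA).measurableSet fun x hx =>
      (inner_truncationGrad x).trans ?_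
    rw [indicator_of_mem (show x ∈ regularDomain u A from Or.inl hx), h.gradientWithin_eq hA hx]
  · have hxS : x ∉ regularDomain u A := fun hxS =>
      hx.2 ⟨hx.1, (regularDomain_eq_inter.subset hxS).2⟩
    rw [inner_truncationGrad, indicator_of_notMem hxS]

namespace IsSubsolution

theorem gradient_eq_zero (h : IsSmoothCone u U W) (d : IsSubsolution u U A v)
    (hx : x ∈ {x | 0 < u x} ∩ A) (hvx : v x = 0) : gradient v x = 0 := by
  have hmin : IsLocalMin v x := by
    filter_upwards [(h.isOpen_pos.inter d.isOpen).mem_nhds hx] with y hy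
    exact hvx ▸ d.nonneg y (Or.inl hy)
  rw [gradient, hmin.fderiv_eq_zero, map_zero]

theorem tendsto_setIntegral_inner_truncationGrad (h : IsSmoothCone u U W)
    (d : IsSubsolution u U A v)
    (hint : IntegrableOn (fun x => ‖gradient v x‖ ^ 2) ({x | 0 < u x} ∩ A)) :
    Tendsto (fun ε => ∫ x in {x | 0 < u x},
        ⟪truncationGrad u A v ε x, gradientWithin v (regularDomain u A) x⟫) (𝓝[>] 0)
      (𝓝 (∫ x in {x | 0 < u x} ∩ A, ‖gradient v x‖ ^ 2)) := by
  have hO := h.isOpen_pos.inter d.isOpen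
  have hv := d.contDiffOn_two.continuousOn
  simp only [h.setIntegral_inner_truncationGrad d.isOpen]
  refine tendsto_integral_filter_of_dominated_convergence (fun x => ‖gradient v x‖ ^ 2)
    (Eventually.of_forall fun ε => ?_) ?_ hint
    (ae_restrict_of_forall_mem hO.measurableSet fun x hx => ?_)
  · exact (((continuous_softStep ε).comp_continuousOn hv).aestronglyMeasurable
      hO.measurableSet).mul hint.aestronglyMeasurable
  · filter_upwards [self_mem_nhdsWithin] with ε hε
    refine ae_of_all _ fun x => ?_
    rw [norm_mul, Real.norm_of_nonneg (softStep_nonneg (mem_Ioi.1 hε).le _),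
      Real.norm_of_nonneg (sq_nonneg _)]
    exact mul_le_of_le_one_left (sq_nonneg _) (softStep_le_one hε _)
  · refine tendsto_const_nhds.congr' ?_
    rcases (d.nonneg x (Or.inl hx)).eq_or_lt with hvx | hvx
    · simp [d.gradient_eq_zero h hx hvx.symm]
    · filter_upwards [Ioo_mem_nhdsGT (half_pos hvx)] with ε hε
      rw [softStep_of_ge hε.1 (by linarith [hε.2]), one_mul]

theorem exists_norm_meanCurv_le (h : IsSmoothCone u U W) (d : IsSubsolution u U A v) :
    ∃ M, ∀ x ∈ freeBoundary u ∩ A, ‖meanCurv U x‖ ≤ M := by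
  have hcompact : IsCompact (closure A ∩ frontier {x | 0 < u x}) :=
    d.isBounded.isCompact_closure.inter_right isClosed_frontier
  obtain ⟨M, hM⟩ := hcompact.exists_bound_of_continuousOn
    (h.continuousOn_meanCurv.mono fun x hx => h.freeBoundary_subset
      ⟨hx.2, ne_of_mem_of_not_mem hx.1 d.zero_notMem_closure⟩)
  exact ⟨M, fun x hx => hM x ⟨subset_closure hx.2, hx.1.1⟩⟩

theorem tendsto_setIntegral_meanCurv_mul (h : IsSmoothCone u U W) (d : IsSubsolution u U A v)
    {F : ℝ → 𝔼[k + 1] → ℝ} {M : ℝ}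
    (hF : ∀ᶠ ε in 𝓝[>] 0, AEStronglyMeasurable (F ε) (μHE[k].restrict (freeBoundary u ∩ A)))
    (hM : ∀ᶠ ε in 𝓝[>] 0, ∀ x ∈ freeBoundary u ∩ A, ‖F ε x‖ ≤ M)
    (hlim : ∀ x ∈ freeBoundary u ∩ A, Tendsto (fun ε => F ε x) (𝓝[>] 0) (𝓝 (f x))) :
    Tendsto (fun ε => ∫ x in freeBoundary u ∩ A, meanCurv U x * F ε x ∂μHE[k]) (𝓝[>] 0)
      (𝓝 (∫ x in freeBoundary u ∩ A, meanCurv U x * f x ∂μHE[k])) := by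
  obtain ⟨N, hN⟩ := d.exists_norm_meanCurv_le h
  have hmeas := (measurableSet_freeBoundary u).inter d.isOpen.measurableSet
  have hH := (h.continuousOn_meanCurv.mono
    (inter_subset_left.trans h.freeBoundary_subset)).aestronglyMeasurable (μ := μHE[k]) hmeas
  refine tendsto_integral_filter_of_dominated_convergence (fun _ => N * M) ?_ ?_
    (integrableOn_const (d.measure_freeBoundary_inter_lt_top h).ne)
    (ae_restrict_of_forall_mem hmeas fun x hx => (hlim x hx).const_mul _)
  · filter_upwards [hF] with ε hε using hH.mul hε
  · filter_upwards [hM] with ε hε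
    refine ae_restrict_of_forall_mem hmeas fun x hx => (norm_mul_le _ _).trans ?_
    exact mul_le_mul (hN x hx) (hε x hx) (norm_nonneg _) ((norm_nonneg _).trans (hN x hx))

theorem tendsto_setIntegral_meanCurv_truncation (h : IsSmoothCone u U W)
    (d : IsSubsolution u U A v) :
    Tendsto (fun ε => ∫ x in freeBoundary u ∩ A,
        meanCurv U x * (truncation u A v ε x * v x) ∂μHE[k]) (𝓝[>] 0)
      (𝓝 (∫ x in freeBoundary u ∩ A, meanCurv U x * v x ^ 2 ∂μHE[k])) ∧
    Tendsto (fun ε => ∫ x in freeBoundary u ∩ A,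
        meanCurv U x * truncation u A v ε x ^ 2 ∂μHE[k]) (𝓝[>] 0)
      (𝓝 (∫ x in freeBoundary u ∩ A, meanCurv U x * v x ^ 2 ∂μHE[k])) := by
  obtain ⟨M, hM⟩ := d.exists_le
  have hv0 (x) (hx : x ∈ freeBoundary u ∩ A) : 0 ≤ v x := d.nonneg x (Or.inr hx)
  have hlim (x) (hx : x ∈ freeBoundary u ∩ A) := tendsto_truncation (Or.inr hx) (hv0 x hx)
  have htrunc (ε : ℝ) (hε : 0 < ε) := (d.isTestFunction_truncation h hε).measurable
  have hv := (d.contDiffOn.continuousOn.mono subset_union_right).aestronglyMeasurable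
    (μ := μHE[k]) ((measurableSet_freeBoundary u).inter d.isOpen.measurableSet)
  have hle (ε : ℝ) (hε : 0 < ε) (x) (hx : x ∈ freeBoundary u ∩ A) :
      ‖truncation u A v ε x‖ ≤ v x := by
    rw [Real.norm_of_nonneg (truncation_nonneg hε x)]
    exact truncation_le hε (Or.inr hx) (hv0 x hx)
  have hsq (x) (hx : x ∈ freeBoundary u ∩ A) : v x ^ 2 ≤ M ^ 2 :=
    pow_le_pow_left₀ (hv0 x hx) (hM x (Or.inr hx)) 2
  constructor
  · refine d.tendsto_setIntegral_meanCurv_mul h (M := M ^ 2) ?_ ?_ fun x hx =>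
      (sq (v x)).symm ▸ (hlim x hx).mul_const (v x)
    · filter_upwards [self_mem_nhdsWithin] with ε hε using
        (htrunc ε hε).aestronglyMeasurable.mul hv
    · filter_upwards [self_mem_nhdsWithin] with ε hε x hx
      refine le_trans ?_ (hsq x hx)
      rw [norm_mul, Real.norm_of_nonneg (hv0 x hx), sq]
      exact mul_le_mul_of_nonneg_right (hle ε hε x hx) (hv0 x hx)
  · refine d.tendsto_setIntegral_meanCurv_mul h (M := M ^ 2) ?_ ?_ fun x hx => (hlim x hx).pow 2
    · filter_upwards [self_mem_nhdsWithin] with ε hε using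
        ((htrunc ε hε).pow_const 2).aestronglyMeasurable
    · filter_upwards [self_mem_nhdsWithin] with ε hε x hx
      rw [norm_pow]
      exact (pow_le_pow_left₀ (norm_nonneg _) (hle ε hε x hx) 2).trans (hsq x hx)

theorem setIntegral_norm_gradient_sq_lt (h : IsSmoothCone u U W) (d : IsSubsolution u U A v)
    (hstrict : (∃ x ∈ {x | 0 < u x} ∩ A, 0 < v x ∧ 0 < lap v x) ∨
      ∃ x ∈ freeBoundary u ∩ A, 0 < v x ∧ dNu U v x < meanCurv U x * v x) :
    ∫ x in {x | 0 < u x} ∩ A, ‖gradient v x‖ ^ 2 <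
      ∫ x in freeBoundary u ∩ A, meanCurv U x * v x ^ 2 ∂μHE[k] := by
  obtain ⟨κ, hκ, hle⟩ := d.exists_pos_setIntegral_inner_add_le h hstrict
  simp only [mul_left_comm (truncation u A v _ _)] at hle
  have hsurface := (d.tendsto_setIntegral_meanCurv_truncation h).1
  refine lt_of_lt_of_le (lt_add_of_pos_right _ hκ) ?_
  by_cases hint : IntegrableOn (fun x => ‖gradient v x‖ ^ 2) ({x | 0 < u x} ∩ A)
  · exact le_of_tendsto_of_tendsto
      ((d.tendsto_setIntegral_inner_truncationGrad h hint).add_const κ) hsurface hle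
  · rw [integral_undef hint, zero_add]
    refine ge_of_tendsto hsurface ?_
    filter_upwards [hle, self_mem_nhdsWithin] with ε hε hε0
    refine (le_add_of_nonneg_left (integral_nonneg fun x => ?_)).trans hε
    exact (sq_nonneg _).trans (norm_truncationGrad_sq_le hε0 x)

theorem exists_setIntegral_norm_truncationGrad_sq_lt (h : IsSmoothCone u U W)
    (d : IsSubsolution u U A v)
    (hstrict : (∃ x ∈ {x | 0 < u x} ∩ A, 0 < v x ∧ 0 < lap v x) ∨
      ∃ x ∈ freeBoundary u ∩ A, 0 < v x ∧ dNu U v x < meanCurv U x * v x) :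
    ∃ ε > 0, ∫ x in {x | 0 < u x}, ‖truncationGrad u A v ε x‖ ^ 2 <
      ∫ x in freeBoundary u, meanCurv U x * truncation u A v ε x ^ 2 ∂μHE[k] := by
  obtain ⟨κ, hκ, hle⟩ := d.exists_pos_setIntegral_inner_add_le h hstrict
  simp only [mul_left_comm (truncation u A v _ _)] at hle
  obtain ⟨hmixed, hsquare⟩ := d.tendsto_setIntegral_meanCurv_truncation h
  have hdiff := (hmixed.sub hsquare).eventually (gt_mem_nhds ((sub_self _).trans_lt hκ))
  obtain ⟨ε, ⟨hεle, hεdiff⟩, hε⟩ := ((hle.and hdiff).and self_mem_nhdsWithin).exists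
  have ht := d.isTestFunction_truncation h hε
  have hgrad : ∫ x in {x | 0 < u x}, ‖truncationGrad u A v ε x‖ ^ 2 ≤
      ∫ x in {x | 0 < u x}, ⟪truncationGrad u A v ε x, gradientWithin v (regularDomain u A) x⟫ :=
    integral_mono ht.integrable_norm_grad_sq.integrableOn (ht.integrable_inner_grad d.isOpen
      superlevel_subset (h.continuousOn_gradientWithin d.isOpen d.contDiffOn)).integrableOn
      (norm_truncationGrad_sq_le hε)
  refine ⟨ε, hε, ?_⟩
  rw [setIntegral_eq_of_subset_of_forall_sdiff_eq_zero (measurableSet_freeBoundary u)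
    (inter_subset_left (t := A)) fun x hx => ?_]
  · linarith
  · rw [ht.eq_zero x fun hxC => hx.2 ⟨hx.1, superlevel_subset hxC⟩, zero_pow two_ne_zero, mul_zero]

end IsSubsolution

theorem strict_subsolution_implies_unstable_general
    {Γ : Subgroup (𝔼[k + 1] ≃ₗᵢ[ℝ] 𝔼[k + 1])} (h : IsSmoothCone u U W)
    (d : IsSubsolution u U A v) (hv : IsSymmetricUnder Γ v)
    (hA : ∀ g ∈ Γ, ∀ x, g x ∈ A ↔ x ∈ A)
    (hstrict : (∃ x ∈ {x | 0 < u x} ∩ A, 0 < v x ∧ 0 < lap v x) ∨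
      ∃ x ∈ freeBoundary u ∩ A, 0 < v x ∧ dNu U v x < meanCurv U x * v x) :
    ∫ x in {x | 0 < u x} ∩ A, ‖gradient v x‖ ^ 2 <
        ∫ x in freeBoundary u ∩ A, meanCurv U x * v x ^ 2 ∂μHE[k] ∧
      ¬ IsSymMinimizer Γ u := by
  refine ⟨d.setIntegral_norm_gradient_sq_lt h hstrict, fun hmin => ?_⟩
  obtain ⟨ε, hε, hlt⟩ := d.exists_setIntegral_norm_truncationGrad_sq_lt h hstrict
  exact h.not_isSymMinimizer_of_lt (d.isTestFunction_truncation h hε)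
    (isSymmetricUnder_truncation hmin.2.2.1 hv hA ε) hlt hmin

end Instability

end

/-- **Strict subsolutions on an annulus give instability** (Corollary 3.7).
Let `u` be locally Lipschitz, `Γ`-symmetric, `1`-homogeneous, harmonic in `{u>0}`, with
`Σ = ∂{u>0} \ {0}` a smooth embedded hypersurface (encoded via a smooth extension `Uext`),
`|∇u| = 1` on `Σ`.  If on an annulus `A = {a < |x| < b}` there is a `Γ`-symmetric nonnegative
strict subsolution `v` of the linearized problem, then
`∫_{{u>0}∩A} |∇v|² < ∫_{Σ∩A} H v² dH^{n-1}`, and `u` is not a `Γ`-symmetric minimizer. -/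
theorem strict_subsolution_implies_unstable {n : ℕ} (hn : 3 ≤ n)
    (Γ : Subgroup (EuclideanSpace ℝ (Fin n) ≃ₗᵢ[ℝ] EuclideanSpace ℝ (Fin n)))
    (hfin : Finite Γ)
    (hfree : ∀ g ∈ Γ, (∃ x : EuclideanSpace ℝ (Fin n), x ≠ 0 ∧ g x = x) → g = 1)
    (u : EuclideanSpace ℝ (Fin n) → ℝ)
    (hu0 : ∀ x, 0 ≤ u x) (huLip : LocallyLipschitz u)
    (huSym : IsSymmetricUnder Γ u)
    (huHom : ∀ t : ℝ, 0 < t → ∀ x, u (t • x) = t * u x)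
    (huHarm : ∀ x ∈ {x | 0 < u x}, lap u x = 0)
    -- smooth extension of `u` across `Σ`
    (Uext : EuclideanSpace ℝ (Fin n) → ℝ) (W : Set (EuclideanSpace ℝ (Fin n)))
    (hW : IsOpen W) (hWsup : closure {x | 0 < u x} \ {0} ⊆ W)
    (hUsm : ContDiffOn ℝ (⊤ : ℕ∞) Uext W)
    (hUeq : ∀ x ∈ closure {x | 0 < u x}, Uext x = u x)
    (hgrad1 : ∀ x ∈ freeBoundary u, ‖gradient Uext x‖ = 1)
    (hsurf : ∀ x ∈ freeBoundary u, ∃ ε > 0,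
      freeBoundary u ∩ ball x ε = {y ∈ ball x ε | Uext y = 0})
    -- the annulus `A = {a < |x| < b}`
    (a b : ℝ) (ha : 0 < a) (hab : a < b)
    (A : Set (EuclideanSpace ℝ (Fin n))) (hA : A = {x | a < ‖x‖ ∧ ‖x‖ < b})
    -- the strict subsolution `v`
    (v : EuclideanSpace ℝ (Fin n) → ℝ)
    (hvSym : IsSymmetricUnder Γ v)
    (hv0 : ∀ x ∈ closure ({x | 0 < u x} ∩ A), 0 ≤ v x)
    (hvCont : ContinuousOn v (closure ({x | 0 < u x} ∩ A)))
    (hvC2 : ContDiffOn ℝ 2 v ({x | 0 < u x} ∩ A))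
    (hvC1 : ContDiffOn ℝ 1 v (({x | 0 < u x} ∩ A) ∪ (freeBoundary u ∩ A)))
    (hSub : ∀ x ∈ {x | 0 < u x} ∩ A, 0 ≤ lap v x)
    (hBdy : ∀ x ∈ freeBoundary u ∩ A, dNu Uext v x ≤ meanCurv Uext x * v x)
    (hZero : ∀ x, 0 < u x → x ∈ frontier A → v x = 0)
    (hStrict :
      (∃ x₀ ∈ {x | 0 < u x} ∩ A, 0 < v x₀ ∧ 0 < lap v x₀) ∨
      (∃ x₀ ∈ freeBoundary u ∩ A, 0 < v x₀ ∧ dNu Uext v x₀ < meanCurv Uext x₀ * v x₀)) :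
    (∫ x in {x | 0 < u x} ∩ A, ‖gradient v x‖ ^ 2)
        < (∫ x in freeBoundary u ∩ A, meanCurv Uext x * v x ^ 2 ∂(μH[(n : ℝ) - 1])) ∧
      ¬ IsSymMinimizer Γ u := by
  obtain ⟨k, rfl⟩ : ∃ k, n = k + 1 := ⟨n - 1, by omega⟩
  subst hA
  have h : IsSmoothCone u Uext W :=
    ⟨hu0, huLip, huHom, huHarm, hW, hWsup, hUsm, hUeq, hgrad1, hsurf⟩
  have d : IsSubsolution u Uext (annulus _ a b) v :=
    h.isSubsolution_annulus ha hab hv0 hvCont hvC2 hvC1 hSub hBdy hZero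
  have hinv : ∀ g ∈ Γ, ∀ x, g x ∈ annulus _ a b ↔ x ∈ annulus _ a b := fun g _ x => by
    simp only [annulus, mem_ofPred_eq, g.norm_map]
  obtain ⟨hlt, hunstable⟩ :=
    strict_subsolution_implies_unstable_general h d hvSym hinv hStrict
  refine ⟨?_, hunstable⟩
  rw [show ((k + 1 : ℕ) : ℝ) - 1 = k by push_cast; ring]
  exact lt_setIntegral_hausdorffMeasure (integral_nonneg fun x => sq_nonneg _) hlt
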